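/- For all positive constants μ, κ, R, c_v and all M, m > 0 and K ≥ 1 there exists a constant C > 0, depending only on μ, κ, R, c_v, M, m, K, such that: whenever (v,u,θ) is a classical solution of the one-dimensional compressible Navier–Stokes system on ℝ whose initial data are (M,m)-bounded and which is K-volume-bounded, then for every T > 0: sup_{0 ≤ t ≤ T} ∫_ℝ u_x(x,t)² dx + ∫₀^T ∫_ℝ u_{xx}(x,t)² dx dt ≤ C + C · sup_{(x,t) ∈ ℝ × [0,T]} θ(x,t). -/

import Mathlib

/-!
The estimate is obtained from four layers of a priori bounds, all with constants that depend only
on the parameters and not on the length of the time interval.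

* *Entropy* (`entropy_slices`). The relative entropy balance bounds `∫ u²`, the excess of `θ` over
  a constant in `L¹`, and the dissipation `∬ (u_x² / θ + θ_x² / θ²)`. The temperature is not known
  to be bounded below uniformly, so `log θ` is replaced by `log (θ + ε)`.
* *First derivatives* (`first_order`). The temperature equation is tested with a truncation of
  large temperatures, the momentum equation with a truncation of large velocities, and the total
  energy equation with a truncation of large energies. Each resulting right-hand side is bounded by
  `C + C ∬ jj`, where `jj` is essentially `θ_x² / θ` on the set of large temperatures. Since
  `θ_x² / θ` is interpolated between `θ_x² / θ²` and `δ θ_x²`, this term is absorbed, and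
  `∬ u_x²` and `∬ θ_x²` are bounded.
* *Gradient of the volume* (`vx_bound`). The effective velocity `u - μ v_x / v` satisfies
  `(u - μ v_x / v)_t = -(R θ / v)_x`, and its energy balance bounds `∫ v_x²` at every time together
  with `∬ θ v_x²`.
* *Conclusion* (`ux_bound`). Multiplying the momentum equation by `u_xx` gives
  `∫ u_x² + c ∬ u_xx² ≤ C + C ∬ (u_x² v_x² + θ_x² + θ² v_x²)`. The first term on the right is
  absorbed by the one-dimensional Sobolev inequality, and `∬ θ² v_x² ≤ (sup θ) ∬ θ v_x²`; the
  last factor is the only source of the dependence on `sup θ`.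

The mixed derivatives `u_xt` and `v_xt` need not exist for a solution of the assumed regularity. The
balances for `u_x` and `v_x` (`ux_id`, `eff_id`) are therefore proved for spatial difference
quotients and passed to the limit in `L²`. Solutions carry no information for negative times, so
the analysis is done for the functions with time frozen at `0` there (`fns`).
-/

open MeasureTheory Filter Set

noncomputable section

/-- Partial derivative in the spatial variable. -/
def pdx (f : ℝ → ℝ → ℝ) (x t : ℝ) : ℝ := deriv (fun y => f y t) x

/-- Partial derivative in the time variable. -/
def pdt (f : ℝ → ℝ → ℝ) (x t : ℝ) : ℝ := deriv (fun s => f x s) t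

/-- The `L²(ℝ)` norm, valued in `ℝ≥0∞`. -/
def L2 (f : ℝ → ℝ) : ENNReal := eLpNorm f 2 volume

/-- The `H¹(ℝ)` norm, valued in `ℝ≥0∞`. -/
def H1 (f : ℝ → ℝ) : ENNReal := L2 f + L2 (deriv f)

/-- The `H²(ℝ)` norm, valued in `ℝ≥0∞`. -/
def H2 (f : ℝ → ℝ) : ENNReal := L2 f + L2 (deriv f) + L2 (deriv (deriv f))

/-- A classical solution of the 1-D compressible Navier–Stokes system in Lagrangian
coordinates on `ℝ`, together with the regularity and far-field conditions. -/
structure IsClassicalSolution (μ κ R cv : ℝ) (v u θ : ℝ → ℝ → ℝ) : Prop where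
  v_pos : ∀ x t : ℝ, 0 ≤ t → 0 < v x t
  θ_pos : ∀ x t : ℝ, 0 ≤ t → 0 < θ x t
  smooth_x_v : ∀ t : ℝ, 0 ≤ t → ContDiff ℝ 2 (fun x => v x t)
  smooth_x_u : ∀ t : ℝ, 0 ≤ t → ContDiff ℝ 2 (fun x => u x t)
  smooth_x_θ : ∀ t : ℝ, 0 ≤ t → ContDiff ℝ 2 (fun x => θ x t)
  smooth_t_v : ∀ x t : ℝ, 0 ≤ t → DifferentiableAt ℝ (fun s => v x s) t
  smooth_t_u : ∀ x t : ℝ, 0 ≤ t → DifferentiableAt ℝ (fun s => u x s) t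
  smooth_t_θ : ∀ x t : ℝ, 0 ≤ t → DifferentiableAt ℝ (fun s => θ x s) t
  eq_mass : ∀ x t : ℝ, 0 ≤ t → pdt v x t = pdx u x t
  eq_momentum : ∀ x t : ℝ, 0 ≤ t →
    pdt u x t + pdx (fun y s => R * θ y s / v y s) x t
      = μ * pdx (fun y s => pdx u y s / v y s) x t
  eq_energy : ∀ x t : ℝ, 0 ≤ t →
    cv * pdt θ x t + (R * θ x t / v x t) * pdx u x t
      = κ * pdx (fun y s => pdx θ y s / v y s) x t + μ * (pdx u x t) ^ 2 / v x t
  reg_H1 : ∀ T : ℝ, 0 ≤ T → ∃ B : ℝ, ∀ t ∈ Icc (0 : ℝ) T,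
    H1 (fun x => v x t - 1) + H1 (fun x => u x t) + H1 (fun x => θ x t - 1)
      ≤ ENNReal.ofReal B
  reg_H2 : ∀ T : ℝ, 0 < T →
    (∫⁻ t in Icc (0 : ℝ) T,
      (H2 (fun x => u x t) ^ 2 + H2 (fun x => θ x t - 1) ^ 2)) < ⊤
  farfield_v : ∀ t : ℝ, 0 ≤ t → Tendsto (fun x => v x t) (cocompact ℝ) (nhds 1)
  farfield_u : ∀ t : ℝ, 0 ≤ t → Tendsto (fun x => u x t) (cocompact ℝ) (nhds 0)
  farfield_θ : ∀ t : ℝ, 0 ≤ t → Tendsto (fun x => θ x t) (cocompact ℝ) (nhds 1)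

/-- The initial data of `(v, u, θ)` are `(M, m)`-bounded. -/
def InitBounded (M m : ℝ) (v u θ : ℝ → ℝ → ℝ) : Prop :=
  H1 (fun x => v x 0 - 1) + H1 (fun x => u x 0) + H1 (fun x => θ x 0 - 1)
      ≤ ENNReal.ofReal M
    ∧ (∀ x : ℝ, m ≤ v x 0) ∧ (∀ x : ℝ, m ≤ θ x 0)

/-- The solution is `K`-volume-bounded. -/
def VolBounded (K : ℝ) (v : ℝ → ℝ → ℝ) : Prop :=
  ∀ x t : ℝ, 0 ≤ t → K⁻¹ ≤ v x t ∧ v x t ≤ K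

end

namespace NSEst

/-! ### Integration over the space-time slab -/

/-- Lebesgue measure on the slab `ℝ × [0, T]`, in the variables `(x, t)`. -/
noncomputable def nu (T : ℝ) : Measure (ℝ × ℝ) :=
  (volume : Measure ℝ).prod (volume.restrict (Icc 0 T))

/-- The uncurried form of a function of `(x, t)`. -/
def unc (f : ℝ → ℝ → ℝ) : ℝ × ℝ → ℝ := fun z => f z.1 z.2

/-- `f` is measurable and square integrable on the slab `ℝ × [0, T]`. -/
def LL (T : ℝ) (f : ℝ → ℝ → ℝ) : Prop := Measurable (unc f) ∧ MemLp (unc f) 2 (nu T)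

/-- `f` is measurable and integrable on the slab `ℝ × [0, T]`. -/
def Itg (T : ℝ) (f : ℝ → ℝ → ℝ) : Prop := Measurable (unc f) ∧ Integrable (unc f) (nu T)

/-- `f` is measurable and bounded on the slab `ℝ × [0, T]`. -/
def BD (T : ℝ) (f : ℝ → ℝ → ℝ) : Prop :=
  Measurable (unc f) ∧ ∃ C : ℝ, 0 ≤ C ∧ ∀ x, ∀ t ∈ Icc 0 T, |f x t| ≤ C

/-- The integral of `f` over the slab `ℝ × [0, T]`. -/
noncomputable def II (T : ℝ) (f : ℝ → ℝ → ℝ) : ℝ := ∫ z, unc f z ∂(nu T)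

lemma ae_mem (T : ℝ) : ∀ᵐ z ∂(nu T), z.2 ∈ Icc 0 T :=
  Measure.quasiMeasurePreserving_snd.ae (ae_restrict_mem measurableSet_Icc)

lemma ae_of_forall {T : ℝ} {p : ℝ → ℝ → Prop} (h : ∀ x, ∀ t ∈ Icc 0 T, p x t) :
    ∀ᵐ z ∂(nu T), p z.1 z.2 := by
  filter_upwards [ae_mem T] with z hz using h _ _ hz

variable {T : ℝ} {f g a b : ℝ → ℝ → ℝ}

lemma BD.const (c : ℝ) : BD T (fun _ _ => c) :=
  ⟨measurable_const, |c|, abs_nonneg _, fun _ _ _ => le_rfl⟩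

lemma BD.mul (hf : BD T f) (hg : BD T g) : BD T (fun x t => f x t * g x t) := by
  obtain ⟨mf, C, hC, h⟩ := hf
  obtain ⟨mg, D, hD, h'⟩ := hg
  refine ⟨mf.mul mg, C * D, by positivity, fun x t ht => ?_⟩
  rw [abs_mul]
  exact mul_le_mul (h x t ht) (h' x t ht) (abs_nonneg _) hC

lemma BD.add (hf : BD T f) (hg : BD T g) : BD T (fun x t => f x t + g x t) := by
  obtain ⟨mf, C, hC, h⟩ := hf
  obtain ⟨mg, D, hD, h'⟩ := hg
  exact ⟨mf.add mg, C + D, by positivity, fun x t ht =>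
    (abs_add_le _ _).trans (add_le_add (h x t ht) (h' x t ht))⟩

lemma BD.neg (hf : BD T f) : BD T (fun x t => - f x t) := by
  obtain ⟨mf, C, hC, h⟩ := hf
  exact ⟨mf.neg, C, hC, fun x t ht => by rw [abs_neg]; exact h x t ht⟩

lemma BD.sub (hf : BD T f) (hg : BD T g) : BD T (fun x t => f x t - g x t) := by
  simpa only [sub_eq_add_neg] using hf.add hg.neg

lemma BD.comp {φ : ℝ → ℝ} (hφ : Continuous φ) (hf : BD T f) : BD T (fun x t => φ (f x t)) := by
  obtain ⟨mf, C, hC, h⟩ := hf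
  obtain ⟨D, hD⟩ := (isCompact_Icc (a := -C) (b := C)).exists_bound_of_continuousOn hφ.continuousOn
  refine ⟨hφ.measurable.comp mf, D, (norm_nonneg _).trans (hD 0 ⟨by linarith, hC⟩),
    fun x t ht => hD _ (abs_le.1 (h x t ht))⟩

lemma LL.mono (hg : LL T g) (mf : Measurable (unc f)) (C : ℝ)
    (h : ∀ x, ∀ t ∈ Icc 0 T, |f x t| ≤ C * |g x t|) : LL T f :=
  ⟨mf, MemLp.of_le_mul hg.2 mf.aestronglyMeasurable (ae_of_forall h)⟩

lemma LL.bmul (hb : BD T b) (hf : LL T f) : LL T (fun x t => b x t * f x t) := by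
  obtain ⟨mb, C, hC, h⟩ := hb
  refine hf.mono (mb.mul hf.1) C fun x t ht => ?_
  rw [abs_mul]
  exact mul_le_mul_of_nonneg_right (h x t ht) (abs_nonneg _)

lemma LL.add (hf : LL T f) (hg : LL T g) : LL T (fun x t => f x t + g x t) :=
  ⟨hf.1.add hg.1, hf.2.add hg.2⟩

lemma LL.sub (hf : LL T f) (hg : LL T g) : LL T (fun x t => f x t - g x t) :=
  ⟨hf.1.sub hg.1, hf.2.sub hg.2⟩

lemma LL.neg (hf : LL T f) : LL T (fun x t => - f x t) := ⟨hf.1.neg, hf.2.neg⟩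

lemma LL.cmul (c : ℝ) (hf : LL T f) : LL T (fun x t => c * f x t) := LL.bmul (BD.const c) hf

lemma LL.mul (hf : LL T f) (hg : LL T g) : Itg T (fun x t => f x t * g x t) :=
  ⟨hf.1.mul hg.1, hf.2.integrable_mul hg.2⟩

lemma LL.sq (hf : LL T f) : Itg T (fun x t => f x t ^ 2) :=
  ⟨hf.1.pow_const 2, hf.2.integrable_sq⟩

lemma Itg.mono (hg : Itg T g) (mf : Measurable (unc f)) (C : ℝ)
    (h : ∀ x, ∀ t ∈ Icc 0 T, |f x t| ≤ C * |g x t|) : Itg T f :=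
  ⟨mf, (hg.2.norm.const_mul C).mono' mf.aestronglyMeasurable (ae_of_forall h)⟩

lemma Itg.bmul (hb : BD T b) (hf : Itg T f) : Itg T (fun x t => b x t * f x t) := by
  obtain ⟨mb, C, hC, h⟩ := hb
  refine hf.mono (mb.mul hf.1) C fun x t ht => ?_
  rw [abs_mul]
  exact mul_le_mul_of_nonneg_right (h x t ht) (abs_nonneg _)

lemma Itg.add (hf : Itg T f) (hg : Itg T g) : Itg T (fun x t => f x t + g x t) :=
  ⟨hf.1.add hg.1, hf.2.add hg.2⟩

lemma Itg.sub (hf : Itg T f) (hg : Itg T g) : Itg T (fun x t => f x t - g x t) :=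
  ⟨hf.1.sub hg.1, hf.2.sub hg.2⟩

lemma Itg.neg (hf : Itg T f) : Itg T (fun x t => - f x t) := ⟨hf.1.neg, hf.2.neg⟩

lemma Itg.cmul (c : ℝ) (hf : Itg T f) : Itg T (fun x t => c * f x t) :=
  Itg.bmul (BD.const c) hf

lemma II_add (hf : Itg T f) (hg : Itg T g) :
    II T (fun x t => f x t + g x t) = II T f + II T g := integral_add hf.2 hg.2

lemma II_sub (hf : Itg T f) (hg : Itg T g) :
    II T (fun x t => f x t - g x t) = II T f - II T g := integral_sub hf.2 hg.2

lemma II_neg : II T (fun x t => - f x t) = - II T f := integral_neg _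

lemma II_cmul (c : ℝ) : II T (fun x t => c * f x t) = c * II T f := integral_const_mul _ _

lemma II_mono (hf : Itg T f) (hg : Itg T g) (h : ∀ x, ∀ t ∈ Icc 0 T, f x t ≤ g x t) :
    II T f ≤ II T g := integral_mono_ae hf.2 hg.2 (ae_of_forall h)

lemma II_congr (h : ∀ x, ∀ t ∈ Icc 0 T, f x t = g x t) : II T f = II T g :=
  integral_congr_ae (ae_of_forall (p := fun x t => f x t = g x t) h)

lemma II_nonneg (h : ∀ x, ∀ t ∈ Icc 0 T, 0 ≤ f x t) : 0 ≤ II T f :=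
  integral_nonneg_of_ae (ae_of_forall h)

lemma II_le2 {f1 f2 : ℝ → ℝ → ℝ} (c1 c2 : ℝ) (hf : Itg T f) (h1 : Itg T f1) (h2 : Itg T f2)
    (h : ∀ x, ∀ t ∈ Icc 0 T, f x t ≤ c1 * f1 x t + c2 * f2 x t) :
    II T f ≤ c1 * II T f1 + c2 * II T f2 := by
  rw [← II_cmul, ← II_cmul, ← II_add (h1.cmul _) (h2.cmul _)]
  exact II_mono hf ((h1.cmul _).add (h2.cmul _)) h

lemma II_le1 {f1 : ℝ → ℝ → ℝ} (c1 : ℝ) (hf : Itg T f) (h1 : Itg T f1)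
    (h : ∀ x, ∀ t ∈ Icc 0 T, f x t ≤ c1 * f1 x t) :
    II T f ≤ c1 * II T f1 := by
  rw [← II_cmul]
  exact II_mono hf (h1.cmul _) h

lemma II_le3 {f1 f2 f3 : ℝ → ℝ → ℝ} (c1 c2 c3 : ℝ) (hf : Itg T f) (h1 : Itg T f1)
    (h2 : Itg T f2) (h3 : Itg T f3)
    (h : ∀ x, ∀ t ∈ Icc 0 T, f x t ≤ c1 * f1 x t + c2 * f2 x t + c3 * f3 x t) :
    II T f ≤ c1 * II T f1 + c2 * II T f2 + c3 * II T f3 := by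
  rw [← II_cmul, ← II_cmul, ← II_cmul, ← II_add (h1.cmul _) (h2.cmul _),
    ← II_add ((h1.cmul _).add (h2.cmul _)) (h3.cmul _)]
  exact II_mono hf (((h1.cmul _).add (h2.cmul _)).add (h3.cmul _)) h

lemma II_le4 {f1 f2 f3 f4 : ℝ → ℝ → ℝ} (c1 c2 c3 c4 : ℝ) (hf : Itg T f) (h1 : Itg T f1)
    (h2 : Itg T f2) (h3 : Itg T f3) (h4 : Itg T f4)
    (h : ∀ x, ∀ t ∈ Icc 0 T,
      f x t ≤ c1 * f1 x t + c2 * f2 x t + c3 * f3 x t + c4 * f4 x t) :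
    II T f ≤ c1 * II T f1 + c2 * II T f2 + c3 * II T f3 + c4 * II T f4 := by
  have h123 := ((h1.cmul c1).add (h2.cmul c2)).add (h3.cmul c3)
  rw [← II_cmul, ← II_cmul, ← II_cmul, ← II_cmul, ← II_add (h1.cmul _) (h2.cmul _),
    ← II_add ((h1.cmul _).add (h2.cmul _)) (h3.cmul _), ← II_add h123 (h4.cmul _)]
  exact II_mono hf (h123.add (h4.cmul _)) h

/-! ### Slicing in time -/

lemma LL.slice (hf : LL T f) :
    ∀ᵐ t ∂(volume.restrict (Icc 0 T)), MemLp (fun x => f x t) 2 volume := by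
  have h := (hf.2.integrable_sq).prod_left_ae
  filter_upwards [h] with t ht
  have m : Measurable (fun x => f x t) := hf.1.comp (measurable_id.prodMk measurable_const)
  exact (memLp_two_iff_integrable_sq m.aestronglyMeasurable).2 ht

lemma Itg.slice (hf : Itg T f) :
    ∀ᵐ t ∂(volume.restrict (Icc 0 T)), Integrable (fun x => f x t) := hf.2.prod_left_ae

lemma II_eq (hf : Itg T f) : II T f = ∫ t in Icc 0 T, ∫ x, f x t :=
  integral_prod_symm _ hf.2

lemma II_le_of_slice (hf : Itg T f) (hg : Itg T g)
    (h : ∀ᵐ t ∂(volume.restrict (Icc 0 T)), ∫ x, f x t ≤ ∫ x, g x t) : II T f ≤ II T g := by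
  rw [II_eq hf, II_eq hg]
  exact integral_mono_ae hf.2.integral_prod_right hg.2.integral_prod_right h

lemma LL_of_slices (mf : Measurable (unc f)) (hg : Itg T g)
    (h : ∀ᵐ t ∂(volume.restrict (Icc 0 T)), Integrable (fun x => f x t ^ 2) ∧
      ∫ x, f x t ^ 2 ≤ ∫ x, g x t) : LL T f := by
  refine ⟨mf, ?_⟩
  rw [memLp_two_iff_integrable_sq mf.aestronglyMeasurable]
  have m2 : Measurable (fun z => unc f z ^ 2) := mf.pow_const 2
  rw [nu, integrable_prod_iff' m2.aestronglyMeasurable]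
  refine ⟨h.mono fun t ht => ht.1, ?_⟩
  refine (hg.2.integral_prod_right).mono' ?_ ?_
  · exact (m2.norm.stronglyMeasurable.integral_prod_left' (μ := volume)).aestronglyMeasurable
  · filter_upwards [h] with t ht
    rw [Real.norm_of_nonneg (integral_nonneg fun x => norm_nonneg _)]
    refine le_trans (le_of_eq ?_) ht.2
    refine integral_congr_ae (Eventually.of_forall fun x => ?_)
    simp [unc]

/-- The change of `∫ F dx` over `[0, T]` is the slab integral of `∂ₜF`, when `F` is
differentiable in time for each `x` and `∂ₜF` is integrable on the slab. -/
lemma time_id {F Ft : ℝ → ℝ → ℝ} (hT : 0 ≤ T) (hc : ∀ x, ContinuousOn (F x) (Icc 0 T))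
    (hd : ∀ x, ∀ t ∈ Ioo 0 T, HasDerivAt (F x) (Ft x t) t) (hi : Itg T Ft)
    (h0 : Integrable (fun x => F x 0)) (h1 : Integrable (fun x => F x T)) :
    (∫ x, F x T) - (∫ x, F x 0) = II T Ft := by
  rw [← integral_sub h1 h0, II, nu, integral_prod _ hi.2]
  refine integral_congr_ae ?_
  filter_upwards [hi.2.prod_right_ae] with x hx
  have hx' : IntegrableOn (Ft x) (Icc 0 T) := hx
  have := intervalIntegral.integral_eq_sub_of_hasDerivAt_of_le hT (hc x) (hd x)
    ((intervalIntegrable_iff_integrableOn_Icc_of_le hT).2 hx')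
  rw [← this, intervalIntegral.integral_of_le hT, ← integral_Icc_eq_integral_Ioc]
  rfl

/-- Integration by parts in space, on the slab. -/
lemma parts {A Ax F Fx : ℝ → ℝ → ℝ}
    (hA : ∀ t ∈ Icc 0 T, ∀ x, HasDerivAt (fun y => A y t) (Ax x t) x)
    (hF : ∀ t ∈ Icc 0 T, ∀ x, HasDerivAt (fun y => F y t) (Fx x t) x)
    (lA : LL T A) (lAx : LL T Ax) (lF : LL T F) (lFx : LL T Fx) :
    II T (fun x t => A x t * Fx x t) = - II T (fun x t => Ax x t * F x t) := by
  rw [II_eq (lA.mul lFx), II_eq (lAx.mul lF), ← integral_neg]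
  refine integral_congr_ae ?_
  filter_upwards [lA.slice, lAx.slice, lF.slice, lFx.slice,
    ae_restrict_mem measurableSet_Icc] with t h1 h2 h3 h4 ht
  exact integral_mul_deriv_eq_deriv_mul_of_integrable (fun x _ => hA t ht x)
    (fun x _ => hF t ht x) (h1.integrable_mul h4) (h2.integrable_mul h3) (h1.integrable_mul h3)

/-! ### One-dimensional Sobolev inequalities -/

/-- A scale-dependent form of the one-dimensional Sobolev inequality. -/
lemma sup1 {f f' : ℝ → ℝ} (hd : ∀ x, HasDerivAt f (f' x) x) (hf : MemLp f 2 volume)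
    (hf' : MemLp f' 2 volume) {δ : ℝ} (hδ : 0 < δ) (x : ℝ) :
    f x ^ 2 ≤ δ * (∫ y, f' y ^ 2) + δ⁻¹ * ∫ y, f y ^ 2 := by
  have hd2 : ∀ y, HasDerivAt (fun y => f y ^ 2) (2 * (f y * f' y)) y := fun y => by
    have h := (hd y).fun_pow 2
    refine h.congr_deriv ?_
    norm_num; ring
  have i1 : Integrable (fun y => 2 * (f y * f' y)) := (hf.integrable_mul hf').const_mul 2
  have i2 := hf.integrable_sq
  have i3 := hf'.integrable_sq
  have ht := tendsto_zero_of_hasDerivAt_of_integrableOn_Iic (a := x) (fun y _ => hd2 y)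
    i1.integrableOn i2.integrableOn
  have h := integral_Iic_of_hasDerivAt_of_tendsto' (a := x) (fun y _ => hd2 y)
    i1.integrableOn ht
  rw [sub_zero] at h
  rw [← h, ← integral_const_mul, ← integral_const_mul,
    ← integral_add (i3.const_mul _) (i2.const_mul _)]
  have i4 : Integrable (fun y => δ * f' y ^ 2 + δ⁻¹ * f y ^ 2) :=
    (i3.const_mul _).add (i2.const_mul _)
  have hpt : ∀ y, 2 * (f y * f' y) ≤ δ * f' y ^ 2 + δ⁻¹ * f y ^ 2 := fun y => by
    have : δ * f' y ^ 2 + δ⁻¹ * f y ^ 2 - 2 * (f y * f' y) = δ⁻¹ * (δ * f' y - f y) ^ 2 := by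
      field_simp; ring
    have h2 : 0 ≤ δ⁻¹ * (δ * f' y - f y) ^ 2 := by positivity
    linarith
  calc ∫ y in Iic x, 2 * (f y * f' y) ≤ ∫ y in Iic x, (δ * f' y ^ 2 + δ⁻¹ * f y ^ 2) :=
        integral_mono i1.integrableOn i4.integrableOn hpt
    _ ≤ _ := setIntegral_le_integral i4 (Eventually.of_forall fun y => by
        simp only [Pi.zero_apply]; positivity)

lemma cauchy {α : Type*} [MeasurableSpace α] {ρ : Measure α} {f g : α → ℝ} (hf : MemLp f 2 ρ)
    (hg : MemLp g 2 ρ) :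
    (∫ y, |f y * g y| ∂ρ) ^ 2 ≤ (∫ y, f y ^ 2 ∂ρ) * ∫ y, g y ^ 2 ∂ρ := by
  have i1 : Integrable (fun y => |f y * g y|) ρ := (hf.integrable_mul hg).abs
  have i2 := hf.integrable_sq
  have i3 := hg.integrable_sq
  have key : ∀ s : ℝ, 0 ≤ (∫ y, f y ^ 2 ∂ρ) * (s * s) + (2 * ∫ y, |f y * g y| ∂ρ) * s
      + ∫ y, g y ^ 2 ∂ρ := fun s => by
    have : (∫ y, f y ^ 2 ∂ρ) * (s * s) + (2 * ∫ y, |f y * g y| ∂ρ) * s + ∫ y, g y ^ 2 ∂ρ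
        = ∫ y, (f y ^ 2 * (s * s) + (|f y * g y| * (2 * s)) + g y ^ 2) ∂ρ := by
      have i4 : Integrable (fun y => f y ^ 2 * (s * s) + |f y * g y| * (2 * s)) ρ :=
        (i2.mul_const _).add (i1.mul_const _)
      rw [integral_add i4 i3,
        integral_add (i2.mul_const _) (i1.mul_const _), integral_mul_const, integral_mul_const]
      ring
    rw [this]
    refine integral_nonneg fun y => ?_
    have h1 : f y ^ 2 * (s * s) + (|f y * g y| * (2 * s)) + g y ^ 2 = (|f y| * s + |g y|) ^ 2 := by
      rw [abs_mul, add_sq, mul_pow, sq_abs, sq_abs]; ring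
    simp only [Pi.zero_apply]
    rw [h1]; positivity
  have := discrim_le_zero key
  rw [discrim] at this
  nlinarith

/-- If `f` vanishes at `-∞` and `|f'| ≤ |p q|`, then `f²` is bounded by Cauchy–Schwarz. -/
lemma sup2 {f f' p q : ℝ → ℝ} (hd : ∀ x, HasDerivAt f (f' x) x)
    (h0 : Tendsto f atBot (nhds 0)) (hp : MemLp p 2 volume) (hq : MemLp q 2 volume)
    (hf' : ∀ y, |f' y| ≤ |p y * q y|) (mf : Measurable f') (x : ℝ) :
    f x ^ 2 ≤ (∫ y, p y ^ 2) * ∫ y, q y ^ 2 := by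
  have i1 : Integrable (fun y => |p y * q y|) := (hp.integrable_mul hq).abs
  have i2 : Integrable f' := i1.mono' mf.aestronglyMeasurable (Eventually.of_forall hf')
  have h := integral_Iic_of_hasDerivAt_of_tendsto' (a := x) (fun y _ => hd y)
    i2.integrableOn h0
  rw [sub_zero] at h
  have h2 : |f x| ≤ ∫ y, |p y * q y| := by
    rw [← h]
    calc |∫ y in Iic x, f' y| ≤ ∫ y in Iic x, |f' y| := abs_integral_le_integral_abs
      _ ≤ ∫ y in Iic x, |p y * q y| := integral_mono i2.abs.integrableOn i1.integrableOn hf'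
      _ ≤ _ := setIntegral_le_integral i1 (Eventually.of_forall fun y => abs_nonneg _)
  calc f x ^ 2 = |f x| ^ 2 := (sq_abs _).symm
    _ ≤ _ := pow_le_pow_left₀ (abs_nonneg _) h2 2
    _ ≤ _ := cauchy hp hq

/-- A product of a function in `L²_t H¹_x` with a function in `L^∞_t L²_x` is square
integrable on the slab. -/
lemma prod_LL {a ax c : ℝ → ℝ → ℝ} {B : ℝ}
    (hd : ∀ t ∈ Icc 0 T, ∀ x, HasDerivAt (fun y => a y t) (ax x t) x) (la : LL T a)
    (lax : LL T ax) (mc : Measurable (unc c))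
    (hc : ∀ᵐ t ∂(volume.restrict (Icc 0 T)), MemLp (fun x => c x t) 2 volume ∧
      ∫ x, c x t ^ 2 ≤ B) {δ : ℝ} (hδ : 0 < δ) :
    LL T (fun x t => a x t * c x t) ∧
      II T (fun x t => (a x t * c x t) ^ 2)
        ≤ B * (δ * II T (fun x t => ax x t ^ 2) + δ⁻¹ * II T (fun x t => a x t ^ 2)) := by
  have ig : Itg T (fun x t => B * (δ * ax x t ^ 2 + δ⁻¹ * a x t ^ 2)) :=
    Itg.cmul _ ((lax.sq.cmul _).add (la.sq.cmul _))
  have key : ∀ᵐ t ∂(volume.restrict (Icc 0 T)), Integrable (fun x => (a x t * c x t) ^ 2) ∧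
      ∫ x, (a x t * c x t) ^ 2 ≤ ∫ x, B * (δ * ax x t ^ 2 + δ⁻¹ * a x t ^ 2) := by
    filter_upwards [la.slice, lax.slice, hc, ae_restrict_mem measurableSet_Icc]
      with t h1 h2 h3 ht
    set N := δ * (∫ y, ax y t ^ 2) + δ⁻¹ * ∫ y, a y t ^ 2 with hN
    have hs : ∀ x, a x t ^ 2 ≤ N := fun x => sup1 (hd t ht) h1 h2 hδ x
    have hN0 : 0 ≤ N := (sq_nonneg _).trans (hs 0)
    have i3 := h3.1.integrable_sq
    have hb : ∀ x, (a x t * c x t) ^ 2 ≤ N * c x t ^ 2 := fun x => by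
      rw [mul_pow]; exact mul_le_mul_of_nonneg_right (hs x) (sq_nonneg _)
    have ii : Integrable (fun x => (a x t * c x t) ^ 2) := by
      refine (i3.const_mul N).mono' ?_ (Eventually.of_forall fun x => ?_)
      · exact (((la.1.mul mc).pow_const 2).comp
          (measurable_id.prodMk measurable_const)).aestronglyMeasurable
      · rw [Real.norm_of_nonneg (sq_nonneg _)]; exact hb x
    refine ⟨ii, ?_⟩
    calc ∫ x, (a x t * c x t) ^ 2 ≤ ∫ x, N * c x t ^ 2 := integral_mono ii (i3.const_mul N) hb
      _ = N * ∫ x, c x t ^ 2 := integral_const_mul _ _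
      _ ≤ N * B := mul_le_mul_of_nonneg_left h3.2 hN0
      _ = _ := by
        rw [integral_const_mul, integral_add (h2.integrable_sq.const_mul _)
          (h1.integrable_sq.const_mul _), integral_const_mul, integral_const_mul, hN]
        ring
  have hl : LL T (fun x t => a x t * c x t) := LL_of_slices (la.1.mul mc) ig key
  refine ⟨hl, ?_⟩
  have := II_le_of_slice hl.sq ig (key.mono fun t ht => ht.2)
  rwa [II_cmul, II_add (lax.sq.cmul _) (la.sq.cmul _), II_cmul, II_cmul] at this

end NSEst

namespace NSEst

/-! ### Strong `L²` convergence and difference quotients -/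

section conv
variable {α : Type*} [MeasurableSpace α] {ρ : Measure α}

/-- Strong convergence of a sequence in `L²(ρ)`. -/
def SC (ρ : Measure α) (F : ℕ → α → ℝ) (f : α → ℝ) : Prop :=
  (∀ n, MemLp (F n) 2 ρ) ∧ MemLp f 2 ρ ∧
    Tendsto (fun n => ∫ z, (F n z - f z) ^ 2 ∂ρ) atTop (nhds 0)

/-- Pointwise convergence together with `‖Fₙ‖ ≤ ‖f‖` gives strong `L²` convergence: apply
Fatou's lemma to `(Fₙ + f)²` and use the parallelogram identity. -/
lemma SC_of_le {F : ℕ → α → ℝ} {f : α → ℝ} (mF : ∀ n, Measurable (F n)) (mf : Measurable f)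
    (hF : ∀ n, MemLp (F n) 2 ρ) (hf : MemLp f 2 ρ)
    (ht : ∀ᵐ z ∂ρ, Tendsto (fun n => F n z) atTop (nhds (f z)))
    (hb : ∀ n, ∫ z, F n z ^ 2 ∂ρ ≤ ∫ z, f z ^ 2 ∂ρ) : SC ρ F f := by
  refine ⟨hF, hf, ?_⟩
  set N := ∫ z, f z ^ 2 ∂ρ with hN
  have hN0 : 0 ≤ N := integral_nonneg fun z => sq_nonneg _
  have ip : ∀ n, Integrable (fun z => (F n z + f z) ^ 2) ρ := fun n => ((hF n).add hf).integrable_sq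
  have im : ∀ n, Integrable (fun z => (F n z - f z) ^ 2) ρ := fun n => ((hF n).sub hf).integrable_sq
  have par : ∀ n, ∫ z, (F n z - f z) ^ 2 ∂ρ ≤ 4 * N - ∫ z, (F n z + f z) ^ 2 ∂ρ := fun n => by
    have h1 : (∫ z, (F n z - f z) ^ 2 ∂ρ) + ∫ z, (F n z + f z) ^ 2 ∂ρ
        = 2 * (∫ z, F n z ^ 2 ∂ρ) + 2 * N := by
      rw [← integral_add (im n) (ip n), hN, ← integral_const_mul, ← integral_const_mul,
        ← integral_add ((hF n).integrable_sq.const_mul 2) (hf.integrable_sq.const_mul 2)]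
      refine integral_congr_ae (Eventually.of_forall fun z => ?_)
      simp only; ring
    linarith [hb n]
  have fatou : ENNReal.ofReal (4 * N) ≤
      liminf (fun n => ENNReal.ofReal (∫ z, (F n z + f z) ^ 2 ∂ρ)) atTop := by
    have h1 : ENNReal.ofReal (4 * N) = ∫⁻ z, ENNReal.ofReal ((f z + f z) ^ 2) ∂ρ := by
      have iff' : Integrable (fun z => (f z + f z) ^ 2) ρ := (hf.add hf).integrable_sq
      rw [← ofReal_integral_eq_lintegral_ofReal iff'
        (Eventually.of_forall fun z => sq_nonneg _), hN, ← integral_const_mul]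
      congr 1
      refine integral_congr_ae (Eventually.of_forall fun z => ?_)
      simp only; ring
    have h2 : ∀ n, ENNReal.ofReal (∫ z, (F n z + f z) ^ 2 ∂ρ)
        = ∫⁻ z, ENNReal.ofReal ((F n z + f z) ^ 2) ∂ρ := fun n =>
      ofReal_integral_eq_lintegral_ofReal (ip n) (Eventually.of_forall fun z => sq_nonneg _)
    simp_rw [h1, h2]
    refine le_trans (lintegral_mono_ae ?_)
      (lintegral_liminf_le fun n => (((mF n).add mf).pow_const 2).ennreal_ofReal)
    filter_upwards [ht] with z hz
    refine le_of_eq (Tendsto.liminf_eq ?_).symm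
    exact (ENNReal.continuous_ofReal.tendsto _).comp ((hz.add_const (f z)).pow 2)
  rw [Metric.tendsto_atTop]
  intro δ hδ
  have hev : ∀ᶠ n in atTop, 4 * N - δ < ∫ z, (F n z + f z) ^ 2 ∂ρ := by
    rcases lt_or_ge (4 * N - δ) 0 with h | h
    · exact Eventually.of_forall fun n => h.trans_le (integral_nonneg fun z => sq_nonneg _)
    · have hlt : ENNReal.ofReal (4 * N - δ) < ENNReal.ofReal (4 * N) :=
        (ENNReal.ofReal_lt_ofReal_iff (by linarith)).2 (by linarith)
      filter_upwards [eventually_lt_of_lt_liminf (hlt.trans_le fatou)] with n hn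
      exact (ENNReal.ofReal_lt_ofReal_iff_of_nonneg h).1 hn
  obtain ⟨n0, hn0⟩ := eventually_atTop.1 hev
  refine ⟨n0, fun n hn => ?_⟩
  rw [Real.dist_eq, sub_zero, abs_of_nonneg (integral_nonneg fun z => sq_nonneg _)]
  linarith [par n, hn0 n hn]

lemma SC.const {f : α → ℝ} (hf : MemLp f 2 ρ) : SC ρ (fun _ => f) f :=
  ⟨fun _ => hf, hf, by simp⟩

lemma SC.sub_cmul {F G : ℕ → α → ℝ} {f g : α → ℝ} (hF : SC ρ F f) (hG : SC ρ G g) (c : ℝ) :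
    SC ρ (fun n z => F n z - c * G n z) (fun z => f z - c * g z) := by
  refine ⟨fun n => (hF.1 n).sub ((hG.1 n).const_mul c), hF.2.1.sub (hG.2.1.const_mul c), ?_⟩
  have h := (hF.2.2.const_mul 2).add (hG.2.2.const_mul (2 * c ^ 2))
  simp only [mul_zero, add_zero] at h
  refine squeeze_zero (fun n => integral_nonneg fun z => sq_nonneg _) (fun n => ?_) h
  have i1 := ((hF.1 n).sub hF.2.1).integrable_sq
  have i2 := ((hG.1 n).sub hG.2.1).integrable_sq
  have i3 : Integrable (fun z => (F n z - c * G n z - (f z - c * g z)) ^ 2) ρ :=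
    (((hF.1 n).sub ((hG.1 n).const_mul c)).sub (hF.2.1.sub (hG.2.1.const_mul c))).integrable_sq
  simp only [Pi.sub_apply] at i1 i2
  rw [← integral_const_mul, ← integral_const_mul,
    ← integral_add (i1.const_mul 2) (i2.const_mul (2 * c ^ 2))]
  refine integral_mono i3 ((i1.const_mul 2).add (i2.const_mul (2 * c ^ 2))) fun z => ?_
  simp only
  nlinarith [sq_nonneg ((F n z - f z) + c * (G n z - g z))]

lemma tend0 {F G : ℕ → α → ℝ} (hF : ∀ n, MemLp (F n) 2 ρ) (hG : ∀ n, MemLp (G n) 2 ρ)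
    (h : Tendsto (fun n => (∫ z, F n z ^ 2 ∂ρ) * ∫ z, G n z ^ 2 ∂ρ) atTop (nhds 0)) :
    Tendsto (fun n => ∫ z, F n z * G n z ∂ρ) atTop (nhds 0) := by
  have h2 : Tendsto (fun n => |∫ z, F n z * G n z ∂ρ|) atTop (nhds 0) := by
    have h3 := (Real.continuous_sqrt.tendsto 0).comp h
    rw [Real.sqrt_zero] at h3
    refine squeeze_zero (fun n => abs_nonneg _) (fun n => ?_) h3
    refine Real.le_sqrt_of_sq_le ?_
    refine le_trans (pow_le_pow_left₀ (abs_nonneg _) ?_ 2) (cauchy (hF n) (hG n))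
    exact abs_integral_le_integral_abs
  exact (tendsto_zero_iff_abs_tendsto_zero _).2 h2

lemma SC.mul {F G : ℕ → α → ℝ} {f g : α → ℝ} (hF : SC ρ F f) (hG : SC ρ G g) :
    Tendsto (fun n => ∫ z, F n z * G n z ∂ρ) atTop (nhds (∫ z, f z * g z ∂ρ)) := by
  have m1 : ∀ n, MemLp (fun z => F n z - f z) 2 ρ := fun n => (hF.1 n).sub hF.2.1
  have m2 : ∀ n, MemLp (fun z => G n z - g z) 2 ρ := fun n => (hG.1 n).sub hG.2.1
  have t1 := tend0 m1 m2 (by simpa using hF.2.2.mul hG.2.2)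
  have t2 := tend0 (G := fun _ => g) m1 (fun _ => hG.2.1)
    (by simpa using hF.2.2.mul_const (∫ z, g z ^ 2 ∂ρ))
  have t3 := tend0 (G := fun _ => f) m2 (fun _ => hF.2.1)
    (by simpa using hG.2.2.mul_const (∫ z, f z ^ 2 ∂ρ))
  have t := ((t1.add t2).add t3).add_const (∫ z, f z * g z ∂ρ)
  simp only [add_zero, zero_add] at t
  refine t.congr fun n => ?_
  have j1 : Integrable (fun z => (F n z - f z) * (G n z - g z)) ρ := (m1 n).integrable_mul (m2 n)
  have j2 : Integrable (fun z => (F n z - f z) * g z) ρ := (m1 n).integrable_mul hG.2.1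
  have j3 : Integrable (fun z => (G n z - g z) * f z) ρ := (m2 n).integrable_mul hF.2.1
  have j4 : Integrable (fun z => f z * g z) ρ := hF.2.1.integrable_mul hG.2.1
  have j12 : Integrable (fun z => (F n z - f z) * (G n z - g z) + (F n z - f z) * g z) ρ :=
    j1.add j2
  have j123 : Integrable (fun z => (F n z - f z) * (G n z - g z) + (F n z - f z) * g z
    + (G n z - g z) * f z) ρ := j12.add j3
  rw [← integral_add j1 j2, ← integral_add j12 j3, ← integral_add j123 j4]
  refine integral_congr_ae (Eventually.of_forall fun z => ?_)
  simp only; ring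

lemma sq_of_lint {F G : α → ℝ} (mF : Measurable F) (hG : MemLp G 2 ρ)
    (h : ∫⁻ z, ENNReal.ofReal (F z ^ 2) ∂ρ ≤ ∫⁻ z, ENNReal.ofReal (G z ^ 2) ∂ρ) :
    MemLp F 2 ρ ∧ ∫ z, F z ^ 2 ∂ρ ≤ ∫ z, G z ^ 2 ∂ρ := by
  have iG := hG.integrable_sq
  have e := ofReal_integral_eq_lintegral_ofReal iG (Eventually.of_forall fun z => sq_nonneg _)
  have m2 : Measurable (fun z => F z ^ 2) := mF.pow_const 2
  have iF : Integrable (fun z => F z ^ 2) ρ := by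
    refine ⟨m2.aestronglyMeasurable, ?_⟩
    rw [hasFiniteIntegral_iff_ofReal (Eventually.of_forall fun z => sq_nonneg _)]
    refine h.trans_lt ?_
    rw [← e]; exact ENNReal.ofReal_lt_top
  refine ⟨(memLp_two_iff_integrable_sq mF.aestronglyMeasurable).2 iF, ?_⟩
  have e' := ofReal_integral_eq_lintegral_ofReal iF (Eventually.of_forall fun z => sq_nonneg _)
  rw [← e, ← e'] at h
  exact (ENNReal.ofReal_le_ofReal_iff (integral_nonneg fun z => sq_nonneg _)).1 h

end conv

/-- A difference quotient is bounded in `L²` by the derivative. -/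
lemma dq_lint {f f' : ℝ → ℝ} (hd : ∀ x, HasDerivAt f (f' x) x) (mf' : Measurable f')
    (hf' : MemLp f' 2 volume) {h : ℝ} (hh : 0 < h) :
    ∫⁻ x, ENNReal.ofReal (((f (x + h) - f x) / h) ^ 2) ≤ ∫⁻ x, ENNReal.ofReal (f' x ^ 2) := by
  have hpt : ∀ x, ENNReal.ofReal (((f (x + h) - f x) / h) ^ 2) ≤
      ENNReal.ofReal h⁻¹ * ∫⁻ s in Ioc 0 h, ENNReal.ofReal (f' (x + s) ^ 2) := by
    intro x
    have hL : MemLp (fun s => f' (x + s)) 2 (volume.restrict (Ioc 0 h)) :=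
      (hf'.comp_measurePreserving (measurePreserving_add_left volume x)).restrict _
    have hone : MemLp (fun _ : ℝ => (1 : ℝ)) 2 (volume.restrict (Ioc 0 h)) := memLp_const 1
    have hf_integrable : IntervalIntegrable (fun s => f' (x + s)) volume 0 h := by
      rw [intervalIntegrable_iff_integrableOn_Ioc_of_le hh.le]
      have := hone.integrable_mul hL
      simpa [IntegrableOn, Pi.mul_def] using this
    have ftc : ∫ s in (0 : ℝ)..h, f' (x + s) = f (x + h) - f (x + 0) :=
      intervalIntegral.integral_eq_sub_of_hasDerivAt (f := fun s => f (x + s))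
        (fun s _ => (hd (x + s)).comp_const_add x s) hf_integrable
    rw [intervalIntegral.integral_of_le hh.le, add_zero] at ftc
    have c := cauchy hone hL
    have c1 : ∫ s in Ioc 0 h, (1 : ℝ) ^ 2 = h := by simp [hh.le]
    rw [c1] at c
    have c2 : (f (x + h) - f x) ^ 2 ≤ h * ∫ s in Ioc 0 h, f' (x + s) ^ 2 := by
      rw [← ftc]
      refine le_trans ?_ c
      rw [← sq_abs (∫ s in Ioc 0 h, f' (x + s))]
      refine pow_le_pow_left₀ (abs_nonneg _) ?_ 2
      simpa using (abs_integral_le_integral_abs (f := fun s => f' (x + s))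
        (μ := volume.restrict (Ioc 0 h)))
    rw [← ofReal_integral_eq_lintegral_ofReal hL.integrable_sq
      (Eventually.of_forall fun s => sq_nonneg _), ← ENNReal.ofReal_mul (by positivity)]
    refine ENNReal.ofReal_le_ofReal ?_
    rw [div_pow, div_le_iff₀ (by positivity)]
    calc (f (x + h) - f x) ^ 2 ≤ h * ∫ s in Ioc 0 h, f' (x + s) ^ 2 := c2
      _ = _ := by field_simp
  calc ∫⁻ x, ENNReal.ofReal (((f (x + h) - f x) / h) ^ 2)
      ≤ ∫⁻ x, ENNReal.ofReal h⁻¹ * ∫⁻ s in Ioc 0 h, ENNReal.ofReal (f' (x + s) ^ 2) :=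
        lintegral_mono hpt
    _ = ENNReal.ofReal h⁻¹ * ∫⁻ x, ∫⁻ s in Ioc 0 h, ENNReal.ofReal (f' (x + s) ^ 2) :=
        lintegral_const_mul' _ _ ENNReal.ofReal_ne_top
    _ = ENNReal.ofReal h⁻¹ * ∫⁻ s in Ioc 0 h, ∫⁻ x, ENNReal.ofReal (f' (x + s) ^ 2) := by
        rw [lintegral_lintegral_swap]
        exact (((mf'.comp (measurable_fst.add measurable_snd)).pow_const 2).ennreal_ofReal).aemeasurable
    _ = ENNReal.ofReal h⁻¹ * ∫⁻ s in Ioc 0 h, ∫⁻ x, ENNReal.ofReal (f' x ^ 2) := by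
        congr 1
        refine lintegral_congr fun s => ?_
        exact lintegral_add_right_eq_self (fun x => ENNReal.ofReal (f' x ^ 2)) s
    _ = ∫⁻ x, ENNReal.ofReal (f' x ^ 2) := by
        rw [setLIntegral_const, Real.volume_Ioc, sub_zero, mul_comm (∫⁻ x, _), ← mul_assoc,
          ← ENNReal.ofReal_mul (by positivity), inv_mul_cancel₀ hh.ne', ENNReal.ofReal_one, one_mul]

/-- Forward difference quotient in space. -/
noncomputable def dq (h : ℝ) (f : ℝ → ℝ → ℝ) (x t : ℝ) : ℝ := (f (x + h) t - f x t) / h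

variable {T : ℝ} {f fx : ℝ → ℝ → ℝ}

lemma meas_shift (mf : Measurable (unc f)) (h : ℝ) : Measurable (unc fun x t => f (x + h) t) :=
  mf.comp ((measurable_fst.add_const h).prodMk measurable_snd)

lemma meas_dq (mf : Measurable (unc f)) (h : ℝ) : Measurable (unc (dq h f)) :=
  ((meas_shift mf h).sub mf).div_const h

lemma meas_slice (mf : Measurable (unc f)) (t : ℝ) : Measurable (fun x => f x t) :=
  mf.comp (measurable_id.prodMk measurable_const)

lemma shift_mp (T h : ℝ) : MeasurePreserving (fun z : ℝ × ℝ => (z.1 + h, z.2)) (nu T) (nu T) :=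
  (measurePreserving_add_right volume h).prod (MeasurePreserving.id _)

lemma LL.shift (hf : LL T f) (h : ℝ) : LL T (fun x t => f (x + h) t) :=
  ⟨meas_shift hf.1 h, hf.2.comp_measurePreserving (shift_mp T h)⟩

lemma II_shift (mf : Measurable (unc f)) (h : ℝ) : II T (fun x t => f (x + h) t) = II T f := by
  have := integral_map (μ := nu T) (shift_mp T h).measurable.aemeasurable
    (f := unc f) (by rw [(shift_mp T h).map_eq]; exact mf.aestronglyMeasurable)
  rw [(shift_mp T h).map_eq] at this
  exact this.symm

lemma LL.dq (hf : LL T f) (h : ℝ) : LL T (dq h f) := by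
  have := ((hf.shift h).sub hf).cmul h⁻¹
  refine this.mono (meas_dq hf.1 h) 1 fun x t _ => le_of_eq ?_
  rw [NSEst.dq, div_eq_inv_mul, one_mul]

lemma dq_LL (hd : ∀ t ∈ Icc 0 T, ∀ x, HasDerivAt (fun y => f y t) (fx x t) x)
    (mf : Measurable (unc f)) (lfx : LL T fx) {h : ℝ} (hh : 0 < h) :
    LL T (dq h f) ∧ II T (fun x t => dq h f x t ^ 2) ≤ II T (fun x t => fx x t ^ 2) := by
  have key : ∫⁻ z, ENNReal.ofReal (unc (dq h f) z ^ 2) ∂(nu T)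
      ≤ ∫⁻ z, ENNReal.ofReal (unc fx z ^ 2) ∂(nu T) := by
    rw [nu, lintegral_prod_symm' _ ((meas_dq mf h).pow_const 2).ennreal_ofReal,
      lintegral_prod_symm' _ (lfx.1.pow_const 2).ennreal_ofReal]
    refine lintegral_mono_ae ?_
    filter_upwards [lfx.slice, ae_restrict_mem measurableSet_Icc] with t h1 ht
    exact dq_lint (hd t ht) (meas_slice lfx.1 t) h1 hh
  have := sq_of_lint (meas_dq mf h) lfx.2 key
  exact ⟨⟨meas_dq mf h, this.1⟩, this.2⟩

/-- The step sizes `1 / (n + 1)` used for difference quotients. -/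
noncomputable def hn (n : ℕ) : ℝ := 1 / ((n : ℝ) + 1)

lemma hn_pos (n : ℕ) : 0 < hn n := Nat.one_div_pos_of_nat

lemma hn_tendsto : Tendsto hn atTop (nhdsWithin 0 (Ioi 0)) :=
  tendsto_nhdsWithin_iff.2 ⟨tendsto_one_div_add_atTop_nhds_zero_nat,
    Eventually.of_forall fun n => hn_pos n⟩

lemma dq_tendsto {f : ℝ → ℝ} {f' x : ℝ} (hd : HasDerivAt f f' x) :
    Tendsto (fun n => (f (x + hn n) - f x) / hn n) atTop (nhds f') := by
  refine (hd.tendsto_slope_zero_right.comp hn_tendsto).congr fun n => ?_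
  simp [div_eq_inv_mul]

lemma dq_SC (hd : ∀ t ∈ Icc 0 T, ∀ x, HasDerivAt (fun y => f y t) (fx x t) x)
    (mf : Measurable (unc f)) (lfx : LL T fx) :
    SC (nu T) (fun n => unc (dq (hn n) f)) (unc fx) := by
  refine SC_of_le (fun n => meas_dq mf _) lfx.1 (fun n => (dq_LL hd mf lfx (hn_pos n)).1.2) lfx.2
    ?_ fun n => (dq_LL hd mf lfx (hn_pos n)).2
  filter_upwards [ae_mem T] with z hz
  exact dq_tendsto (hd z.2 hz z.1)

lemma dq_slice {t : ℝ} (hd : ∀ x, HasDerivAt (fun y => f y t) (fx x t) x)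
    (mf : Measurable (unc f)) (mfx : Measurable (unc fx)) (l : MemLp (fun x => fx x t) 2 volume) :
    SC volume (fun n x => dq (hn n) f x t) (fun x => fx x t) := by
  have h := fun n => sq_of_lint (meas_slice (meas_dq mf (hn n)) t) l
    (dq_lint hd (meas_slice mfx t) l (hn_pos n))
  exact SC_of_le (fun n => meas_slice (meas_dq mf (hn n)) t) (meas_slice mfx t)
    (fun n => (h n).1) l (Eventually.of_forall fun x => dq_tendsto (hd x)) fun n => (h n).2

/-- Energy identity for `b - c ∂ₓq`, where `∂ₜq = r`: the mixed derivative `∂ₜ∂ₓq` need not exist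
pointwise, and the identity is obtained from difference quotients of `q`. -/
lemma eff_id {b bt q qx r rx : ℝ → ℝ → ℝ} (c : ℝ) (hT : 0 ≤ T)
    (hq : ∀ t ∈ Icc 0 T, ∀ x, HasDerivAt (fun y => q y t) (qx x t) x)
    (hr : ∀ t ∈ Icc 0 T, ∀ x, HasDerivAt (fun y => r y t) (rx x t) x)
    (mq : Measurable (unc q)) (mr : Measurable (unc r))
    (lb : LL T b) (lbt : LL T bt) (lqx : LL T qx) (lrx : LL T rx)
    (cb : ∀ x, ContinuousOn (b x) (Icc 0 T)) (cq : ∀ x, ContinuousOn (q x) (Icc 0 T))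
    (tb : ∀ x, ∀ t ∈ Ioo 0 T, HasDerivAt (b x) (bt x t) t)
    (tq : ∀ x, ∀ t ∈ Ioo 0 T, HasDerivAt (q x) (r x t) t)
    (sb : ∀ t ∈ Icc 0 T, MemLp (fun x => b x t) 2 volume)
    (sq : ∀ t ∈ Icc 0 T, MemLp (fun x => qx x t) 2 volume) :
    (∫ x, (b x T - c * qx x T) ^ 2) - (∫ x, (b x 0 - c * qx x 0) ^ 2)
      = 2 * II T (fun x t => (b x t - c * qx x t) * (bt x t - c * rx x t)) := by
  have m0 : (0 : ℝ) ∈ Icc 0 T := ⟨le_rfl, hT⟩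
  have mT : T ∈ Icc 0 T := ⟨hT, le_rfl⟩
  have sl : ∀ t ∈ Icc 0 T, SC volume (fun n x => b x t - c * dq (hn n) q x t)
      (fun x => b x t - c * qx x t) := fun t ht =>
    (SC.const (sb t ht)).sub_cmul (dq_slice (hq t ht) mq lqx.1 (sq t ht)) c
  have t1 := (sl T mT).mul (sl T mT)
  have t0 := (sl 0 m0).mul (sl 0 m0)
  have y1 := (SC.const lb.2).sub_cmul (dq_SC hq mq lqx) c
  have y2 := (SC.const lbt.2).sub_cmul (dq_SC hr mr lrx) c
  have t2 := (y1.mul y2).const_mul 2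
  have hid : ∀ n, 2 * (∫ z, (unc b z - c * unc (dq (hn n) q) z) *
      (unc bt z - c * unc (dq (hn n) r) z) ∂(nu T))
      = (∫ x, (b x T - c * dq (hn n) q x T) * (b x T - c * dq (hn n) q x T))
        - ∫ x, (b x 0 - c * dq (hn n) q x 0) * (b x 0 - c * dq (hn n) q x 0) := fun n => by
    have lq := (dq_LL hq mq lqx (hn_pos n)).1
    have lr := (dq_LL hr mr lrx (hn_pos n)).1
    have := time_id (T := T)
      (F := fun x t => (b x t - c * dq (hn n) q x t) * (b x t - c * dq (hn n) q x t))
      (Ft := fun x t => 2 * ((b x t - c * dq (hn n) q x t) * (bt x t - c * dq (hn n) r x t)))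
      hT ?_ ?_ ?_ ?_ ?_
    · rw [this, II_cmul]; rfl
    · intro x
      have : ContinuousOn (fun t => b x t - c * dq (hn n) q x t) (Icc 0 T) :=
        (cb x).sub (continuousOn_const.mul (((cq (x + hn n)).sub (cq x)).div_const _))
      exact this.mul this
    · intro x t ht
      have : HasDerivAt (fun t => b x t - c * dq (hn n) q x t)
          (bt x t - c * dq (hn n) r x t) t :=
        (tb x t ht).sub (((((tq (x + hn n) t ht).sub (tq x t ht)).div_const _)).const_mul c)
      refine (this.mul this).congr_deriv ?_
      ring
    · exact ((lb.sub (lq.cmul c)).mul (lbt.sub (lr.cmul c))).cmul 2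
    · exact ((sl 0 m0).1 n).integrable_mul ((sl 0 m0).1 n)
    · exact ((sl T mT).1 n).integrable_mul ((sl T mT).1 n)
  have t3 := (t1.sub t0).congr fun n => (hid n).symm
  have := tendsto_nhds_unique t3 t2
  simp only [pow_two]
  rw [this]; rfl

lemma d2_tendsto {f f' f'' : ℝ → ℝ} (h1 : ∀ x, HasDerivAt f (f' x) x)
    (h2 : ∀ x, HasDerivAt f' (f'' x) x) (hc : Continuous f'') (x : ℝ) :
    Tendsto (fun n => ((f (x + hn n) - f x) / hn n - (f (x - hn n + hn n) - f (x - hn n)) / hn n)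
      / hn n) atTop (nhds (f'' x)) := by
  have hmv : ∀ n, ∃ y, |y - x| ≤ hn n ∧ f'' y =
      ((f (x + hn n) - f x) / hn n - (f (x - hn n + hn n) - f (x - hn n)) / hn n) / hn n := by
    intro n
    have hp := hn_pos n
    set h := hn n
    have hD : ∀ y, HasDerivAt (fun y => (f (y + h) - f y) / h) ((f' (y + h) - f' y) / h) y :=
      fun y => (((h1 (y + h)).comp_add_const y h).sub (h1 y)).div_const h
    obtain ⟨ξ, hξ, e⟩ := exists_hasDerivAt_eq_slope (fun y => (f (y + h) - f y) / h)
      (fun y => (f' (y + h) - f' y) / h) (show x - h < x by linarith)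
      (fun y _ => (hD y).continuousAt.continuousWithinAt) (fun y _ => hD y)
    obtain ⟨η, hη, e'⟩ := exists_hasDerivAt_eq_slope f' f'' (show ξ < ξ + h by linarith)
      (fun y _ => (h2 y).continuousAt.continuousWithinAt) (fun y _ => h2 y)
    refine ⟨η, ?_, ?_⟩
    · rw [abs_le]; constructor <;> linarith [hξ.1, hξ.2, hη.1, hη.2]
    · rw [e', add_sub_cancel_left, e, sub_sub_cancel]
  choose y hy e using hmv
  have hy' : Tendsto y atTop (nhds x) := by
    rw [tendsto_iff_dist_tendsto_zero]
    exact squeeze_zero (fun n => dist_nonneg) (fun n => by rw [Real.dist_eq]; exact hy n)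
      (tendsto_nhdsWithin_iff.1 hn_tendsto).1
  exact ((hc.tendsto x).comp hy').congr fun n => e n

/-- `½ d/dt ∫ u_x² = - ∫ u_xx u_t`, integrated over `[0, T]`; `u_x` is not assumed to be
differentiable in time, so the identity is obtained from difference quotients. -/
lemma ux_id {u ux uxx ut : ℝ → ℝ → ℝ} (hT : 0 ≤ T)
    (hu : ∀ t ∈ Icc 0 T, ∀ x, HasDerivAt (fun y => u y t) (ux x t) x)
    (hux : ∀ t ∈ Icc 0 T, ∀ x, HasDerivAt (fun y => ux y t) (uxx x t) x)
    (hc : ∀ t ∈ Icc 0 T, Continuous (fun x => uxx x t))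
    (lu : LL T u) (lux : LL T ux) (luxx : LL T uxx) (lut : LL T ut)
    (cu : ∀ x, ContinuousOn (u x) (Icc 0 T))
    (tu : ∀ x, ∀ t ∈ Ioo 0 T, HasDerivAt (u x) (ut x t) t)
    (su : ∀ t ∈ Icc 0 T, MemLp (fun x => ux x t) 2 volume) :
    (∫ x, ux x T ^ 2) - (∫ x, ux x 0 ^ 2) = - (2 * II T (fun x t => uxx x t * ut x t)) := by
  have m0 : (0 : ℝ) ∈ Icc 0 T := ⟨le_rfl, hT⟩
  have mT : T ∈ Icc 0 T := ⟨hT, le_rfl⟩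
  have sl : ∀ t ∈ Icc 0 T, SC volume (fun n x => dq (hn n) u x t) (fun x => ux x t) :=
    fun t ht => dq_slice (hu t ht) lu.1 lux.1 (su t ht)
  have t1 := (sl T mT).mul (sl T mT)
  have t0 := (sl 0 m0).mul (sl 0 m0)
  -- the symmetric second difference quotient
  let d2 : ℕ → ℝ → ℝ → ℝ := fun n x t => (dq (hn n) u x t - dq (hn n) u (x - hn n) t) / hn n
  have hd2 : ∀ n x t, d2 n x t = dq (hn n) (dq (hn n) u) (x + -hn n) t := fun n x t => by
    simp only [d2, dq, sub_eq_add_neg, neg_add_cancel_right]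
  have ld : ∀ n, LL T (dq (hn n) (dq (hn n) u)) ∧
      II T (fun x t => dq (hn n) (dq (hn n) u) x t ^ 2) ≤ II T (fun x t => uxx x t ^ 2) := fun n => by
    have a1 := dq_LL (T := T) (f := dq (hn n) u) (fx := dq (hn n) ux) (fun t ht x =>
      (((hu t ht (x + hn n)).comp_add_const x (hn n)).sub (hu t ht x)).div_const (hn n))
      (meas_dq lu.1 _) (lux.dq _) (hn_pos n)
    exact ⟨a1.1, a1.2.trans (dq_LL hux lux.1 luxx (hn_pos n)).2⟩
  have ld2 : ∀ n, LL T (d2 n) := fun n => by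
    have : d2 n = fun x t => dq (hn n) (dq (hn n) u) (x + -hn n) t := by
      funext x t; exact hd2 n x t
    rw [this]; exact (ld n).1.shift _
  have sc : SC (nu T) (fun n => unc (d2 n)) (unc uxx) := by
    refine SC_of_le (fun n => (ld2 n).1) luxx.1 (fun n => (ld2 n).2) luxx.2 ?_ fun n => ?_
    · filter_upwards [ae_mem T] with z hz
      exact d2_tendsto (hu z.2 hz) (hux z.2 hz) (hc z.2 hz) z.1
    · have e : II T (fun x t => d2 n x t ^ 2)
          = II T (fun x t => dq (hn n) (dq (hn n) u) x t ^ 2) := by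
        rw [← II_shift (f := fun x t => dq (hn n) (dq (hn n) u) x t ^ 2)
          ((ld n).1.1.pow_const 2) (-hn n)]
        simp only [hd2]
      exact e.le.trans (ld n).2
  have t2 := (sc.mul (SC.const lut.2)).const_mul (-2)
  have hid : ∀ n, -2 * (∫ z, unc (d2 n) z * unc ut z ∂(nu T))
      = (∫ x, dq (hn n) u x T * dq (hn n) u x T) - ∫ x, dq (hn n) u x 0 * dq (hn n) u x 0 :=
      fun n => by
    have lq := (dq_LL hu lu.1 lux (hn_pos n)).1
    have hI : Itg T (fun x t => 2 * (dq (hn n) u x t * dq (hn n) ut x t)) :=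
      (lq.mul (lut.dq _)).cmul 2
    have := time_id (T := T) (F := fun x t => dq (hn n) u x t * dq (hn n) u x t)
      (Ft := fun x t => 2 * (dq (hn n) u x t * dq (hn n) ut x t)) hT ?_ ?_ hI ?_ ?_
    · rw [this, II_cmul]
      have i1 : Itg T (fun x t => (hn n)⁻¹ * (dq (hn n) u x t * ut (x + hn n) t)) :=
        (lq.mul (lut.shift _)).cmul _
      have i2 : Itg T (fun x t => (hn n)⁻¹ * (dq (hn n) u x t * ut x t)) := (lq.mul lut).cmul _
      have lqs : LL T (fun x t => dq (hn n) u (x - hn n) t) := by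
        simpa only [sub_eq_add_neg] using lq.shift (-hn n)
      have i3 : Itg T (fun x t => (hn n)⁻¹ * (dq (hn n) u (x - hn n) t * ut x t)) :=
        (lqs.mul lut).cmul _
      have e1 : II T (fun x t => dq (hn n) u x t * dq (hn n) ut x t)
          = II T (fun x t => (hn n)⁻¹ * (dq (hn n) u x t * ut (x + hn n) t))
            - II T (fun x t => (hn n)⁻¹ * (dq (hn n) u x t * ut x t)) := by
        rw [← II_sub i1 i2]
        refine II_congr fun x t _ => ?_
        rw [show dq (hn n) ut x t = (hn n)⁻¹ * (ut (x + hn n) t - ut x t) by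
          rw [dq, div_eq_inv_mul]]
        ring
      have e2 : II T (fun x t => (hn n)⁻¹ * (dq (hn n) u x t * ut (x + hn n) t))
          = II T (fun x t => (hn n)⁻¹ * (dq (hn n) u (x - hn n) t * ut x t)) := by
        rw [← II_shift i3.1 (hn n)]
        simp only [add_sub_cancel_right]
      have e3 : II T (fun x t => d2 n x t * ut x t)
          = II T (fun x t => (hn n)⁻¹ * (dq (hn n) u x t * ut x t))
            - II T (fun x t => (hn n)⁻¹ * (dq (hn n) u (x - hn n) t * ut x t)) := by
        rw [← II_sub i2 i3]
        refine II_congr fun x t _ => ?_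
        simp only [d2]
        rw [div_eq_inv_mul]; ring
      have e4 : (∫ z, unc (d2 n) z * unc ut z ∂(nu T)) = II T (fun x t => d2 n x t * ut x t) := rfl
      rw [e4, e3, e1, e2]; ring
    · intro x
      have : ContinuousOn (fun t => dq (hn n) u x t) (Icc 0 T) :=
        (((cu (x + hn n)).sub (cu x)).div_const _)
      exact this.mul this
    · intro x t ht
      have : HasDerivAt (fun t => dq (hn n) u x t) (dq (hn n) ut x t) t :=
        ((((tu (x + hn n) t ht).sub (tu x t ht)).div_const _))
      refine (this.mul this).congr_deriv ?_
      ring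
    · exact ((sl 0 m0).1 n).integrable_mul ((sl 0 m0).1 n)
    · exact ((sl T mT).1 n).integrable_mul ((sl T mT).1 n)
  have t3 := (t1.sub t0).congr fun n => (hid n).symm
  have := tendsto_nhds_unique t3 t2
  simp only [pow_two]
  rw [this, neg_mul]; rfl

end NSEst

namespace NSEst

/-! ### The abstract setting -/

/-- The constants on which all estimates may depend. -/
structure Par where
  μ : ℝ
  κ : ℝ
  R : ℝ
  cv : ℝ
  K : ℝ
  M : ℝ
  m : ℝ
  hμ : 0 < μ
  hκ : 0 < κ
  hR : 0 < R
  hcv : 0 < cv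
  hK : 1 ≤ K
  hM : 0 < M
  hm : 0 < m

/-- The unknowns together with the functions that play the role of their spatial derivatives. -/
structure Fns where
  v : ℝ → ℝ → ℝ
  u : ℝ → ℝ → ℝ
  θ : ℝ → ℝ → ℝ
  vx : ℝ → ℝ → ℝ
  ux : ℝ → ℝ → ℝ
  θx : ℝ → ℝ → ℝ
  uxx : ℝ → ℝ → ℝ
  θxx : ℝ → ℝ → ℝ

namespace Fns
variable (P : Par) (S : Fns)

/-- The reciprocal of the specific volume. -/
noncomputable def i (x t : ℝ) : ℝ := (S.v x t)⁻¹

/-- The shifted effective stress `μ u_x / v - R (θ / v - 1)`. -/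
noncomputable def st (x t : ℝ) : ℝ := P.μ * (S.ux x t * S.i x t) - P.R * (S.θ x t * S.i x t - 1)

/-- The time derivative of `u` prescribed by the momentum equation. -/
noncomputable def ut (x t : ℝ) : ℝ :=
  P.μ * (S.uxx x t * S.i x t - S.ux x t * S.vx x t * S.i x t ^ 2)
    - P.R * (S.θx x t * S.i x t - S.θ x t * S.vx x t * S.i x t ^ 2)

/-- The heat flux `κ θ_x / v`. -/
noncomputable def q (x t : ℝ) : ℝ := P.κ * (S.θx x t * S.i x t)

/-- The spatial derivative of the heat flux. -/
noncomputable def qx (x t : ℝ) : ℝ :=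
  P.κ * (S.θxx x t * S.i x t - S.θx x t * S.vx x t * S.i x t ^ 2)

/-- The power of the stress, `(μ u_x / v - R θ / v) u_x`. -/
noncomputable def pw (x t : ℝ) : ℝ := (S.st P x t - P.R) * S.ux x t

/-- The time derivative of `θ` prescribed by the energy equation. -/
noncomputable def θt (x t : ℝ) : ℝ := (S.qx P x t + S.pw P x t) / P.cv

end Fns

/-- All slices `f(·, t)`, `0 ≤ t ≤ T`, are in `L²` with `∫ f(x, t)² dx ≤ B`. -/
def SB (T : ℝ) (f : ℝ → ℝ → ℝ) (B : ℝ) : Prop :=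
  ∀ t ∈ Icc 0 T, MemLp (fun x => f x t) 2 volume ∧ ∫ x, f x t ^ 2 ≤ B

/-- The qualitative properties of a volume-bounded solution on the slab `ℝ × [0, T]`. -/
structure Reg (P : Par) (S : Fns) (T : ℝ) : Prop where
  hT : 0 < T
  mv : Measurable (unc S.v)
  mu : Measurable (unc S.u)
  mθ : Measurable (unc S.θ)
  mvx : Measurable (unc S.vx)
  mux : Measurable (unc S.ux)
  mθx : Measurable (unc S.θx)
  vlo : ∀ x, ∀ t ∈ Icc 0 T, P.K⁻¹ ≤ S.v x t
  vhi : ∀ x, ∀ t ∈ Icc 0 T, S.v x t ≤ P.K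
  θpos : ∀ x, ∀ t ∈ Icc 0 T, 0 < S.θ x t
  dxv : ∀ t ∈ Icc 0 T, ∀ x, HasDerivAt (fun y => S.v y t) (S.vx x t) x
  dxu : ∀ t ∈ Icc 0 T, ∀ x, HasDerivAt (fun y => S.u y t) (S.ux x t) x
  dxθ : ∀ t ∈ Icc 0 T, ∀ x, HasDerivAt (fun y => S.θ y t) (S.θx x t) x
  dxux : ∀ t ∈ Icc 0 T, ∀ x, HasDerivAt (fun y => S.ux y t) (S.uxx x t) x
  dxθx : ∀ t ∈ Icc 0 T, ∀ x, HasDerivAt (fun y => S.θx y t) (S.θxx x t) x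
  cuxx : ∀ t ∈ Icc 0 T, Continuous (fun x => S.uxx x t)
  ctv : ∀ x, ContinuousOn (S.v x) (Icc 0 T)
  ctu : ∀ x, ContinuousOn (S.u x) (Icc 0 T)
  ctθ : ∀ x, ContinuousOn (S.θ x) (Icc 0 T)
  dtv : ∀ x, ∀ t ∈ Ioo 0 T, HasDerivAt (S.v x) (S.ux x t) t
  dtu : ∀ x, ∀ t ∈ Ioo 0 T, HasDerivAt (S.u x) (S.ut P x t) t
  dtθ : ∀ x, ∀ t ∈ Ioo 0 T, HasDerivAt (S.θ x) (S.θt P x t) t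
  sv : ∃ B, SB T (fun x t => S.v x t - 1) B
  su : ∃ B, SB T S.u B
  sθ : ∃ B, SB T (fun x t => S.θ x t - 1) B
  svx : ∃ B, SB T S.vx B
  sux : ∃ B, SB T S.ux B
  sθx : ∃ B, SB T S.θx B
  luxx : LL T S.uxx
  lθxx : LL T S.θxx
  fu : ∀ t ∈ Icc 0 T, Tendsto (fun x => S.u x t) atBot (nhds 0)
  fθ : ∀ t ∈ Icc 0 T, Tendsto (fun x => S.θ x t) atBot (nhds 1)

/-- The quantitative bounds on the initial data. -/
structure Ini (P : Par) (S : Fns) : Prop where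
  v0 : ∫ x, (S.v x 0 - 1) ^ 2 ≤ P.M ^ 2
  u0 : ∫ x, S.u x 0 ^ 2 ≤ P.M ^ 2
  θ0 : ∫ x, (S.θ x 0 - 1) ^ 2 ≤ P.M ^ 2
  vx0 : ∫ x, S.vx x 0 ^ 2 ≤ P.M ^ 2
  ux0 : ∫ x, S.ux x 0 ^ 2 ≤ P.M ^ 2
  θx0 : ∫ x, S.θx x 0 ^ 2 ≤ P.M ^ 2
  θlo : ∀ x, P.m ≤ S.θ x 0

lemma nu_mono {s T : ℝ} (h : s ≤ T) : nu s ≤ nu T :=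
  Measure.prod_mono le_rfl (Measure.restrict_mono (Icc_subset_Icc le_rfl h) le_rfl)

lemma LL.restrict {s T : ℝ} {f : ℝ → ℝ → ℝ} (h : LL T f) (hs : s ≤ T) : LL s f :=
  ⟨h.1, h.2.mono_measure (nu_mono hs)⟩

lemma SB.restrict {s T B : ℝ} {f : ℝ → ℝ → ℝ} (h : SB T f B) (hs : s ≤ T) : SB s f B :=
  fun t ht => h t ⟨ht.1, ht.2.trans hs⟩

lemma Reg.restrict {P : Par} {S : Fns} {s T : ℝ} (h : Reg P S T) (h0 : 0 < s) (hs : s ≤ T) :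
    Reg P S s := by
  have ii : ∀ t ∈ Icc 0 s, t ∈ Icc 0 T := fun t ht => ⟨ht.1, ht.2.trans hs⟩
  have io : ∀ t ∈ Ioo 0 s, t ∈ Ioo 0 T := fun t ht => ⟨ht.1, ht.2.trans_le hs⟩
  exact
  { hT := h0, mv := h.mv, mu := h.mu, mθ := h.mθ, mvx := h.mvx, mux := h.mux, mθx := h.mθx
    vlo := fun x t ht => h.vlo x t (ii t ht)
    vhi := fun x t ht => h.vhi x t (ii t ht)
    θpos := fun x t ht => h.θpos x t (ii t ht)
    dxv := fun t ht => h.dxv t (ii t ht)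
    dxu := fun t ht => h.dxu t (ii t ht)
    dxθ := fun t ht => h.dxθ t (ii t ht)
    dxux := fun t ht => h.dxux t (ii t ht)
    dxθx := fun t ht => h.dxθx t (ii t ht)
    cuxx := fun t ht => h.cuxx t (ii t ht)
    ctv := fun x => (h.ctv x).mono ii
    ctu := fun x => (h.ctu x).mono ii
    ctθ := fun x => (h.ctθ x).mono ii
    dtv := fun x t ht => h.dtv x t (io t ht)
    dtu := fun x t ht => h.dtu x t (io t ht)
    dtθ := fun x t ht => h.dtθ x t (io t ht)
    sv := h.sv.imp fun _ hB => hB.restrict hs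
    su := h.su.imp fun _ hB => hB.restrict hs
    sθ := h.sθ.imp fun _ hB => hB.restrict hs
    svx := h.svx.imp fun _ hB => hB.restrict hs
    sux := h.sux.imp fun _ hB => hB.restrict hs
    sθx := h.sθx.imp fun _ hB => hB.restrict hs
    luxx := h.luxx.restrict hs
    lθxx := h.lθxx.restrict hs
    fu := fun t ht => h.fu t (ii t ht)
    fθ := fun t ht => h.fθ t (ii t ht) }

lemma SB.LL {T B : ℝ} {f : ℝ → ℝ → ℝ} (h : SB T f B) (mf : Measurable (unc f)) : LL T f := by
  have ig : Integrable ((Icc (0 : ℝ) 1).indicator (fun _ => B)) :=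
    (integrable_indicator_iff measurableSet_Icc).2 (integrableOn_const (by simp) (by simp))
  have hg : Itg T (fun x _ => (Icc (0 : ℝ) 1).indicator (fun _ => B) x) := by
    refine ⟨(measurable_const.indicator measurableSet_Icc).comp measurable_fst, ?_⟩
    have := ig.mul_prod (ν := volume.restrict (Icc 0 T)) (integrable_const (1 : ℝ))
    simp only [mul_one] at this
    exact this
  refine LL_of_slices mf hg ?_
  filter_upwards [ae_restrict_mem measurableSet_Icc] with t ht
  refine ⟨(h t ht).1.integrable_sq, (h t ht).2.trans (le_of_eq ?_)⟩
  rw [integral_indicator measurableSet_Icc]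
  simp

lemma BD_of_SB {T B B' : ℝ} {f fx : ℝ → ℝ → ℝ} (mf : Measurable (unc f)) (h : SB T f B)
    (h' : SB T fx B') (hd : ∀ t ∈ Icc 0 T, ∀ x, HasDerivAt (fun y => f y t) (fx x t) x) :
    BD T f := by
  refine ⟨mf, |B| + |B'| + 1, by positivity, fun x t ht => ?_⟩
  have := sup1 (hd t ht) (h t ht).1 (h' t ht).1 one_pos x
  refine abs_le_of_sq_le_sq ?_ (by positivity)
  have e1 := (h t ht).2
  have e2 := (h' t ht).2
  have e3 := le_abs_self B
  have e4 := le_abs_self B'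
  simp only [inv_one, one_mul] at this
  nlinarith [abs_nonneg B, abs_nonneg B']

namespace Reg
variable {P : Par} {S : Fns} {T : ℝ}

lemma hT' (h : Reg P S T) : 0 ≤ T := h.hT.le
lemma m0 (h : Reg P S T) : (0 : ℝ) ∈ Icc 0 T := ⟨le_rfl, h.hT.le⟩
lemma mT (h : Reg P S T) : T ∈ Icc 0 T := ⟨h.hT.le, le_rfl⟩

end Reg

lemma Par.Kpos (P : Par) : 0 < P.K := lt_of_lt_of_le one_pos P.hK

namespace Reg
variable {P : Par} {S : Fns} {T : ℝ}

lemma vpos (h : Reg P S T) : ∀ x, ∀ t ∈ Icc 0 T, 0 < S.v x t := fun x t ht =>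
  lt_of_lt_of_le (inv_pos.2 P.Kpos) (h.vlo x t ht)

lemma ilo (h : Reg P S T) : ∀ x, ∀ t ∈ Icc 0 T, P.K⁻¹ ≤ S.i x t := fun x t ht =>
  inv_anti₀ (h.vpos x t ht) (h.vhi x t ht)

lemma ihi (h : Reg P S T) : ∀ x, ∀ t ∈ Icc 0 T, S.i x t ≤ P.K := fun x t ht => by
  have := inv_anti₀ (inv_pos.2 P.Kpos) (h.vlo x t ht)
  rwa [inv_inv] at this

lemma ipos (h : Reg P S T) : ∀ x, ∀ t ∈ Icc 0 T, 0 < S.i x t := fun x t ht => inv_pos.2 (h.vpos x t ht)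

lemma mi (h : Reg P S T) : Measurable (unc S.i) := h.mv.inv

lemma bdv (h : Reg P S T) : BD T S.v := ⟨h.mv, P.K, P.Kpos.le, fun x t ht => by
  rw [abs_of_pos (h.vpos x t ht)]; exact h.vhi x t ht⟩

lemma bdi (h : Reg P S T) : BD T S.i := ⟨h.mi, P.K, P.Kpos.le, fun x t ht => by
  rw [abs_of_pos (h.ipos x t ht)]; exact h.ihi x t ht⟩

lemma bdi2 (h : Reg P S T) : BD T (fun x t => S.i x t ^ 2) := by simpa only [sq] using h.bdi.mul h.bdi

lemma bdu (h : Reg P S T) : BD T S.u := by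
  obtain ⟨B, hB⟩ := h.su
  obtain ⟨B', hB'⟩ := h.sux
  exact BD_of_SB h.mu hB hB' h.dxu

lemma bdθ (h : Reg P S T) : BD T S.θ := by
  obtain ⟨B, hB⟩ := h.sθ
  obtain ⟨B', hB'⟩ := h.sθx
  have := BD_of_SB (f := fun x t => S.θ x t - 1) (h.mθ.sub measurable_const) hB hB' fun t ht x => (h.dxθ t ht x).sub_const 1
  simpa using this.add (BD.const 1)

lemma lv (h : Reg P S T) : LL T (fun x t => S.v x t - 1) := by
  obtain ⟨B, hB⟩ := h.sv; exact hB.LL (h.mv.sub measurable_const)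
lemma lu (h : Reg P S T) : LL T S.u := by obtain ⟨B, hB⟩ := h.su; exact hB.LL h.mu
lemma lθ (h : Reg P S T) : LL T (fun x t => S.θ x t - 1) := by
  obtain ⟨B, hB⟩ := h.sθ; exact hB.LL (h.mθ.sub measurable_const)
lemma lvx (h : Reg P S T) : LL T S.vx := by obtain ⟨B, hB⟩ := h.svx; exact hB.LL h.mvx
lemma lux (h : Reg P S T) : LL T S.ux := by obtain ⟨B, hB⟩ := h.sux; exact hB.LL h.mux
lemma lθx (h : Reg P S T) : LL T S.θx := by obtain ⟨B, hB⟩ := h.sθx; exact hB.LL h.mθx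

lemma luxvx (h : Reg P S T) : LL T (fun x t => S.ux x t * S.vx x t) := by
  obtain ⟨B, hB⟩ := h.svx
  exact (prod_LL h.dxux h.lux h.luxx h.mvx ((ae_restrict_mem measurableSet_Icc).mono hB)
    one_pos).1

lemma lθxvx (h : Reg P S T) : LL T (fun x t => S.θx x t * S.vx x t) := by
  obtain ⟨B, hB⟩ := h.svx
  exact (prod_LL h.dxθx h.lθx h.lθxx h.mvx ((ae_restrict_mem measurableSet_Icc).mono hB)
    one_pos).1

lemma lux2 (h : Reg P S T) : LL T (fun x t => S.ux x t * S.ux x t) := by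
  obtain ⟨B, hB⟩ := h.sux
  exact (prod_LL h.dxux h.lux h.luxx h.mux ((ae_restrict_mem measurableSet_Icc).mono hB)
    one_pos).1

lemma lst (h : Reg P S T) : LL T (S.st P) := by
  have h1 := LL.cmul P.μ (h.lux.bmul h.bdi)
  -- `θ / v - 1 = (θ - 1) / v - (v - 1) / v`
  have h2 := LL.cmul P.R ((h.lθ.bmul h.bdi).sub (h.lv.bmul h.bdi))
  refine (h1.sub h2).mono ?_ 1 fun x t ht => ?_
  · exact ((h.mux.mul h.mi).const_mul _).sub
      (((h.mθ.mul h.mi).sub measurable_const).const_mul _)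
  · rw [one_mul]
    refine le_of_eq (congrArg _ ?_)
    have := (h.vpos x t ht).ne'
    simp only [Fns.st, Fns.i]
    field_simp
    ring

lemma dxi (h : Reg P S T) : ∀ t ∈ Icc 0 T, ∀ x,
    HasDerivAt (fun y => S.i y t) (- (S.vx x t * S.i x t ^ 2)) x := fun t ht x => by
  have := (h.dxv t ht x).fun_inv (h.vpos x t ht).ne'
  refine this.congr_deriv ?_
  simp only [Fns.i, inv_pow]
  ring

lemma dxst (h : Reg P S T) : ∀ t ∈ Icc 0 T, ∀ x, HasDerivAt (fun y => S.st P y t) (S.ut P x t) x :=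
    fun t ht x => by
  have h1 := ((h.dxux t ht x).mul (h.dxi t ht x)).const_mul P.μ
  have h2 := (((h.dxθ t ht x).mul (h.dxi t ht x)).sub_const 1).const_mul P.R
  refine (h1.sub h2).congr_deriv ?_
  simp only [Fns.ut]
  ring

lemma dxq (h : Reg P S T) : ∀ t ∈ Icc 0 T, ∀ x, HasDerivAt (fun y => S.q P y t) (S.qx P x t) x :=
    fun t ht x => by
  have h1 := ((h.dxθx t ht x).mul (h.dxi t ht x)).const_mul P.κ
  refine h1.congr_deriv ?_
  simp only [Fns.qx]
  ring

lemma lq (h : Reg P S T) : LL T (S.q P) := by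
  have := LL.cmul P.κ (h.lθx.bmul h.bdi)
  refine this.mono ((h.mθx.mul h.mi).const_mul _) 1 fun x t _ => ?_
  rw [one_mul]; refine le_of_eq (congrArg _ ?_); simp only [Fns.q]; ring

lemma lqx (h : Reg P S T) : LL T (S.qx P) := by
  have := LL.cmul P.κ ((h.lθxx.bmul h.bdi).sub (h.lθxvx.bmul h.bdi2))
  refine this.mono ?_ 1 fun x t _ => ?_
  · exact ((h.lθxx.1.mul h.mi).sub ((h.mθx.mul h.mvx).mul (h.mi.pow_const 2))).const_mul _
  rw [one_mul]; refine le_of_eq (congrArg _ ?_); simp only [Fns.qx]; ring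

lemma lpw (h : Reg P S T) : LL T (S.pw P) := by
  have h1 := LL.cmul P.μ (h.lux2.bmul h.bdi)
  have h2 := LL.cmul P.R (h.lux.bmul (h.bdθ.mul h.bdi))
  refine (h1.sub h2).mono ?_ 1 fun x t _ => ?_
  · exact (h.lst.1.sub measurable_const).mul h.mux
  rw [one_mul]; refine le_of_eq (congrArg _ ?_); simp only [Fns.pw, Fns.st]; ring

lemma lut (h : Reg P S T) : LL T (S.ut P) := by
  have h1 := LL.cmul P.μ ((h.luxx.bmul h.bdi).sub (h.luxvx.bmul h.bdi2))
  have h2 := LL.cmul P.R ((h.lθx.bmul h.bdi).sub (h.lvx.bmul (h.bdθ.mul h.bdi2)))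
  refine (h1.sub h2).mono ?_ 1 fun x t _ => ?_
  · exact (((h.luxx.1.mul h.mi).sub ((h.mux.mul h.mvx).mul (h.mi.pow_const 2))).const_mul _).sub
      (((h.mθx.mul h.mi).sub ((h.mθ.mul h.mvx).mul (h.mi.pow_const 2))).const_mul _)
  rw [one_mul]; refine le_of_eq (congrArg _ ?_); simp only [Fns.ut]; ring

end Reg

/-! ### Testing an equation with a nonlinear function of the unknown -/

/-- `w` solves `w_t = F_x + g` with `w - a`, `w_x`, `F`, `F_x`, `g` square integrable, takes
values in `I`, and is bounded. -/
structure TW (T a : ℝ) (I : Set ℝ) (w wx F Fx g : ℝ → ℝ → ℝ) : Prop where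
  hT : 0 ≤ T
  bd : BD T w
  l : LL T (fun x t => w x t - a)
  lx : LL T wx
  lF : LL T F
  lFx : LL T Fx
  lg : LL T g
  mem : ∀ x, ∀ t ∈ Icc 0 T, w x t ∈ I
  dx : ∀ t ∈ Icc 0 T, ∀ x, HasDerivAt (fun y => w y t) (wx x t) x
  dF : ∀ t ∈ Icc 0 T, ∀ x, HasDerivAt (fun y => F y t) (Fx x t) x
  ct : ∀ x, ContinuousOn (w x) (Icc 0 T)
  dt : ∀ x, ∀ t ∈ Ioo 0 T, HasDerivAt (w x) (Fx x t + g x t) t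
  sl : ∀ t ∈ Icc 0 T, MemLp (fun x => w x t - a) 2 volume

lemma lip_bound {I : Set ℝ} (hI : OrdConnected I) {a C B : ℝ} (ha : a ∈ I) {φ φ' : ℝ → ℝ}
    (hd : ∀ s ∈ I, HasDerivAt φ (φ' s) s) (h0 : φ a = 0)
    (hb : ∀ s ∈ I, |s| ≤ B → |φ' s| ≤ C) (haB : |a| ≤ B) :
    ∀ s ∈ I, |s| ≤ B → |φ s| ≤ C * |s - a| := by
  intro s hs hsB
  have hc : Convex ℝ (I ∩ Icc (-B) B) := hI.convex.inter (convex_Icc _ _)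
  have := hc.norm_image_sub_le_of_norm_hasDerivWithin_le (f := φ) (f' := φ') (C := C)
    (fun y hy => (hd y hy.1).hasDerivWithinAt) (fun y hy => hb y hy.1 (abs_le.2 hy.2))
    (x := a) (y := s) ⟨ha, abs_le.1 haB⟩ ⟨hs, abs_le.1 hsB⟩
  simpa [h0] using this

/-- The weak form of the equation for `w`, tested with `α' (w)`. -/
lemma test {T a : ℝ} {I : Set ℝ} {w wx F Fx g : ℝ → ℝ → ℝ} (H : TW T a I w wx F Fx g)
    (hI : OrdConnected I) (cI : IsClosed I) (ha : a ∈ I) {α α' α'' : ℝ → ℝ}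
    (h1 : ∀ s ∈ I, HasDerivAt α (α' s) s) (h2 : ∀ s ∈ I, HasDerivAt α' (α'' s) s)
    (h3 : ContinuousOn α'' I) (m0 : Measurable α) (m1 : Measurable α') (m2 : Measurable α'')
    (a0 : α a = 0) (a1 : α' a = 0) :
    BD T (fun x t => α'' (w x t)) ∧ BD T (fun x t => α' (w x t)) ∧
    LL T (fun x t => α' (w x t)) ∧
    (∀ t ∈ Icc 0 T, Integrable (fun x => α (w x t))) ∧
    (∫ x, α (w x T)) - (∫ x, α (w x 0))
      = - II T (fun x t => α'' (w x t) * wx x t * F x t) + II T (fun x t => α' (w x t) * g x t) := by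
  obtain ⟨mw, B, hB, hw⟩ := H.bd
  have kc : IsCompact (I ∩ Icc (-(B + |a|)) (B + |a|)) := isCompact_Icc.inter_left cI
  obtain ⟨C, hC⟩ := kc.exists_bound_of_continuousOn (h3.mono inter_subset_left)
  have b2 : ∀ s ∈ I, |s| ≤ B + |a| → |α'' s| ≤ C := fun s hs h => hC s ⟨hs, abs_le.1 h⟩
  have haB : |a| ≤ B + |a| := by linarith
  have b1 := lip_bound hI ha h2 a1 b2 haB
  have hC0 : 0 ≤ C := (abs_nonneg _).trans (b2 a ha haB)
  have b1' : ∀ s ∈ I, |s| ≤ B + |a| → |α' s| ≤ C * (B + |a| + |a|) := fun s hs h =>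
    (b1 s hs h).trans (mul_le_mul_of_nonneg_left ((abs_sub _ _).trans (by linarith)) hC0)
  have hw' : ∀ x, ∀ t ∈ Icc 0 T, |w x t| ≤ B + |a| := fun x t ht => by
    linarith [hw x t ht, abs_nonneg a]
  have b0 : ∀ s ∈ I, |s| ≤ B + |a| → |α s| ≤ C * (s - a) ^ 2 := by
    intro s hs h
    have hJ : OrdConnected (I ∩ Icc (a - |s - a|) (a + |s - a|)) :=
      hI.inter ordConnected_Icc
    have := lip_bound (B := B + |a|) (C := C * |s - a|) hJ (a := a)
      ⟨ha, by constructor <;> linarith [abs_nonneg (s - a)]⟩ (fun y hy => h1 y hy.1) a0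
      (fun y hy hyB => (b1 y hy.1 hyB).trans (mul_le_mul_of_nonneg_left
        (abs_le.2 ⟨by linarith [hy.2.1], by linarith [hy.2.2]⟩) hC0)) haB s
      ⟨hs, by constructor <;> linarith [neg_abs_le (s - a), le_abs_self (s - a)]⟩ h
    rwa [mul_assoc, abs_mul_abs_self, ← sq] at this
  have bd2 : BD T (fun x t => α'' (w x t)) :=
    ⟨m2.comp mw, C, hC0, fun x t ht => b2 _ (H.mem x t ht) (hw' x t ht)⟩
  have bd1 : BD T (fun x t => α' (w x t)) :=
    ⟨m1.comp mw, _, by positivity, fun x t ht => b1' _ (H.mem x t ht) (hw' x t ht)⟩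
  have l1 : LL T (fun x t => α' (w x t)) :=
    H.l.mono (m1.comp mw) C fun x t ht => b1 _ (H.mem x t ht) (hw' x t ht)
  have in0 : ∀ t ∈ Icc 0 T, Integrable (fun x => α (w x t)) := fun t ht => by
    refine ((H.sl t ht).integrable_sq.const_mul C).mono' ?_
      (Eventually.of_forall fun x => b0 _ (H.mem x t ht) (hw' x t ht))
    exact (m0.comp (mw.comp (measurable_id.prodMk measurable_const))).aestronglyMeasurable
  refine ⟨bd2, bd1, l1, in0, ?_⟩
  have e0 : (0 : ℝ) ∈ Icc 0 T := ⟨le_rfl, H.hT⟩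
  have eT : T ∈ Icc 0 T := ⟨H.hT, le_rfl⟩
  have i1 := l1.mul H.lFx
  have i2 := l1.mul H.lg
  have tid := time_id (F := fun x t => α (w x t))
    (Ft := fun x t => α' (w x t) * Fx x t + α' (w x t) * g x t) H.hT
    (fun x t ht => ((h1 _ (H.mem x t ht)).continuousAt).comp_continuousWithinAt (H.ct x t ht))
    (fun x t ht => by
      have := (h1 _ (H.mem x t (Ioo_subset_Icc_self ht))).comp t (H.dt x t ht)
      refine this.congr_deriv (by ring)) (i1.add i2) (in0 0 e0) (in0 T eT)
  rw [tid, II_add i1 i2, parts (A := fun x t => α' (w x t))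
    (Ax := fun x t => α'' (w x t) * wx x t) (fun t ht x =>
      (h2 _ (H.mem x t ht)).comp x (H.dx t ht x)) H.dF l1 (H.lx.bmul bd2) H.lF H.lFx]

namespace Reg
variable {P : Par} {S : Fns} {T : ℝ}

lemma twu (h : Reg P S T) : TW T 0 univ S.u S.ux (S.st P) (S.ut P) (fun _ _ => 0) where
  hT := h.hT'
  bd := h.bdu
  l := by simpa using h.lu
  lx := h.lux
  lF := h.lst
  lFx := h.lut
  lg := ⟨measurable_const, MemLp.zero⟩
  mem := fun _ _ _ => mem_univ _
  dx := h.dxu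
  dF := h.dxst
  ct := h.ctu
  dt := fun x t ht => by simpa using h.dtu x t ht
  sl := fun t ht => by obtain ⟨B, hB⟩ := h.su; simpa using (hB t ht).1

lemma twθ (h : Reg P S T) : TW T 1 (Ici 0) S.θ S.θx (fun x t => P.cv⁻¹ * S.q P x t)
    (fun x t => P.cv⁻¹ * S.qx P x t) (fun x t => P.cv⁻¹ * S.pw P x t) where
  hT := h.hT'
  bd := h.bdθ
  l := h.lθ
  lx := h.lθx
  lF := h.lq.cmul _
  lFx := h.lqx.cmul _
  lg := h.lpw.cmul _
  mem := fun x t ht => (h.θpos x t ht).le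
  dx := h.dxθ
  dF := fun t ht x => (h.dxq t ht x).const_mul _
  ct := h.ctθ
  dt := fun x t ht => by
    refine (h.dtθ x t ht).congr_deriv ?_
    simp only [Fns.θt]; ring
  sl := fun t ht => by obtain ⟨B, hB⟩ := h.sθ; exact (hB t ht).1

lemma twv (h : Reg P S T) : TW T 1 (Ici P.K⁻¹) S.v S.vx (fun _ _ => 0) (fun _ _ => 0) S.ux where
  hT := h.hT'
  bd := h.bdv
  l := h.lv
  lx := h.lvx
  lF := ⟨measurable_const, MemLp.zero⟩
  lFx := ⟨measurable_const, MemLp.zero⟩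
  lg := h.lux
  mem := fun x t ht => h.vlo x t ht
  dx := h.dxv
  dF := fun t ht x => hasDerivAt_const _ _
  ct := h.ctv
  dt := fun x t ht => by simpa using h.dtv x t ht
  sl := fun t ht => by obtain ⟨B, hB⟩ := h.sv; exact (hB t ht).1

/-- The total energy `E = c_v θ + u² / 2` solves `E_t = (q + u (st - R))_x`. -/
lemma twE (h : Reg P S T) : TW T P.cv univ (fun x t => P.cv * S.θ x t + S.u x t ^ 2 / 2)
    (fun x t => P.cv * S.θx x t + S.u x t * S.ux x t)
    (fun x t => S.q P x t + S.u x t * (S.st P x t - P.R))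
    (fun x t => S.qx P x t + (S.u x t * S.ut P x t + S.pw P x t)) (fun _ _ => 0) where
  hT := h.hT'
  bd := by
    have := ((BD.const P.cv).mul h.bdθ).add ((h.bdu.mul h.bdu).mul (BD.const 2⁻¹))
    simpa only [sq, div_eq_mul_inv] using this
  l := by
    have := (h.lθ.cmul P.cv).add (h.lu.bmul ((BD.const 2⁻¹).mul h.bdu))
    refine this.mono ?_ 1 fun x t _ => ?_
    · exact ((h.mθ.const_mul _).add ((h.mu.pow_const 2).div_const _)).sub measurable_const
    · rw [one_mul]; refine le_of_eq (congrArg _ ?_); ring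
  lx := (h.lθx.cmul _).add (h.lux.bmul h.bdu)
  lF := by
    have := h.lq.add ((h.lst.bmul h.bdu).sub (h.lu.cmul P.R))
    refine this.mono (h.lq.1.add (h.mu.mul (h.lst.1.sub measurable_const))) 1 fun x t _ => ?_
    rw [one_mul]; refine le_of_eq (congrArg _ ?_); ring
  lFx := h.lqx.add ((h.lut.bmul h.bdu).add h.lpw)
  lg := ⟨measurable_const, MemLp.zero⟩
  mem := fun _ _ _ => mem_univ _
  dx := fun t ht x => by
    have := ((h.dxθ t ht x).const_mul P.cv).add (((h.dxu t ht x).fun_pow 2).div_const 2)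
    refine this.congr_deriv ?_
    norm_num; ring
  dF := fun t ht x => by
    have := (h.dxq t ht x).add ((h.dxu t ht x).mul ((h.dxst t ht x).sub_const P.R))
    refine this.congr_deriv ?_
    simp only [Fns.pw]; ring
  ct := fun x => ((h.ctθ x).const_mul _).add (((h.ctu x).pow 2).div_const _)
  dt := fun x t ht => by
    have := ((h.dtθ x t ht).const_mul P.cv).add (((h.dtu x t ht).fun_pow 2).div_const 2)
    refine this.congr_deriv ?_
    have := P.hcv.ne'
    simp only [Fns.θt]; field_simp; ring
  sl := fun t ht => by
    obtain ⟨B, hB⟩ := h.sθ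
    obtain ⟨B', hB'⟩ := h.su
    obtain ⟨mb, C, hC, hu⟩ := h.bdu
    have mu : Measurable (fun x => S.u x t) := h.mu.comp (measurable_id.prodMk measurable_const)
    have m2 : MemLp (fun x => S.u x t ^ 2 / 2) 2 volume := by
      refine MemLp.of_le_mul (c := C) (hB' t ht).1
        ((mu.pow_const 2).div_const 2).aestronglyMeasurable (Eventually.of_forall fun x => ?_)
      rw [Real.norm_of_nonneg (by positivity), Real.norm_eq_abs]
      have := hu x t ht
      rw [← sq_abs]; nlinarith [abs_nonneg (S.u x t)]
    have := ((hB t ht).1.const_mul P.cv).add m2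
    convert this using 1
    funext x
    simp only [Pi.add_apply]; ring

end Reg

end NSEst

namespace NSEst

/-! ### Truncation functions -/

/-- A function on `[0, ∞)` whose derivative vanishes at `0` extends to a differentiable function
that is constant on `(-∞, 0]`. -/
lemma pos_deriv {f f' : ℝ → ℝ} (hf : ∀ s, 0 ≤ s → HasDerivAt f (f' s) s) (h0 : f' 0 = 0) (s : ℝ) :
    HasDerivAt (fun s => f (max s 0)) (f' (max s 0)) s := by
  rcases lt_trichotomy s 0 with h | h | h
  · rw [max_eq_right h.le, h0]
    refine (hasDerivAt_const s (f 0)).congr_of_eventuallyEq ?_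
    filter_upwards [gt_mem_nhds h] with y hy
    rw [max_eq_right (le_of_lt hy)]
  · subst h
    rw [max_self, h0]
    have h1 : HasDerivWithinAt (fun s => f (max s 0)) 0 (Iic 0) 0 := by
      refine (hasDerivWithinAt_const (0 : ℝ) (Iic 0) (f 0)).congr (fun y hy => ?_) ?_
      · rw [max_eq_right hy]
      · simp
    have h2 : HasDerivWithinAt (fun s => f (max s 0)) 0 (Ici 0) 0 := by
      have := (hf 0 le_rfl).hasDerivWithinAt (s := Ici 0)
      rw [h0] at this
      refine this.congr (fun y hy => ?_) ?_
      · rw [max_eq_left hy]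
      · simp
    have := h1.union h2
    rwa [Iic_union_Ici, hasDerivWithinAt_univ] at this
  · rw [max_eq_left h.le]
    refine (hf s h.le).congr_of_eventuallyEq ?_
    filter_upwards [lt_mem_nhds h] with y hy
    rw [max_eq_left (le_of_lt hy)]

/-- A `C¹` version of the positive part. -/
noncomputable def pp (s : ℝ) : ℝ := (max s 0) ^ 2 / (1 + max s 0)
/-- The derivative of `pp`. -/
noncomputable def dp (s : ℝ) : ℝ := (2 * max s 0 + (max s 0) ^ 2) / (1 + max s 0) ^ 2
/-- The primitive of `pp`. -/
noncomputable def Pp (s : ℝ) : ℝ := (max s 0) ^ 2 / 2 - max s 0 + Real.log (1 + max s 0)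
/-- A `C¹` truncation of the indicator function of `s > 0`. -/
noncomputable def gg (s : ℝ) : ℝ := (max s 0) ^ 2 / (1 + max s 0) ^ 2
/-- The derivative of `gg`. -/
noncomputable def dg (s : ℝ) : ℝ := 2 * max s 0 / (1 + max s 0) ^ 3
/-- The primitive of `gg`. -/
noncomputable def Gg (s : ℝ) : ℝ :=
  max s 0 - 2 * Real.log (1 + max s 0) - (1 + max s 0)⁻¹ + 1

lemma Pp_deriv (s : ℝ) : HasDerivAt Pp (pp s) s := by
  refine pos_deriv (f := fun s => s ^ 2 / 2 - s + Real.log (1 + s))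
    (f' := fun s => s ^ 2 / (1 + s)) (fun s hs => ?_) (by simp) s
  have h1 : (1 + s) ≠ 0 := by positivity
  have := (((hasDerivAt_pow 2 s).div_const 2).sub (hasDerivAt_id s)).add
    (((hasDerivAt_id s).const_add 1).log h1)
  refine this.congr_deriv ?_
  norm_num
  field_simp
  ring

lemma pp_deriv (s : ℝ) : HasDerivAt pp (dp s) s := by
  refine pos_deriv (f := fun s => s ^ 2 / (1 + s))
    (f' := fun s => (2 * s + s ^ 2) / (1 + s) ^ 2) (fun s hs => ?_) (by simp) s
  have h1 : (1 + s) ≠ 0 := by positivity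
  have := (hasDerivAt_pow 2 s).div ((hasDerivAt_id s).const_add 1) h1
  refine this.congr_deriv ?_
  simp only [id]
  norm_num
  field_simp
  ring

lemma Gg_deriv (s : ℝ) : HasDerivAt Gg (gg s) s := by
  refine pos_deriv (f := fun s => s - 2 * Real.log (1 + s) - (1 + s)⁻¹ + 1)
    (f' := fun s => s ^ 2 / (1 + s) ^ 2) (fun s hs => ?_) (by simp) s
  have h1 : (1 + s) ≠ 0 := by positivity
  have := (((hasDerivAt_id s).sub ((((hasDerivAt_id s).const_add 1).log h1).const_mul 2)).sub
    (((hasDerivAt_id s).const_add 1).fun_inv h1)).add_const 1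
  refine this.congr_deriv ?_
  simp only [id]
  field_simp
  ring

lemma gg_deriv (s : ℝ) : HasDerivAt gg (dg s) s := by
  refine pos_deriv (f := fun s => s ^ 2 / (1 + s) ^ 2)
    (f' := fun s => 2 * s / (1 + s) ^ 3) (fun s hs => ?_) (by simp) s
  have h1 : (1 + s) ≠ 0 := by positivity
  have := (hasDerivAt_pow 2 s).div (((hasDerivAt_id s).const_add 1).fun_pow 2)
    (pow_ne_zero 2 h1)
  refine this.congr_deriv ?_
  simp only [id]
  norm_num
  field_simp
  ring

lemma cont_pp : Continuous pp := continuous_iff_continuousAt.2 fun s => (pp_deriv s).continuousAt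
lemma cont_Pp : Continuous Pp := continuous_iff_continuousAt.2 fun s => (Pp_deriv s).continuousAt
lemma cont_gg : Continuous gg := continuous_iff_continuousAt.2 fun s => (gg_deriv s).continuousAt
lemma cont_Gg : Continuous Gg := continuous_iff_continuousAt.2 fun s => (Gg_deriv s).continuousAt

lemma cont_dp : Continuous dp := by
  unfold dp
  refine Continuous.div (by fun_prop) (by fun_prop) fun s => ?_
  have := le_max_right s 0
  positivity

lemma cont_dg : Continuous dg := by
  unfold dg
  refine Continuous.div (by fun_prop) (by fun_prop) fun s => ?_
  have := le_max_right s 0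
  positivity

lemma pp_nonneg (s : ℝ) : 0 ≤ pp s := by
  have := le_max_right s 0
  unfold pp; positivity

lemma pp_zero {s : ℝ} (h : s ≤ 0) : pp s = 0 := by simp [pp, max_eq_right h]
lemma dp_zero {s : ℝ} (h : s ≤ 0) : dp s = 0 := by simp [dp, max_eq_right h]
lemma Pp_zero {s : ℝ} (h : s ≤ 0) : Pp s = 0 := by simp [Pp, max_eq_right h]
lemma gg_zero {s : ℝ} (h : s ≤ 0) : gg s = 0 := by simp [gg, max_eq_right h]
lemma dg_zero {s : ℝ} (h : s ≤ 0) : dg s = 0 := by simp [dg, max_eq_right h]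
lemma Gg_zero {s : ℝ} (h : s ≤ 0) : Gg s = 0 := by simp [Gg, max_eq_right h]

lemma pp_pos {s : ℝ} (h : 0 ≤ s) : pp s = s ^ 2 / (1 + s) := by simp [pp, max_eq_left h]

lemma pp_ge (s : ℝ) : s - 1 ≤ pp s := by
  rcases le_total s 0 with h | h
  · rw [pp_zero h]; linarith
  · rw [pp_pos h, le_div_iff₀ (by positivity)]; nlinarith

lemma pp_le (s : ℝ) : pp s ≤ max s 0 := by
  have := le_max_right s 0
  rw [pp, div_le_iff₀ (by positivity)]; nlinarith

lemma dp_nonneg (s : ℝ) : 0 ≤ dp s := by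
  have := le_max_right s 0
  unfold dp; positivity

lemma dp_le (s : ℝ) : dp s ≤ 1 := by
  have := le_max_right s 0
  rw [dp, div_le_iff₀ (by positivity)]; nlinarith

lemma dp_ge {s : ℝ} (h : 1 ≤ s) : 3 / 4 ≤ dp s := by
  rw [dp, max_eq_left (by linarith), le_div_iff₀ (by positivity)]; nlinarith

lemma Pp_nonneg (s : ℝ) : 0 ≤ Pp s := by
  have h := le_max_right s 0
  have := Real.le_log_one_add_of_nonneg h
  unfold Pp
  have h2 : max s 0 - (max s 0) ^ 2 / 2 ≤ 2 * max s 0 / (max s 0 + 2) := by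
    rw [le_div_iff₀ (by positivity)]
    nlinarith [pow_nonneg h 2, pow_nonneg h 3]
  linarith

lemma Pp_le (s : ℝ) : Pp s ≤ (max s 0) ^ 2 / 2 := by
  have h := le_max_right s 0
  have := Real.log_le_sub_one_of_pos (show 0 < 1 + max s 0 by positivity)
  unfold Pp; linarith

lemma gg_nonneg (s : ℝ) : 0 ≤ gg s := by
  have := le_max_right s 0
  unfold gg; positivity

lemma gg_le (s : ℝ) : gg s ≤ 1 := by
  have := le_max_right s 0
  rw [gg, div_le_iff₀ (by positivity)]; nlinarith

lemma gg_ge {s : ℝ} (h : 1 ≤ s) : 1 / 4 ≤ gg s := by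
  rw [gg, max_eq_left (by linarith), le_div_iff₀ (by positivity)]; nlinarith

lemma dg_nonneg (s : ℝ) : 0 ≤ dg s := by
  have := le_max_right s 0
  unfold dg; positivity

lemma dg_le (s : ℝ) : dg s * (5 + s) ^ 2 ≤ 50 := by
  rcases le_total s 0 with h' | h'
  · rw [dg_zero h']; norm_num
  · rw [dg, max_eq_left h', div_mul_eq_mul_div, div_le_iff₀ (by positivity)]
    nlinarith [pow_nonneg h' 2, pow_nonneg h' 3]

lemma Gg_le (s : ℝ) : Gg s ≤ 2 * max s 0 := by
  have h := le_max_right s 0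
  have h1 := Real.log_nonneg (show 1 ≤ 1 + max s 0 by linarith)
  have h2 : 1 - max s 0 ≤ (1 + max s 0)⁻¹ := by
    rw [← one_div, le_div_iff₀ (by positivity)]; nlinarith
  unfold Gg; linarith

lemma Gg_ge (s : ℝ) : - max s 0 ≤ Gg s := by
  have h := le_max_right s 0
  have h1 := Real.log_le_sub_one_of_pos (show 0 < 1 + max s 0 by positivity)
  have h2 : (1 + max s 0)⁻¹ ≤ 1 := by
    apply inv_le_one_of_one_le₀; linarith
  unfold Gg; linarith

/-! ### The regularized entropy -/

/-- A continuous function vanishing near `θ = 1` and dominating `θ` for `θ ≥ 2`. -/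
noncomputable def et (s : ℝ) : ℝ := 4 * max (s - 3 / 2) 0

lemma cont_et : Continuous et := by unfold et; fun_prop
lemma et_nonneg (s : ℝ) : 0 ≤ et s := mul_nonneg (by norm_num) (le_max_right _ _)
lemma et_ge {s : ℝ} (h : 2 ≤ s) : s ≤ et s := by
  have := le_max_left (s - 3 / 2) 0
  unfold et; linarith
lemma et_le (s : ℝ) : et s ≤ 2 * (s - 1) ^ 2 := by
  have : max (s - 3 / 2) 0 ≤ (s - 1) ^ 2 / 2 :=
    max_le (by nlinarith [sq_nonneg (s - 2)]) (by positivity)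
  unfold et; linarith

/-- The regularized relative entropy of the temperature. -/
noncomputable def HH (ε s : ℝ) : ℝ := (s - 1) - (1 + ε) * (Real.log (s + ε) - Real.log (1 + ε))

lemma HH_eq {ε s : ℝ} (hε : 0 < ε) (hs : 0 ≤ s) :
    HH ε s = (1 + ε) * ((s + ε) / (1 + ε) - 1 - Real.log ((s + ε) / (1 + ε))) := by
  rw [Real.log_div (by positivity) (by positivity), HH]
  field_simp
  ring

lemma HH_nonneg {ε s : ℝ} (hε : 0 < ε) (hs : 0 ≤ s) : 0 ≤ HH ε s := by
  rw [HH_eq hε hs]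
  have := Real.log_le_sub_one_of_pos (show 0 < (s + ε) / (1 + ε) by positivity)
  exact mul_nonneg (by positivity) (by linarith)

lemma HH_le {ε s : ℝ} (hε : 0 < ε) (hs : 0 ≤ s) : HH ε s ≤ (s - 1) ^ 2 / (s + ε) := by
  rw [HH_eq hε hs]
  have := Real.one_sub_inv_le_log_of_pos (show 0 < (s + ε) / (1 + ε) by positivity)
  calc _ ≤ (1 + ε) * ((s + ε) / (1 + ε) - 1 - (1 - ((s + ε) / (1 + ε))⁻¹)) := by gcongr
    _ = _ := by field_simp; ring

lemma et_le_HH {ε s : ℝ} (hε : 0 < ε) (hε1 : ε ≤ 1) (hs : 0 ≤ s) : et s ≤ 400 * HH ε s := by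
  rcases le_total s (3 / 2) with h | h
  · have : et s = 0 := by simp [et, h]
    rw [this]; linarith [HH_nonneg hε hs]
  rw [HH_eq hε hs]
  set y := Real.sqrt ((s + ε) / (1 + ε)) with hy
  have hx : 0 ≤ (s + ε) / (1 + ε) := by positivity
  have hy2 : y ^ 2 = (s + ε) / (1 + ε) := Real.sq_sqrt hx
  have h54 : 5 / 4 ≤ y ^ 2 := by
    rw [hy2, le_div_iff₀ (by positivity)]; nlinarith
  have hy0 : 0 ≤ y := Real.sqrt_nonneg _
  have hy1 : 10 / 9 ≤ y := by nlinarith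
  have hl : Real.log ((s + ε) / (1 + ε)) ≤ 2 * (y - 1) := by
    rw [← hy2, Real.log_pow]
    have := Real.log_le_sub_one_of_pos (show 0 < y by linarith)
    push_cast; linarith
  have hsq : y ^ 2 / 100 ≤ (y - 1) ^ 2 := by nlinarith
  have hA : (s + ε) / 100 ≤
      (1 + ε) * ((s + ε) / (1 + ε) - 1 - Real.log ((s + ε) / (1 + ε))) := by
    calc (s + ε) / 100 = (1 + ε) * (y ^ 2 / 100) := by rw [hy2]; field_simp
      _ ≤ (1 + ε) * (y - 1) ^ 2 := by gcongr
      _ ≤ _ := by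
        gcongr
        rw [← hy2]; rw [← hy2] at hl; nlinarith
  have : et s = 4 * (s - 3 / 2) := by rw [et, max_eq_left (by linarith)]
  rw [this]; linarith

lemma II_le5 {T : ℝ} {f f1 f2 f3 f4 f5 : ℝ → ℝ → ℝ} (c1 c2 c3 c4 c5 : ℝ) (hf : Itg T f)
    (h1 : Itg T f1) (h2 : Itg T f2) (h3 : Itg T f3) (h4 : Itg T f4) (h5 : Itg T f5)
    (h : ∀ x, ∀ t ∈ Icc 0 T,
      f x t ≤ c1 * f1 x t + c2 * f2 x t + c3 * f3 x t + c4 * f4 x t + c5 * f5 x t) :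
    II T f ≤ c1 * II T f1 + c2 * II T f2 + c3 * II T f3 + c4 * II T f4 + c5 * II T f5 := by
  have := II_le4 1 c3 c4 c5 hf ((h1.cmul c1).add (h2.cmul c2)) h3 h4 h5
    (fun x t ht => (h x t ht).trans (le_of_eq (by ring)))
  rw [II_add (h1.cmul _) (h2.cmul _), II_cmul, II_cmul] at this
  linarith

end NSEst

namespace NSEst

/-! ### The entropy estimate -/

lemma HH_deriv {ε s : ℝ} (hε : 0 < ε) (hs : 0 ≤ s) :
    HasDerivAt (HH ε) ((s - 1) / (s + ε)) s := by
  have h1 : s + ε ≠ 0 := by positivity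
  have := ((hasDerivAt_id s).sub_const 1).sub
    (((((hasDerivAt_id s).add_const ε).log h1).sub_const (Real.log (1 + ε))).const_mul (1 + ε))
  refine this.congr_deriv ?_
  simp only [id]
  field_simp
  ring

lemma HH_deriv2 {ε s : ℝ} (hε : 0 < ε) (hs : 0 ≤ s) :
    HasDerivAt (fun s => (s - 1) / (s + ε)) ((1 + ε) / (s + ε) ^ 2) s := by
  have h1 : s + ε ≠ 0 := by positivity
  have := ((hasDerivAt_id s).sub_const 1).div ((hasDerivAt_id s).add_const ε) h1
  refine this.congr_deriv ?_
  simp only [id]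
  field_simp
  ring

namespace Reg
variable {P : Par} {S : Fns} {T : ℝ}

/-- The error term of the regularized entropy balance is negligible as `ε → 0`. -/
lemma err_tendsto (h : Reg P S T) {δ : ℝ} (hδ : 0 < δ) :
    Tendsto (fun n : ℕ => II T (fun x t => P.R * (δ / (n + 1)) * ((S.θ x t - 1) * S.ux x t)
      * S.i x t / (S.θ x t + δ / (n + 1)))) atTop (nhds 0) := by
  have ig := Itg.cmul (P.R * P.K) (h.lθ.mul h.lux)
  have lim : ∫ z, (0 : ℝ) ∂(nu T) = 0 := by simp
  rw [← lim]
  have hn : ∀ n : ℕ, 0 < δ / ((n : ℝ) + 1) := fun n => by positivity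
  refine tendsto_integral_of_dominated_convergence (fun z => |unc (fun x t =>
    P.R * P.K * ((S.θ x t - 1) * S.ux x t)) z|) (fun n => ?_) ig.2.abs (fun n => ?_) ?_
  · exact ((((((h.mθ.sub measurable_const).mul h.mux).const_mul _).mul h.mi).div
      (h.mθ.add measurable_const))).aestronglyMeasurable
  · refine ae_of_forall (p := fun x t => ‖unc (fun x t => P.R * (δ / ((n : ℝ) + 1))
      * ((S.θ x t - 1) * S.ux x t) * S.i x t / (S.θ x t + δ / (n + 1))) (x, t)‖
      ≤ |unc (fun x t => P.R * P.K * ((S.θ x t - 1) * S.ux x t)) (x, t)|) fun x t ht => ?_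
    simp only [unc, Real.norm_eq_abs]
    have hθ := h.θpos x t ht
    have hnn := hn n
    set e := δ / ((n : ℝ) + 1)
    have h1 : P.R * e * ((S.θ x t - 1) * S.ux x t) * S.i x t / (S.θ x t + e)
        = (e / (S.θ x t + e) * (S.i x t * P.R)) * ((S.θ x t - 1) * S.ux x t) := by ring
    rw [h1, abs_mul, abs_mul (P.R * P.K)]
    refine mul_le_mul_of_nonneg_right ?_ (abs_nonneg _)
    have hi := h.ipos x t ht
    have hR := P.hR
    have hK := P.Kpos
    rw [abs_of_nonneg (by positivity), abs_of_nonneg (by positivity)]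
    have e1 : e / (S.θ x t + e) ≤ 1 := by rw [div_le_one (by positivity)]; linarith
    calc e / (S.θ x t + e) * (S.i x t * P.R) ≤ 1 * (P.K * P.R) := by
          have := h.ihi x t ht
          gcongr
      _ = _ := by ring
  · filter_upwards [ae_mem T] with z hz
    have hθ := h.θpos z.1 z.2 hz
    have ht : Tendsto (fun n : ℕ => δ / ((n : ℝ) + 1)) atTop (nhds 0) :=
      tendsto_const_div_atTop_nhds_zero_nat δ |>.comp (tendsto_add_atTop_nat 1) |>.congr
        fun n => by simp
    have hden : Tendsto (fun n : ℕ => S.θ z.1 z.2 + δ / ((n : ℝ) + 1)) atTop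
        (nhds (S.θ z.1 z.2 + 0)) := ht.const_add _
    have := ((((ht.const_mul P.R).mul_const ((S.θ z.1 z.2 - 1) * S.ux z.1 z.2)).mul_const
      (S.i z.1 z.2)).div hden (by simpa using hθ.ne'))
    simp only [mul_zero, zero_mul, zero_div] at this
    exact this

lemma itg_d1 (h : Reg P S T) {ε : ℝ} (hε : 0 < ε) : Itg T (fun x t => S.ux x t ^ 2 / (S.θ x t + ε)) := by
  refine h.lux.sq.mono ((h.mux.pow_const 2).div (h.mθ.add measurable_const)) ε⁻¹
    fun x t ht => ?_
  have hθ := h.θpos x t ht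
  rw [abs_div, abs_of_pos (show 0 < S.θ x t + ε by positivity), div_eq_inv_mul]
  gcongr
  linarith

lemma itg_d2 (h : Reg P S T) {ε : ℝ} (hε : 0 < ε) : Itg T (fun x t => S.θx x t ^ 2 / (S.θ x t + ε) ^ 2) := by
  refine h.lθx.sq.mono ((h.mθx.pow_const 2).div ((h.mθ.add measurable_const).pow_const 2))
    (ε ^ 2)⁻¹ fun x t ht => ?_
  have hθ := h.θpos x t ht
  rw [abs_div, abs_of_pos (show 0 < (S.θ x t + ε) ^ 2 by positivity), div_eq_inv_mul]
  gcongr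
  linarith

/-- The entropy balance with the regularization `θ + ε`. -/
lemma entropy_eps (h : Reg P S T) (hI : Ini P S) {ε : ℝ} (hε : 0 < ε) (hε1 : ε ≤ 1) :
    Integrable (fun x => et (S.θ x T)) ∧
    (∫ x, S.u x T ^ 2) / 2 + P.cv / 400 * (∫ x, et (S.θ x T))
      + P.μ / P.K * II T (fun x t => S.ux x t ^ 2 / (S.θ x t + ε))
      + P.κ / P.K * II T (fun x t => S.θx x t ^ 2 / (S.θ x t + ε) ^ 2)
      ≤ (P.M ^ 2 / 2 + P.R * (P.K * P.M ^ 2) + P.cv * (P.m⁻¹ * P.M ^ 2))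
        + II T (fun x t => P.R * ε * ((S.θ x t - 1) * S.ux x t) * S.i x t / (S.θ x t + ε)) := by
  have hR := P.hR
  have hK := P.Kpos
  have hcv := P.hcv
  have hμ := P.hμ
  have hκ := P.hκ
  have hm := P.hm
  obtain ⟨-, -, lu1, iu, eu⟩ := test h.twu ordConnected_univ isClosed_univ (mem_univ _)
    (α := fun s => s ^ 2 / 2) (α' := fun s => s) (α'' := fun _ => 1)
    (fun s _ => by
      refine ((hasDerivAt_pow 2 s).div_const 2).congr_deriv ?_
      norm_num) (fun s _ => hasDerivAt_id s) continuousOn_const (by fun_prop) measurable_id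
      measurable_const (by norm_num) rfl
  obtain ⟨bv2, -, lv1, iv, ev⟩ := test h.twv ordConnected_Ici isClosed_Ici
    (show (1 : ℝ) ∈ Ici P.K⁻¹ from inv_le_one_of_one_le₀ P.hK)
    (α := fun s => s - 1 - Real.log s) (α' := fun s => 1 - s⁻¹) (α'' := fun s => (s ^ 2)⁻¹)
    (fun s hs => by
      have h0 : s ≠ 0 := (lt_of_lt_of_le (inv_pos.2 hK) hs).ne'
      exact ((hasDerivAt_id s).sub_const 1).sub (Real.hasDerivAt_log h0))
    (fun s hs => by
      have h0 : s ≠ 0 := (lt_of_lt_of_le (inv_pos.2 hK) hs).ne'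
      refine ((hasDerivAt_inv h0).const_sub 1).congr_deriv ?_
      simp)
    (fun s hs => by
      have h0 : s ≠ 0 := (lt_of_lt_of_le (inv_pos.2 hK) hs).ne'
      exact ((continuousAt_id.pow 2).inv₀ (pow_ne_zero 2 h0)).continuousWithinAt)
    ((measurable_id.sub measurable_const).sub Real.measurable_log)
    (measurable_const.sub measurable_inv) (measurable_id.pow_const 2).inv (by simp) (by simp)
  obtain ⟨bθ2, bθ1, lθ1, iθ, eθ⟩ := test h.twθ ordConnected_Ici isClosed_Ici
    (mem_Ici.2 zero_le_one : (1 : ℝ) ∈ Ici (0 : ℝ))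
    (α := HH ε) (α' := fun s => (s - 1) / (s + ε)) (α'' := fun s => (1 + ε) / (s + ε) ^ 2)
    (fun s hs => HH_deriv hε hs) (fun s hs => HH_deriv2 hε hs)
    (fun s hs => by
      have h0 : s + ε ≠ 0 := by have : 0 ≤ s := hs; positivity
      exact (continuousAt_const.div ((continuousAt_id.add continuousAt_const).pow 2)
        (pow_ne_zero 2 h0)).continuousWithinAt)
    (by
      unfold HH
      exact (measurable_id.sub measurable_const).sub (((Real.measurable_log.comp
        (measurable_id.add measurable_const)).sub measurable_const).const_mul _))
    ((measurable_id.sub measurable_const).div (measurable_id.add measurable_const))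
    (measurable_const.div ((measurable_id.add measurable_const).pow_const 2))
    (by simp [HH]) (by simp)
  have iet : Integrable (fun x => et (S.θ x T)) := by
    refine ((iθ T h.mT).const_mul 400).mono' ?_ (Eventually.of_forall fun x => ?_)
    · exact (cont_et.measurable.comp (h.mθ.comp
        (measurable_id.prodMk measurable_const))).aestronglyMeasurable
    · rw [Real.norm_of_nonneg (et_nonneg _)]
      exact et_le_HH hε hε1 (h.θpos x T h.mT).le
  refine ⟨iet, ?_⟩
  have bT1 : (∫ x, et (S.θ x T)) ≤ 400 * ∫ x, HH ε (S.θ x T) := by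
    rw [← integral_const_mul]
    exact integral_mono iet ((iθ T h.mT).const_mul 400) fun x =>
      et_le_HH hε hε1 (h.θpos x T h.mT).le
  have bT2 : 0 ≤ ∫ x, (S.v x T - 1 - Real.log (S.v x T)) := integral_nonneg fun x => by
    have := Real.log_le_sub_one_of_pos (h.vpos x T h.mT)
    simp only [Pi.zero_apply]; linarith
  obtain ⟨Bv, hBv⟩ := h.sv
  obtain ⟨Bθ, hBθ⟩ := h.sθ
  have b01 : (∫ x, (S.v x 0 - 1 - Real.log (S.v x 0))) ≤ P.K * P.M ^ 2 := by
    refine le_trans ?_ (mul_le_mul_of_nonneg_left hI.v0 hK.le)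
    rw [← integral_const_mul]
    refine integral_mono (iv 0 h.m0) ((hBv 0 h.m0).1.integrable_sq.const_mul _) fun x => ?_
    have h1 := Real.one_sub_inv_le_log_of_pos (h.vpos x 0 h.m0)
    have h2 := h.ihi x 0 h.m0
    have h3 := h.vpos x 0 h.m0
    calc S.v x 0 - 1 - Real.log (S.v x 0) ≤ S.v x 0 - 1 - (1 - (S.v x 0)⁻¹) := by gcongr
      _ = S.i x 0 * (S.v x 0 - 1) ^ 2 := by simp only [Fns.i]; field_simp
      _ ≤ P.K * (S.v x 0 - 1) ^ 2 := by gcongr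
  have b02 : (∫ x, HH ε (S.θ x 0)) ≤ P.m⁻¹ * P.M ^ 2 := by
    refine le_trans ?_ (mul_le_mul_of_nonneg_left hI.θ0 (inv_nonneg.2 hm.le))
    rw [← integral_const_mul]
    refine integral_mono (iθ 0 h.m0) ((hBθ 0 h.m0).1.integrable_sq.const_mul _) fun x => ?_
    have h3 := h.θpos x 0 h.m0
    have h4 := hI.θlo x
    calc HH ε (S.θ x 0) ≤ (S.θ x 0 - 1) ^ 2 / (S.θ x 0 + ε) := HH_le hε h3.le
      _ ≤ (S.θ x 0 - 1) ^ 2 / P.m := by gcongr; linarith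
      _ = P.m⁻¹ * (S.θ x 0 - 1) ^ 2 := by ring
  have b03 := hI.u0
  have e1 := (h.itg_d1 hε)
  have e2 := (h.itg_d2 hε)
  have i1 : Itg T (fun x t => 1 * S.ux x t * S.st P x t) := (h.lux.cmul 1).mul h.lst
  have i2 := lv1.mul h.lux
  have i3 := (h.lθx.bmul bθ2).mul (h.lq.cmul P.cv⁻¹)
  have i4 := lθ1.mul (h.lpw.cmul P.cv⁻¹)
  have i5 : Itg T (fun x t => P.R * ε * ((S.θ x t - 1) * S.ux x t) * S.i x t
      / (S.θ x t + ε)) := by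
    refine (Itg.cmul (P.R * P.K) (h.lθ.mul h.lux)).mono ?_ 1 fun x t ht => ?_
    · exact ((((((h.mθ.sub measurable_const).mul h.mux).const_mul _).mul h.mi).div
        (h.mθ.add measurable_const)))
    have hθ := h.θpos x t ht
    have h1 : P.R * ε * ((S.θ x t - 1) * S.ux x t) * S.i x t / (S.θ x t + ε)
        = (ε / (S.θ x t + ε) * (S.i x t * P.R)) * ((S.θ x t - 1) * S.ux x t) := by ring
    rw [h1, one_mul, abs_mul, abs_mul (P.R * P.K)]
    refine mul_le_mul_of_nonneg_right ?_ (abs_nonneg _)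
    have hi := h.ipos x t ht
    rw [abs_of_nonneg (by positivity), abs_of_nonneg (by positivity)]
    have e1 : ε / (S.θ x t + ε) ≤ 1 := by rw [div_le_one (by positivity)]; linarith
    calc ε / (S.θ x t + ε) * (S.i x t * P.R) ≤ 1 * (P.K * P.R) := by
          have := h.ihi x t ht
          gcongr
      _ = _ := by ring
  have key := II_le5 1 (-P.R) P.cv (-P.cv) 1
    ((e1.cmul (P.μ / P.K)).add (e2.cmul (P.κ / P.K))) i1 i2 i3 i4 i5 (fun x t ht => by
      have hθ := h.θpos x t ht
      have hi := h.ipos x t ht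
      have hil := h.ilo x t ht
      have heq : 1 * (1 * S.ux x t * S.st P x t) + -P.R * ((1 - (S.v x t)⁻¹) * S.ux x t)
          + P.cv * ((1 + ε) / (S.θ x t + ε) ^ 2 * S.θx x t * (P.cv⁻¹ * S.q P x t))
          + -P.cv * ((S.θ x t - 1) / (S.θ x t + ε) * (P.cv⁻¹ * S.pw P x t))
          + 1 * (P.R * ε * ((S.θ x t - 1) * S.ux x t) * S.i x t / (S.θ x t + ε))
          = P.μ * S.i x t * (1 + ε) * (S.ux x t ^ 2 / (S.θ x t + ε))
            + P.κ * S.i x t * (1 + ε) * (S.θx x t ^ 2 / (S.θ x t + ε) ^ 2) := by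
        have : (S.v x t)⁻¹ = S.i x t := rfl
        rw [this]
        simp only [Fns.st, Fns.q, Fns.pw]
        have : S.θ x t + ε ≠ 0 := by positivity
        field_simp
        ring
      refine le_trans ?_ heq.ge
      have c1 : P.μ / P.K ≤ P.μ * S.i x t * (1 + ε) := by
        rw [div_eq_mul_inv]
        have : P.μ * P.K⁻¹ ≤ P.μ * S.i x t := by gcongr
        nlinarith [mul_pos hμ hi]
      have c2 : P.κ / P.K ≤ P.κ * S.i x t * (1 + ε) := by
        rw [div_eq_mul_inv]
        have : P.κ * P.K⁻¹ ≤ P.κ * S.i x t := by gcongr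
        nlinarith [mul_pos hκ hi]
      gcongr)
  rw [II_add (e1.cmul _) (e2.cmul _), II_cmul, II_cmul] at key
  have z1 : II T (fun x t => S.u x t * (fun _ _ => (0 : ℝ)) x t) = 0 := by
    simp [II, unc]
  have z2 : II T (fun x t => (S.v x t ^ 2)⁻¹ * S.vx x t * (fun _ _ => (0 : ℝ)) x t) = 0 := by
    simp [II, unc]
  rw [z1] at eu
  rw [z2] at ev
  simp only [integral_div] at eu
  set t1 := II T (fun x t => 1 * S.ux x t * S.st P x t)
  set t2 := II T (fun x t => (1 - (S.v x t)⁻¹) * S.ux x t)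
  set t3 := II T (fun x t => (1 + ε) / (S.θ x t + ε) ^ 2 * S.θx x t * (P.cv⁻¹ * S.q P x t))
  set t4 := II T (fun x t => (S.θ x t - 1) / (S.θ x t + ε) * (P.cv⁻¹ * S.pw P x t))
  have f1 := mul_le_mul_of_nonneg_left bT1 hcv.le
  have f2 := mul_nonneg hR.le bT2
  have f3 := mul_le_mul_of_nonneg_left b01 hR.le
  have f4 := mul_le_mul_of_nonneg_left b02 hcv.le
  have f5 := congrArg (fun z => P.R * z) ev
  have f6 := congrArg (fun z => P.cv * z) eθ
  simp only [mul_sub, mul_add, mul_neg, mul_zero] at f5 f6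
  linarith

end Reg

/-- The entropy estimate: bounds at the final time and arbitrarily fine regularized
dissipation bounds. -/
lemma entropy (P : Par) : ∃ A : ℝ, 0 < A ∧ ∀ S T, Reg P S T → Ini P S →
    (∫ x, S.u x T ^ 2 ≤ A) ∧ Integrable (fun x => et (S.θ x T)) ∧ (∫ x, et (S.θ x T) ≤ A) ∧
    ∀ δ > 0, ∃ ε, 0 < ε ∧ ε ≤ δ ∧ ε ≤ 1 ∧
      II T (fun x t => S.ux x t ^ 2 / (S.θ x t + ε)) ≤ A ∧
      II T (fun x t => S.θx x t ^ 2 / (S.θ x t + ε) ^ 2) ≤ A := by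
  have hR := P.hR
  have hK := P.Kpos
  have hcv := P.hcv
  have hμ := P.hμ
  have hκ := P.hκ
  have hm := P.hm
  set B := (P.M ^ 2 / 2 + P.R * (P.K * P.M ^ 2) + P.cv * (P.m⁻¹ * P.M ^ 2)) + 1 with hB
  have hB0 : 0 < B := by positivity
  refine ⟨2 * B + B * (400 / P.cv) + B * (P.K / P.μ) + B * (P.K / P.κ), by positivity, ?_⟩
  intro S T h hI
  have main : ∀ δ > 0, ∃ ε, 0 < ε ∧ ε ≤ δ ∧ ε ≤ 1 ∧ (∫ x, S.u x T ^ 2) / 2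
      + P.cv / 400 * (∫ x, et (S.θ x T))
      + P.μ / P.K * II T (fun x t => S.ux x t ^ 2 / (S.θ x t + ε))
      + P.κ / P.K * II T (fun x t => S.θx x t ^ 2 / (S.θ x t + ε) ^ 2) ≤ B ∧
      Integrable (fun x => et (S.θ x T)) := by
    intro δ hδ
    have hδ1 : 0 < min δ 1 := lt_min hδ one_pos
    have ev := (h.err_tendsto hδ1).eventually (gt_mem_nhds one_pos)
    obtain ⟨n, hn⟩ := ev.exists
    have hle : min δ 1 / ((n : ℝ) + 1) ≤ min δ 1 :=
      div_le_self hδ1.le (by linarith [n.cast_nonneg (α := ℝ)])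
    have hp : 0 < min δ 1 / ((n : ℝ) + 1) := by positivity
    refine ⟨min δ 1 / (n + 1), hp, hle.trans (min_le_left _ _), hle.trans (min_le_right _ _), ?_⟩
    have := h.entropy_eps hI hp (hle.trans (min_le_right _ _))
    exact ⟨this.2.trans (by rw [hB]; linarith), this.1⟩
  have nn : ∀ ε, 0 < ε → 0 ≤ II T (fun x t => S.ux x t ^ 2 / (S.θ x t + ε)) ∧
      0 ≤ II T (fun x t => S.θx x t ^ 2 / (S.θ x t + ε) ^ 2) := fun ε hε =>
    ⟨II_nonneg fun x t ht => by have := h.θpos x t ht; positivity,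
      II_nonneg fun x t ht => by have := h.θpos x t ht; positivity⟩
  have n1 : 0 ≤ ∫ x, S.u x T ^ 2 := integral_nonneg fun x => sq_nonneg _
  have n2 : 0 ≤ ∫ x, et (S.θ x T) := integral_nonneg fun x => et_nonneg _
  have p1 : 0 < B * (400 / P.cv) := by positivity
  have p2 : 0 < B * (P.K / P.μ) := by positivity
  have p3 : 0 < B * (P.K / P.κ) := by positivity
  have bound : ∀ ε, 0 < ε → (∫ x, S.u x T ^ 2) / 2 + P.cv / 400 * (∫ x, et (S.θ x T))
      + P.μ / P.K * II T (fun x t => S.ux x t ^ 2 / (S.θ x t + ε))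
      + P.κ / P.K * II T (fun x t => S.θx x t ^ 2 / (S.θ x t + ε) ^ 2) ≤ B →
      (∫ x, S.u x T ^ 2) ≤ 2 * B ∧ (∫ x, et (S.θ x T)) ≤ B * (400 / P.cv) ∧
      II T (fun x t => S.ux x t ^ 2 / (S.θ x t + ε)) ≤ B * (P.K / P.μ) ∧
      II T (fun x t => S.θx x t ^ 2 / (S.θ x t + ε) ^ 2) ≤ B * (P.K / P.κ) := by
    intro ε hε hb
    obtain ⟨n3, n4⟩ := nn ε hε
    set I1 := II T (fun x t => S.ux x t ^ 2 / (S.θ x t + ε))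
    set I2 := II T (fun x t => S.θx x t ^ 2 / (S.θ x t + ε) ^ 2)
    set I3 := ∫ x, et (S.θ x T)
    have m1 : 0 ≤ P.cv / 400 * I3 := by positivity
    have m2 : 0 ≤ P.μ / P.K * I1 := by positivity
    have m3 : 0 ≤ P.κ / P.K * I2 := by positivity
    refine ⟨by linarith, ?_, ?_, ?_⟩
    · rw [← mul_div_assoc, le_div_iff₀ hcv]; linarith
    · have : P.μ / P.K * I1 ≤ B := by linarith
      rw [div_mul_eq_mul_div, div_le_iff₀ hK] at this
      rw [← mul_div_assoc, le_div_iff₀ hμ]; linarith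
    · have : P.κ / P.K * I2 ≤ B := by linarith
      rw [div_mul_eq_mul_div, div_le_iff₀ hK] at this
      rw [← mul_div_assoc, le_div_iff₀ hκ]; linarith
  obtain ⟨ε, hε, -, -, hb, iet⟩ := main 1 one_pos
  obtain ⟨q1, q2, -, -⟩ := bound ε hε hb
  refine ⟨by linarith, iet, by linarith, fun δ hδ => ?_⟩
  obtain ⟨ε, hε, h1, h2, hb, -⟩ := main δ hδ
  obtain ⟨-, -, q3, q4⟩ := bound ε hε hb
  exact ⟨ε, hε, h1, h2, by linarith, by linarith⟩

/-- The entropy bounds hold on every time slice; moreover the dissipation with weight `1 + θ`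
is bounded. -/
lemma entropy_slices (P : Par) : ∃ A : ℝ, 0 < A ∧ ∀ S T, Reg P S T → Ini P S →
    (∀ t ∈ Icc 0 T, ∫ x, S.u x t ^ 2 ≤ A) ∧
    (∀ t ∈ Icc 0 T, Integrable (fun x => et (S.θ x t)) ∧ ∫ x, et (S.θ x t) ≤ A) ∧
    II T (fun x t => S.ux x t ^ 2 / (S.θ x t + 1)) ≤ A ∧
    II T (fun x t => S.θx x t ^ 2 / (S.θ x t + 1) ^ 2) ≤ A ∧
    ∀ δ > 0, ∃ ε, 0 < ε ∧ ε ≤ δ ∧ ε ≤ 1 ∧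
      II T (fun x t => S.θx x t ^ 2 / (S.θ x t + ε) ^ 2) ≤ A := by
  obtain ⟨A, hA, hE⟩ := entropy P
  have hM := P.hM
  refine ⟨A + 2 * P.M ^ 2, by positivity, fun S T h hI => ?_⟩
  have hM2 : 0 ≤ P.M ^ 2 := by positivity
  have z : (∫ x, S.u x 0 ^ 2 ≤ P.M ^ 2) ∧ Integrable (fun x => et (S.θ x 0)) ∧
      ∫ x, et (S.θ x 0) ≤ 2 * P.M ^ 2 := by
    obtain ⟨B, hB⟩ := h.sθ
    have i1 := (hB 0 h.m0).1.integrable_sq.const_mul 2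
    have i2 : Integrable (fun x => et (S.θ x 0)) := by
      refine i1.mono' ?_ (Eventually.of_forall fun x => ?_)
      · exact (cont_et.measurable.comp (h.mθ.comp
          (measurable_id.prodMk measurable_const))).aestronglyMeasurable
      · rw [Real.norm_of_nonneg (et_nonneg _)]; exact et_le _
    refine ⟨hI.u0, i2, ?_⟩
    refine (integral_mono i2 i1 fun x => et_le _).trans ?_
    rw [integral_const_mul]
    linarith [hI.θ0]
  have sl : ∀ t ∈ Icc 0 T, (∫ x, S.u x t ^ 2 ≤ A + 2 * P.M ^ 2) ∧
      Integrable (fun x => et (S.θ x t)) ∧ ∫ x, et (S.θ x t) ≤ A + 2 * P.M ^ 2 := by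
    intro t ht
    rcases eq_or_lt_of_le ht.1 with h0 | h0
    · subst h0
      exact ⟨by linarith [z.1], z.2.1, by linarith [z.2.2]⟩
    · obtain ⟨a, b, c, -⟩ := hE S t (h.restrict h0 ht.2) hI
      exact ⟨by linarith, b, by linarith⟩
  obtain ⟨-, -, -, hd⟩ := hE S T h hI
  obtain ⟨ε, hε, -, h1, q1, q2⟩ := hd 1 one_pos
  refine ⟨fun t ht => (sl t ht).1, fun t ht => (sl t ht).2, ?_, ?_, fun δ hδ => ?_⟩
  · refine (II_mono (h.itg_d1 one_pos) (h.itg_d1 hε) fun x t ht => ?_).trans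
      (q1.trans (by linarith))
    have := h.θpos x t ht
    gcongr
  · refine (II_mono (h.itg_d2 one_pos) (h.itg_d2 hε) fun x t ht => ?_).trans
      (q2.trans (by linarith))
    have := h.θpos x t ht
    gcongr
  · obtain ⟨ε, hε, h1, h2, -, q⟩ := hd δ hδ
    exact ⟨ε, hε, h1, h2, by linarith⟩

end NSEst

namespace NSEst

/-! ### Pointwise consequences of the entropy bounds -/

/-- Truncated temperature. -/
noncomputable def rho (s : ℝ) : ℝ := pp (s - 2)
/-- Truncated velocity. -/
noncomputable def rr (s : ℝ) : ℝ := pp (2 * s - 1) + pp (-2 * s - 1)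
/-- The derivative of `rr`. -/
noncomputable def drr (s : ℝ) : ℝ := 2 * dp (2 * s - 1) - 2 * dp (-2 * s - 1)

lemma rho_deriv (s : ℝ) : HasDerivAt rho (dp (s - 2)) s := by
  refine ((pp_deriv (s - 2)).comp s ((hasDerivAt_id s).sub_const 2)).congr_deriv ?_
  ring

lemma rr_deriv (s : ℝ) : HasDerivAt rr (drr s) s := by
  have h1 := (pp_deriv (2 * s - 1)).comp s (((hasDerivAt_id s).const_mul 2).sub_const 1)
  have h2 := (pp_deriv (-2 * s - 1)).comp s (((hasDerivAt_id s).const_mul (-2)).sub_const 1)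
  refine (h1.add h2).congr_deriv ?_
  simp only [drr]; ring

lemma cont_rho : Continuous rho := continuous_iff_continuousAt.2 fun s => (rho_deriv s).continuousAt
lemma cont_rr : Continuous rr := continuous_iff_continuousAt.2 fun s => (rr_deriv s).continuousAt

lemma rr_ge {s : ℝ} (h : 1 ≤ s ^ 2) : s ^ 2 ≤ 4 * rr s ^ 2 := by
  have aux : ∀ y : ℝ, 1 ≤ y → y / 2 ≤ pp (2 * y - 1) := fun y hy => by
    rw [pp_pos (by linarith), le_div_iff₀ (by linarith)]; nlinarith
  rcases le_total 0 s with h0 | h0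
  · have h1 : 1 ≤ s := by nlinarith
    have := aux s h1
    have h2 := pp_nonneg (-2 * s - 1)
    have : s / 2 ≤ rr s := by unfold rr; linarith
    nlinarith
  · have h1 : 1 ≤ -s := by nlinarith
    have h3 := aux (-s) h1
    rw [show 2 * (-s) - 1 = -2 * s - 1 by ring] at h3
    have h2 := pp_nonneg (2 * s - 1)
    have : -s / 2 ≤ rr s := by unfold rr; linarith
    nlinarith

lemma rho_ge {s : ℝ} (h : 4 ≤ s) : s ^ 2 ≤ 16 * rho s ^ 2 := by
  have : s / 4 ≤ rho s := by
    rw [rho, pp_pos (by linarith), le_div_iff₀ (by linarith)]; nlinarith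
  nlinarith

lemma drr_le (s : ℝ) {y : ℝ} (hy : 0 < y) : drr s ^ 2 * (y + 1) ≤ 48 * s ^ 2 + 4 * et y := by
  have h3 : y + 1 ≤ 3 + et y := by
    rcases le_total y 2 with h | h
    · linarith [et_nonneg y]
    · linarith [et_ge h]
  have a1 := dp_nonneg (2 * s - 1)
  have a2 := dp_le (2 * s - 1)
  have b1 := dp_nonneg (-2 * s - 1)
  have b2 := dp_le (-2 * s - 1)
  have h4 : drr s ^ 2 ≤ 4 := by
    unfold drr
    have : |dp (2 * s - 1) - dp (-2 * s - 1)| ≤ 1 := abs_le.2 ⟨by linarith, by linarith⟩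
    have := sq_le_one_iff_abs_le_one _ |>.2 this
    nlinarith
  by_cases hs : s ^ 2 ≤ 1 / 4
  · have hs' := abs_le_of_sq_le_sq' (a := s) (b := 1 / 2) (by nlinarith) (by norm_num)
    have : drr s = 0 := by
      unfold drr; rw [dp_zero (by linarith [hs'.2]), dp_zero (by linarith [hs'.1])]; ring
    rw [this]
    have := et_nonneg y
    nlinarith [sq_nonneg s]
  · push Not at hs
    nlinarith

/-- The second derivative of `Pp (s² - 1)`. -/
noncomputable def psi2 (s : ℝ) : ℝ := 2 * pp (s ^ 2 - 1) + 4 * s ^ 2 * dp (s ^ 2 - 1)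

lemma cont_psi2 : Continuous psi2 := by
  unfold psi2
  exact ((cont_pp.comp (by fun_prop)).const_mul 2).add
    ((by fun_prop : Continuous fun s : ℝ => 4 * s ^ 2).mul (cont_dp.comp (by fun_prop)))

lemma psi2_nonneg (s : ℝ) : 0 ≤ psi2 s := by
  have h1 := pp_nonneg (s ^ 2 - 1)
  have h2 := dp_nonneg (s ^ 2 - 1)
  unfold psi2; positivity

lemma psi2_ge (s : ℝ) : s ^ 2 ≤ psi2 s + 4 := by
  by_cases h : s ^ 2 ≤ 4
  · linarith [psi2_nonneg s]
  · push Not at h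
    have h1 := pp_nonneg (s ^ 2 - 1)
    have h2 := dp_ge (s := s ^ 2 - 1) (by linarith)
    unfold psi2; nlinarith

lemma psi2_le (s : ℝ) : psi2 s ≤ 6 * s ^ 2 := by
  have h1 := pp_le (s ^ 2 - 1)
  have h2 := dp_le (s ^ 2 - 1)
  have h3 : max (s ^ 2 - 1) 0 ≤ s ^ 2 := max_le (by linarith) (sq_nonneg s)
  unfold psi2; nlinarith [sq_nonneg s]

lemma psi2_le' (s : ℝ) : psi2 s ≤ 24 * (s ^ 2 * rr s ^ 2) := by
  by_cases h : s ^ 2 ≤ 1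
  · have : psi2 s = 0 := by
      unfold psi2; rw [pp_zero (by linarith), dp_zero (by linarith)]; ring
    rw [this]; positivity
  · push Not at h
    have h1 := rr_ge h.le
    have h2 := psi2_le s
    nlinarith

lemma psi2_θ (s : ℝ) {y : ℝ} (hy : 0 < y) :
    psi2 s * y ^ 2 ≤ 384 * (s ^ 2 * rr s ^ 2) + 96 * (s ^ 2 * rho y ^ 2) := by
  have h0 := psi2_nonneg s
  have n1 : 0 ≤ s ^ 2 * rr s ^ 2 := by positivity
  have n2 : 0 ≤ s ^ 2 * rho y ^ 2 := by positivity
  rcases le_total y 4 with h | h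
  · have h1 := psi2_le' s
    have : y ^ 2 ≤ 16 := by nlinarith
    nlinarith
  · have h1 := psi2_le s
    have h2 := rho_ge h
    calc psi2 s * y ^ 2 ≤ (6 * s ^ 2) * (16 * rho y ^ 2) := by gcongr
      _ ≤ _ := by nlinarith

lemma Psi_deriv (s : ℝ) : HasDerivAt (fun s => Pp (s ^ 2 - 1)) (2 * s * pp (s ^ 2 - 1)) s := by
  have := (Pp_deriv (s ^ 2 - 1)).comp s ((hasDerivAt_pow 2 s).sub_const 1)
  refine this.congr_deriv ?_
  norm_num; ring

lemma Psi_deriv2 (s : ℝ) : HasDerivAt (fun s => 2 * s * pp (s ^ 2 - 1)) (psi2 s) s := by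
  have h1 := (pp_deriv (s ^ 2 - 1)).comp s ((hasDerivAt_pow 2 s).sub_const 1)
  have := ((hasDerivAt_id s).const_mul 2).mul h1
  refine this.congr_deriv ?_
  simp only [psi2, id, Function.comp]
  norm_num; ring

/-- The variant of `sup2` for a factorization of `f'²` into integrable factors. -/
lemma sup3 {f f' p q : ℝ → ℝ} (hd : ∀ x, HasDerivAt f (f' x) x)
    (h0 : Tendsto f atBot (nhds 0)) (ip : Integrable p) (iq : Integrable q)
    (np : ∀ y, 0 ≤ p y) (nq : ∀ y, 0 ≤ q y) (mp : Measurable p) (mq : Measurable q)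
    (hf' : ∀ y, f' y ^ 2 ≤ p y * q y) (mf : Measurable f') (x : ℝ) :
    f x ^ 2 ≤ (∫ y, p y) * ∫ y, q y := by
  have e1 : ∀ y, Real.sqrt (p y) ^ 2 = p y := fun y => Real.sq_sqrt (np y)
  have e2 : ∀ y, Real.sqrt (q y) ^ 2 = q y := fun y => Real.sq_sqrt (nq y)
  have m1 : MemLp (fun y => Real.sqrt (p y)) 2 volume :=
    (memLp_two_iff_integrable_sq mp.sqrt.aestronglyMeasurable).2 (by simpa only [e1] using ip)
  have m2 : MemLp (fun y => Real.sqrt (q y)) 2 volume :=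
    (memLp_two_iff_integrable_sq mq.sqrt.aestronglyMeasurable).2 (by simpa only [e2] using iq)
  have := sup2 hd h0 m1 m2 (fun y => ?_) mf x
  · simpa only [e1, e2] using this
  · rw [abs_of_nonneg (mul_nonneg (Real.sqrt_nonneg (p y)) (Real.sqrt_nonneg (q y))),
      ← Real.sqrt_mul (np y)]
    exact Real.abs_le_sqrt (hf' y)

/-- A space-time integral of `w` times a function of time that is bounded by spatial integrals
of `G`, when the spatial integrals of `w` are bounded. -/
lemma II_weight {T A c : ℝ} {f w G : ℝ → ℝ → ℝ} (hf : Itg T f) (hG : Itg T G)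
    (nG : ∀ x, ∀ t ∈ Icc 0 T, 0 ≤ G x t)
    (iw : ∀ t ∈ Icc 0 T, Integrable (fun x => w x t) ∧ ∫ x, w x t ≤ A) (hc : 0 ≤ c)
    (hle : ∀ x, ∀ t ∈ Icc 0 T, f x t ≤ w x t * (c * ∫ y, G y t)) :
    II T f ≤ A * (c * II T G) := by
  rw [← mul_assoc, ← II_cmul]
  refine II_le_of_slice hf (hG.cmul (A * c)) ?_
  filter_upwards [hf.slice, ae_restrict_mem measurableSet_Icc] with t h1 ht
  rw [integral_const_mul, mul_assoc]
  have h2 : 0 ≤ c * ∫ y, G y t := mul_nonneg hc (integral_nonneg fun y => nG y t ht)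
  calc ∫ x, f x t ≤ ∫ x, w x t * (c * ∫ y, G y t) :=
        integral_mono h1 ((iw t ht).1.mul_const _) fun x => hle x t ht
    _ = (∫ x, w x t) * (c * ∫ y, G y t) := integral_mul_const _ _
    _ ≤ A * (c * ∫ y, G y t) := mul_le_mul_of_nonneg_right (iw t ht).2 h2

/-- The bounds provided by the entropy estimate, with constant `A`. -/
structure Ent (A : ℝ) (S : Fns) (T : ℝ) : Prop where
  su : ∀ t ∈ Icc 0 T, ∫ x, S.u x t ^ 2 ≤ A
  se : ∀ t ∈ Icc 0 T, Integrable (fun x => et (S.θ x t)) ∧ ∫ x, et (S.θ x t) ≤ A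
  d1 : II T (fun x t => S.ux x t ^ 2 / (S.θ x t + 1)) ≤ A
  d2 : II T (fun x t => S.θx x t ^ 2 / (S.θ x t + 1) ^ 2) ≤ A

/-- The dissipation density controlling the supremum of the truncated temperature. -/
noncomputable def Fns.jj (S : Fns) (x t : ℝ) : ℝ := dp (S.θ x t - 2) * S.θx x t ^ 2 / S.θ x t

lemma meas_sl {f : ℝ → ℝ → ℝ} (hf : Measurable (unc f)) (t : ℝ) : Measurable (fun x => f x t) :=
  hf.comp (measurable_id.prodMk measurable_const)

namespace Reg
variable {P : Par} {S : Fns} {T A : ℝ}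

lemma mjj (h : Reg P S T) : Measurable (unc S.jj) :=
  ((cont_dp.measurable.comp (h.mθ.sub measurable_const)).mul (h.mθx.pow_const 2)).div h.mθ

lemma jj_nonneg (h : Reg P S T) : ∀ x, ∀ t ∈ Icc 0 T, 0 ≤ S.jj x t := fun x t ht => by
  have h1 := h.θpos x t ht
  have h2 := dp_nonneg (S.θ x t - 2)
  unfold Fns.jj; positivity

lemma jj_le (h : Reg P S T) : ∀ x, ∀ t ∈ Icc 0 T, S.jj x t ≤ S.θx x t ^ 2 := fun x t ht => by
  have h1 := h.θpos x t ht
  have h2 := dp_nonneg (S.θ x t - 2)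
  have h3 := dp_le (S.θ x t - 2)
  unfold Fns.jj
  rcases le_total (S.θ x t) 2 with h4 | h4
  · rw [dp_zero (by linarith)]; simp; positivity
  · rw [div_le_iff₀ h1]
    nlinarith [sq_nonneg (S.θx x t), mul_nonneg (sq_nonneg (S.θx x t)) (sub_nonneg.2 h3),
      mul_nonneg (sq_nonneg (S.θx x t)) (sub_nonneg.2 h4)]

lemma itg_jj (h : Reg P S T) : Itg T S.jj := h.lθx.sq.mono h.mjj 1 fun x t ht => by
  rw [one_mul, abs_of_nonneg (h.jj_nonneg x t ht), abs_of_nonneg (sq_nonneg _)]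
  exact h.jj_le x t ht

lemma jj_slice (h : Reg P S T) : ∀ t ∈ Icc 0 T, Integrable (fun x => S.jj x t) := fun t ht => by
  obtain ⟨B, hB⟩ := h.sθx
  refine (hB t ht).1.integrable_sq.mono' (meas_sl h.mjj t).aestronglyMeasurable
    (Eventually.of_forall fun x => ?_)
  rw [Real.norm_of_nonneg (h.jj_nonneg x t ht)]
  exact h.jj_le x t ht

/-- The supremum in space of the truncated temperature, from Cauchy–Schwarz and the bound on
`∫ et θ`. -/
lemma rho_sup (h : Reg P S T) (e : Ent A S T) : ∀ x, ∀ t ∈ Icc 0 T,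
    rho (S.θ x t) ^ 2 ≤ A * ∫ y, S.jj y t := by
  intro x t ht
  have := sup3 (f := fun y => rho (S.θ y t)) (f' := fun y => dp (S.θ y t - 2) * S.θx y t)
    (p := fun y => et (S.θ y t)) (q := fun y => S.jj y t)
    (fun y => (rho_deriv _).comp y (h.dxθ t ht y)) (by
      have := (cont_rho.tendsto 1).comp (h.fθ t ht)
      rwa [rho, pp_zero (by norm_num)] at this) (e.se t ht).1 (h.jj_slice t ht)
    (fun y => et_nonneg _) (fun y => h.jj_nonneg y t ht)
    (cont_et.measurable.comp (meas_sl h.mθ t)) (meas_sl h.mjj t) (fun y => by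
      have h1 := h.θpos y t ht
      have h2 := dp_nonneg (S.θ y t - 2)
      have h3 := dp_le (S.θ y t - 2)
      rcases le_total (S.θ y t) 2 with h4 | h4
      · simp only [Fns.jj]
        rw [dp_zero (by linarith)]; simp
      · have h5 := et_ge h4
        calc (dp (S.θ y t - 2) * S.θx y t) ^ 2
            = dp (S.θ y t - 2) * (dp (S.θ y t - 2) * S.θx y t ^ 2) := by ring
          _ ≤ 1 * (dp (S.θ y t - 2) * S.θx y t ^ 2) := by gcongr
          _ = S.θ y t * S.jj y t := by unfold Fns.jj; field_simp
          _ ≤ et (S.θ y t) * S.jj y t :=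
            mul_le_mul_of_nonneg_right h5 (h.jj_nonneg y t ht))
    ((cont_dp.measurable.comp ((meas_sl h.mθ t).sub measurable_const)).mul (meas_sl h.mθx t)) x
  exact this.trans (mul_le_mul_of_nonneg_right (e.se t ht).2
    (integral_nonneg fun y => h.jj_nonneg y t ht))

/-- The supremum in space of the truncated velocity, controlled by the viscous entropy
dissipation. -/
lemma rr_sup (h : Reg P S T) (e : Ent A S T) : ∀ x, ∀ t ∈ Icc 0 T,
    rr (S.u x t) ^ 2 ≤ 52 * A * ∫ y, S.ux y t ^ 2 / (S.θ y t + 1) := by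
  intro x t ht
  obtain ⟨B, hB⟩ := h.sux
  obtain ⟨B', hB'⟩ := h.su
  have m1 : Measurable (fun y => S.ux y t ^ 2 / (S.θ y t + 1)) :=
    ((meas_sl h.mux t).pow_const 2).div ((meas_sl h.mθ t).add measurable_const)
  have n1 : ∀ y, 0 ≤ S.ux y t ^ 2 / (S.θ y t + 1) := fun y => by
    have := h.θpos y t ht; positivity
  have i1 : Integrable (fun y => S.ux y t ^ 2 / (S.θ y t + 1)) := by
    refine (hB t ht).1.integrable_sq.mono' m1.aestronglyMeasurable
      (Eventually.of_forall fun y => ?_)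
    rw [Real.norm_of_nonneg (n1 y)]
    exact div_le_self (sq_nonneg _) (by linarith [h.θpos y t ht])
  have i2 := (hB' t ht).1.integrable_sq.const_mul 48
  have i3 := (e.se t ht).1.const_mul 4
  have := sup3 (f := fun y => rr (S.u y t)) (f' := fun y => drr (S.u y t) * S.ux y t)
    (p := fun y => 48 * S.u y t ^ 2 + 4 * et (S.θ y t))
    (q := fun y => S.ux y t ^ 2 / (S.θ y t + 1))
    (fun y => (rr_deriv _).comp y (h.dxu t ht y)) (by
      have := (cont_rr.tendsto 0).comp (h.fu t ht)
      rwa [rr, pp_zero (by norm_num), pp_zero (by norm_num), add_zero] at this)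
    (i2.add i3) i1
    (fun y => add_nonneg (by positivity) (mul_nonneg (by norm_num) (et_nonneg _))) n1
    ((((meas_sl h.mu t).pow_const 2).const_mul _).add
      ((cont_et.measurable.comp (meas_sl h.mθ t)).const_mul _)) m1 (fun y => by
      have h1 := h.θpos y t ht
      have h2 := drr_le (S.u y t) h1
      calc (drr (S.u y t) * S.ux y t) ^ 2
          = (drr (S.u y t) ^ 2 * (S.θ y t + 1)) * (S.ux y t ^ 2 / (S.θ y t + 1)) := by
            field_simp
        _ ≤ _ := mul_le_mul_of_nonneg_right h2 (n1 y))
    (by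
      have : Measurable drr := by
        unfold drr
        exact ((cont_dp.measurable.comp (by fun_prop)).const_mul 2).sub
          ((cont_dp.measurable.comp (by fun_prop)).const_mul 2)
      exact (this.comp (meas_sl h.mu t)).mul (meas_sl h.mux t)) x
  refine this.trans (mul_le_mul_of_nonneg_right ?_ (integral_nonneg n1))
  rw [integral_add i2 i3, integral_const_mul, integral_const_mul]
  linarith [e.su t ht, (e.se t ht).2]

lemma itg_N1 (h : Reg P S T) : Itg T (fun x t => S.u x t ^ 2 * rr (S.u x t) ^ 2) := by
  have hb : BD T (fun x t => rr (S.u x t) ^ 2) := BD.comp (cont_rr.pow 2) h.bdu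
  refine (h.lu.sq.bmul hb).mono ((h.mu.pow_const 2).mul hb.1) 1 fun x t _ => ?_
  rw [one_mul, mul_comm]

lemma itg_N2 (h : Reg P S T) : Itg T (fun x t => S.u x t ^ 2 * rho (S.θ x t) ^ 2) := by
  have hb : BD T (fun x t => rho (S.θ x t) ^ 2) := BD.comp (cont_rho.pow 2) h.bdθ
  refine (h.lu.sq.bmul hb).mono ((h.mu.pow_const 2).mul hb.1) 1 fun x t _ => ?_
  rw [one_mul, mul_comm]

lemma itg_N3 (h : Reg P S T) : Itg T (fun x t => S.θ x t ^ 2 * gg (S.θ x t - 4)) := by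
  refine h.lθ.sq.mono ((h.mθ.pow_const 2).mul
    (cont_gg.measurable.comp (h.mθ.sub measurable_const))) 2 fun x t _ => ?_
  have h1 := gg_nonneg (S.θ x t - 4)
  have h2 := gg_le (S.θ x t - 4)
  rw [abs_of_nonneg (by positivity), abs_of_nonneg (by positivity)]
  rcases le_total (S.θ x t) 4 with h4 | h4
  · rw [gg_zero (by linarith)]; nlinarith [sq_nonneg (S.θ x t - 1)]
  · nlinarith [mul_nonneg (sq_nonneg (S.θ x t)) (sub_nonneg.2 h2)]

/-- Large velocities contribute a bounded amount, since the squared supremum of `rr u` is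
integrable in time. -/
lemma N1_le (h : Reg P S T) (e : Ent A S T) (hA : 0 < A) :
    II T (fun x t => S.u x t ^ 2 * rr (S.u x t) ^ 2) ≤ 52 * A ^ 3 := by
  obtain ⟨B', hB'⟩ := h.su
  have := II_weight (A := A) (c := 52 * A) (w := fun x t => S.u x t ^ 2) h.itg_N1
    (h.itg_d1 one_pos) (fun x t ht => by have := h.θpos x t ht; positivity)
    (fun t ht => ⟨(hB' t ht).1.integrable_sq, e.su t ht⟩) (by positivity)
    (fun x t ht => mul_le_mul_of_nonneg_left (h.rr_sup e x t ht) (sq_nonneg _))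
  refine this.trans ?_
  calc A * (52 * A * II T (fun x t => S.ux x t ^ 2 / (S.θ x t + 1))) ≤ A * (52 * A * A) := by
        have := e.d1
        gcongr
    _ = _ := by ring

lemma N2_le (h : Reg P S T) (e : Ent A S T) (hA : 0 < A) :
    II T (fun x t => S.u x t ^ 2 * rho (S.θ x t) ^ 2) ≤ A ^ 2 * II T S.jj := by
  obtain ⟨B', hB'⟩ := h.su
  have := II_weight (A := A) (c := A) (w := fun x t => S.u x t ^ 2) h.itg_N2
    h.itg_jj h.jj_nonneg
    (fun t ht => ⟨(hB' t ht).1.integrable_sq, e.su t ht⟩) hA.le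
    (fun x t ht => mul_le_mul_of_nonneg_left (h.rho_sup e x t ht) (sq_nonneg _))
  exact this.trans (le_of_eq (by ring))

lemma N3_le (h : Reg P S T) (e : Ent A S T) (hA : 0 < A) :
    II T (fun x t => S.θ x t ^ 2 * gg (S.θ x t - 4)) ≤ 16 * A ^ 2 * II T S.jj := by
  have := II_weight (A := A) (c := 16 * A) (w := fun x t => et (S.θ x t)) h.itg_N3
    h.itg_jj h.jj_nonneg e.se (by positivity)
    (fun x t ht => by
      have h0 := h.rho_sup e x t ht
      have h1 := gg_nonneg (S.θ x t - 4)
      have h2 := gg_le (S.θ x t - 4)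
      have h3 : 0 ≤ ∫ y, S.jj y t := integral_nonneg fun y => h.jj_nonneg y t ht
      rcases le_total (S.θ x t) 4 with h4 | h4
      · rw [gg_zero (by linarith), mul_zero]
        have := et_nonneg (S.θ x t)
        positivity
      · have h5 := rho_ge h4
        have h6 : 1 ≤ et (S.θ x t) := by linarith [et_ge (s := S.θ x t) (by linarith)]
        calc S.θ x t ^ 2 * gg (S.θ x t - 4) ≤ S.θ x t ^ 2 * 1 := by gcongr
          _ ≤ 16 * rho (S.θ x t) ^ 2 := by linarith
          _ ≤ 16 * (A * ∫ y, S.jj y t) := by gcongr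
          _ = 1 * (16 * A * ∫ y, S.jj y t) := by ring
          _ ≤ _ := by gcongr)
  exact this.trans (le_of_eq (by ring))

end Reg

end NSEst

namespace NSEst

/-! ### Space-time bounds for the first derivatives -/

lemma lin {a b J : ℝ} (ha : 0 ≤ a) (hb : 0 ≤ b) (hJ : 0 ≤ J) :
    a + b * J ≤ (a + b + 1) + (a + b + 1) * J := by nlinarith

/-- Coercivity of the viscous work against a nonnegative weight `g`; `a, θ, i` stand for `u_x`,
`θ`, `1 / v`. -/
lemma pt_G {μ R cv K i a θ g : ℝ} (hμ : 0 < μ) (hcv : 0 < cv) (hK : 1 ≤ K) (hi : K⁻¹ ≤ i)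
    (hi' : i ≤ K) (hg : 0 ≤ g) :
    g * a ^ 2 ≤ (2 * K * cv / μ) * (g * (cv⁻¹ * ((μ * (a * i) - R * (θ * i - 1) - R) * a)))
      + (R ^ 2 * K ^ 4 / μ ^ 2) * (θ ^ 2 * g) := by
  have hK0 : 0 < K := by linarith
  have h1 : 1 ≤ K * i := by
    have := mul_le_mul_of_nonneg_left hi hK0.le
    rwa [mul_inv_cancel₀ hK0.ne'] at this
  have h2 : K * i ≤ K ^ 4 := by
    have : K * i ≤ K ^ 2 := by nlinarith
    exact this.trans (pow_le_pow_right₀ hK (by norm_num))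
  have key : a ^ 2 ≤ 2 * (K * i) * (a - R * θ / μ) * a + K ^ 4 * (R * θ / μ) ^ 2 := by
    generalize R * θ / μ = b
    nlinarith [mul_nonneg (sub_nonneg.2 h1) (sq_nonneg a), mul_nonneg (sub_nonneg.2 h2) (sq_nonneg b),
      mul_nonneg (zero_le_one.trans h1) (sq_nonneg (a - b))]
  refine (mul_le_mul_of_nonneg_left key hg).trans (le_of_eq ?_)
  field_simp
  ring

/-- Coercivity of the viscous stress against a nonnegative weight `g`; `a, θ, i` stand for `u_x`,
`θ`, `1 / v`. -/
lemma pt_Psi {μ R K i a θ g : ℝ} (hμ : 0 < μ) (hK : 1 ≤ K) (hi : K⁻¹ ≤ i)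
    (hi' : i ≤ K) (hg : 0 ≤ g) :
    g * a ^ 2 ≤ (2 * K / μ) * (g * a * (μ * (a * i) - R * (θ * i - 1)))
      + (R ^ 2 * K ^ 2 / μ ^ 2) * (2 * K ^ 2 * (g * θ ^ 2) + 2 * g) := by
  have hK0 : 0 < K := by linarith
  have hi0 : 0 < i := lt_of_lt_of_le (inv_pos.2 hK0) hi
  have h1 : 1 ≤ K * i := by
    have := mul_le_mul_of_nonneg_left hi hK0.le
    rwa [mul_inv_cancel₀ hK0.ne'] at this
  have hz : (θ * i - 1) ^ 2 ≤ 2 * K ^ 2 * θ ^ 2 + 2 := by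
    have : i ^ 2 ≤ K ^ 2 := by gcongr
    nlinarith [sq_nonneg (θ * i + 1), mul_nonneg (sub_nonneg.2 this) (sq_nonneg θ)]
  have key : a ^ 2 ≤ 2 * (K * i) * a ^ 2 - 2 * K * a * (R * (θ * i - 1) / μ)
      + K ^ 2 * (R * (θ * i - 1) / μ) ^ 2 := by
    generalize R * (θ * i - 1) / μ = b
    nlinarith [mul_nonneg (sub_nonneg.2 h1) (sq_nonneg a), sq_nonneg (a - K * b)]
  calc g * a ^ 2 ≤ g * (2 * (K * i) * a ^ 2 - 2 * K * a * (R * (θ * i - 1) / μ)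
      + K ^ 2 * (R * (θ * i - 1) / μ) ^ 2) := mul_le_mul_of_nonneg_left key hg
    _ = (2 * K / μ) * (g * a * (μ * (a * i) - R * (θ * i - 1)))
      + (R ^ 2 * K ^ 2 / μ ^ 2) * (g * (θ * i - 1) ^ 2) := by field_simp
    _ ≤ (2 * K / μ) * (g * a * (μ * (a * i) - R * (θ * i - 1)))
      + (R ^ 2 * K ^ 2 / μ ^ 2) * (g * (2 * K ^ 2 * θ ^ 2 + 2)) := by gcongr
    _ = _ := by ring

/-- Coercivity of the energy flux; `a, w, z, i` stand for `θ_x`, `u u_x`, `u θ`, `1 / v`, and `φ`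
is the second derivative of the truncation. -/
lemma pt_E {μ κ R cv K i a w z φ : ℝ} (hμ : 0 < μ) (hκ : 0 < κ) (hcv : 0 < cv) (hK : 1 ≤ K)
    (hi : K⁻¹ ≤ i) (hi' : i ≤ K) (hφ : 0 ≤ φ) (hφ1 : φ ≤ 1) :
    φ * a ^ 2 ≤ (2 * K / (cv * κ)) * (φ * (cv * a + w) * (i * (κ * a + μ * w - R * z))
      + K * ((cv * μ + κ) ^ 2 / (cv * κ) + 1) * w ^ 2
      + K * (cv * R ^ 2 / κ + R ^ 2) * (φ * z ^ 2)) := by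
  have hK0 : 0 < K := by linarith
  have hi0 : 0 < i := lt_of_lt_of_le (inv_pos.2 hK0) hi
  have h1 : cv * κ / 2 * a ^ 2 ≤ (cv * a + w) * (κ * a + μ * w - R * z)
      + ((cv * μ + κ) ^ 2 / (cv * κ) + 1) * w ^ 2 + (cv * R ^ 2 / κ + R ^ 2) * z ^ 2 := by
    have e1 : 0 ≤ (cv * κ) / 4 * (a + 2 * (cv * μ + κ) / (cv * κ) * w) ^ 2 := by positivity
    have e2 : 0 ≤ (cv * κ) / 4 * (a - 2 * R / κ * z) ^ 2 := by positivity
    have e1' : (cv * κ) / 4 * (a + 2 * (cv * μ + κ) / (cv * κ) * w) ^ 2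
      = cv * κ / 4 * a ^ 2 + (cv * μ + κ) * a * w + (cv * μ + κ) ^ 2 / (cv * κ) * w ^ 2 := by
      field_simp; ring
    have e2' : (cv * κ) / 4 * (a - 2 * R / κ * z) ^ 2
      = cv * κ / 4 * a ^ 2 - cv * R * a * z + cv * R ^ 2 / κ * z ^ 2 := by
      field_simp; ring
    nlinarith [sq_nonneg (w - R * z), sq_nonneg (R * z), sq_nonneg w,
      mul_nonneg hμ.le (sq_nonneg w), sq_nonneg (w + R * z)]
  have c1 : 0 ≤ (cv * μ + κ) ^ 2 / (cv * κ) + 1 := by positivity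
  have c2 : 0 ≤ cv * R ^ 2 / κ + R ^ 2 := by positivity
  have h2 : φ * (K⁻¹ * (cv * κ / 2 * a ^ 2)) ≤ φ * (i * (cv * κ / 2 * a ^ 2)) := by gcongr
  have h3 := mul_le_mul_of_nonneg_left h1 (mul_nonneg hφ hi0.le)
  have h4 : φ * i * (((cv * μ + κ) ^ 2 / (cv * κ) + 1) * w ^ 2)
      ≤ 1 * K * (((cv * μ + κ) ^ 2 / (cv * κ) + 1) * w ^ 2) := by gcongr
  have h5 : i * ((cv * R ^ 2 / κ + R ^ 2) * (φ * z ^ 2))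
      ≤ K * ((cv * R ^ 2 / κ + R ^ 2) * (φ * z ^ 2)) := by gcongr
  have h6 : φ * (K⁻¹ * (cv * κ / 2 * a ^ 2)) ≤ φ * (cv * a + w) * (i * (κ * a + μ * w - R * z))
      + K * ((cv * μ + κ) ^ 2 / (cv * κ) + 1) * w ^ 2
      + K * (cv * R ^ 2 / κ + R ^ 2) * (φ * z ^ 2) := by linarith
  have h7 := mul_le_mul_of_nonneg_left h6 (show 0 ≤ 2 * K / (cv * κ) by positivity)
  refine le_trans (le_of_eq ?_) h7
  field_simp

/-- Where the truncated energy is active, either `θ` or `|u|` is large. -/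
lemma pt_z {cv u θ : ℝ} (hcv : 0 < cv) (hθ : 0 < θ) :
    dp (cv * θ + u ^ 2 / 2 - (4 * cv + 1)) * (u * θ) ^ 2
      ≤ 64 * (u ^ 2 * rr u ^ 2) + 16 * (u ^ 2 * rho θ ^ 2) := by
  have h0 := dp_nonneg (cv * θ + u ^ 2 / 2 - (4 * cv + 1))
  have h1 := dp_le (cv * θ + u ^ 2 / 2 - (4 * cv + 1))
  have n1 : 0 ≤ u ^ 2 * rr u ^ 2 := by positivity
  have n2 : 0 ≤ u ^ 2 * rho θ ^ 2 := by positivity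
  have hle : dp (cv * θ + u ^ 2 / 2 - (4 * cv + 1)) * (u * θ) ^ 2 ≤ u ^ 2 * θ ^ 2 := by
    nlinarith [mul_nonneg (sub_nonneg.2 h1) (sq_nonneg (u * θ))]
  rcases le_total θ 4 with h | h
  · rcases le_total (u ^ 2) 1 with h2 | h2
    · rw [dp_zero (by nlinarith)]; linarith
    · have h3 := rr_ge h2
      have : u ^ 2 * θ ^ 2 ≤ u ^ 2 * 16 := by
        have : θ ^ 2 ≤ 16 := by nlinarith
        gcongr
      have : u ^ 2 * 1 ≤ u ^ 2 * (4 * rr u ^ 2) := by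
        refine h3.trans' (le_of_eq (mul_one _)) |>.trans ?_
        have : (4 * rr u ^ 2) ≤ u ^ 2 * (4 * rr u ^ 2) := by nlinarith [sq_nonneg (rr u)]
        exact this
      linarith
  · have h3 := rho_ge h
    have : u ^ 2 * θ ^ 2 ≤ u ^ 2 * (16 * rho θ ^ 2) := by gcongr
    linarith

namespace Reg
variable {P : Par} {S : Fns} {T A : ℝ}

lemma JJ_nonneg (h : Reg P S T) : 0 ≤ II T S.jj := II_nonneg h.jj_nonneg

lemma u0_sq (h : Reg P S T) (hI : Ini P S) (x : ℝ) : S.u x 0 ^ 2 ≤ 2 * P.M ^ 2 := by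
  obtain ⟨B, hB⟩ := h.su
  obtain ⟨B', hB'⟩ := h.sux
  have := sup1 (h.dxu 0 h.m0) (hB 0 h.m0).1 (hB' 0 h.m0).1 one_pos x
  rw [inv_one, one_mul, one_mul] at this
  linarith [hI.u0, hI.ux0]

/-- Testing the temperature equation with a bounded truncation of large temperatures. -/
lemma U_le (h : Reg P S T) (e : Ent A S T) (hA : 0 < A) : II T (fun x t => S.ux x t ^ 2)
    ≤ (6 * A + 4 * (2 * P.K * P.cv / P.μ) * (3 * A + 50 * P.κ * P.K / P.cv * A))
      + (4 * (P.R ^ 2 * P.K ^ 4 / P.μ ^ 2) * (16 * A ^ 2)) * II T S.jj := by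
  have hμ := P.hμ
  have hκ := P.hκ
  have hcv := P.hcv
  have hK := P.Kpos
  obtain ⟨b2, -, l1, i0, eq⟩ := test h.twθ ordConnected_Ici isClosed_Ici
    (mem_Ici.2 zero_le_one : (1 : ℝ) ∈ Ici (0 : ℝ))
    (α := fun s => Gg (s - 4)) (α' := fun s => gg (s - 4)) (α'' := fun s => dg (s - 4))
    (fun s _ => (Gg_deriv (s - 4)).comp_sub_const s 4)
    (fun s _ => (gg_deriv (s - 4)).comp_sub_const s 4)
    (cont_dg.comp (by fun_prop)).continuousOn
    (cont_Gg.comp (by fun_prop)).measurable (cont_gg.comp (by fun_prop)).measurable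
    (cont_dg.comp (by fun_prop)).measurable (Gg_zero (by norm_num)) (gg_zero (by norm_num))
  have ie : ∀ t ∈ Icc 0 T, ∀ x, max (S.θ x t - 4) 0 ≤ et (S.θ x t) := fun t _ x => by
    have h1 := le_max_left (S.θ x t - 3 / 2) 0
    have h2 := le_max_right (S.θ x t - 3 / 2) 0
    unfold et
    exact max_le (by linarith) (by linarith)
  have gT : ∫ x, Gg (S.θ x T - 4) ≤ 2 * A := by
    have := integral_mono (i0 T h.mT) ((e.se T h.mT).1.const_mul 2) fun x =>
      (Gg_le (S.θ x T - 4)).trans (mul_le_mul_of_nonneg_left (ie T h.mT x) (by norm_num))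
    rw [integral_const_mul] at this
    linarith [(e.se T h.mT).2]
  have g0 : - ∫ x, Gg (S.θ x 0 - 4) ≤ A := by
    rw [← integral_neg]
    have := integral_mono (i0 0 h.m0).neg (e.se 0 h.m0).1 fun x => by
      have h1 := Gg_ge (S.θ x 0 - 4)
      have h2 := ie 0 h.m0 x
      show - Gg (S.θ x 0 - 4) ≤ et (S.θ x 0)
      linarith
    exact this.trans (e.se 0 h.m0).2
  have id : Itg T (fun x t => dg (S.θ x t - 4) * S.θx x t * (P.cv⁻¹ * S.q P x t)) :=
    (h.lθx.bmul b2).mul (h.lq.cmul _)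
  have ip := l1.mul (h.lpw.cmul P.cv⁻¹)
  have hd : II T (fun x t => dg (S.θ x t - 4) * S.θx x t * (P.cv⁻¹ * S.q P x t))
      ≤ (50 * P.κ * P.K / P.cv) * A := by
    refine (II_le1 (50 * P.κ * P.K / P.cv) id (h.itg_d2 one_pos) fun x t ht => ?_).trans
      (mul_le_mul_of_nonneg_left e.d2 (by positivity))
    have h1 := h.θpos x t ht
    have h2 := dg_le (S.θ x t - 4)
    have h3 := dg_nonneg (S.θ x t - 4)
    have h4 : dg (S.θ x t - 4) ≤ 50 / (S.θ x t + 1) ^ 2 := by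
      rw [le_div_iff₀ (by positivity)]
      exact h2.trans' (le_of_eq (by ring))
    have h5 := h.ihi x t ht
    have h6 := h.ipos x t ht
    calc dg (S.θ x t - 4) * S.θx x t * (P.cv⁻¹ * S.q P x t)
        = dg (S.θ x t - 4) * (P.κ * S.i x t / P.cv * S.θx x t ^ 2) := by
          unfold Fns.q; field_simp
      _ ≤ 50 / (S.θ x t + 1) ^ 2 * (P.κ * P.K / P.cv * S.θx x t ^ 2) := by gcongr
      _ = _ := by field_simp
  have bg : BD T (fun x t => gg (S.θ x t - 4)) :=
    BD.comp (φ := fun s => gg (s - 4)) (cont_gg.comp (by fun_prop)) h.bdθ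
  have ig : Itg T (fun x t => gg (S.θ x t - 4) * S.ux x t ^ 2) := h.lux.sq.bmul bg
  have hg := II_le2 (2 * P.K * P.cv / P.μ) (P.R ^ 2 * P.K ^ 4 / P.μ ^ 2) ig ip h.itg_N3
    fun x t ht => pt_G (μ := P.μ) (R := P.R) hμ hcv P.hK (h.ilo x t ht) (h.ihi x t ht)
      (gg_nonneg (S.θ x t - 4))
  have hu := II_le2 6 4 h.lux.sq (h.itg_d1 one_pos) ig fun x t ht => by
    have h1 := h.θpos x t ht
    have h2 := gg_nonneg (S.θ x t - 4)
    have h3 : 0 ≤ S.ux x t ^ 2 / (S.θ x t + 1) := by positivity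
    have h4 : S.ux x t ^ 2 / (S.θ x t + 1) * (S.θ x t + 1) = S.ux x t ^ 2 := by field_simp
    rcases le_total (S.θ x t) 5 with h5 | h5
    · nlinarith [mul_nonneg h2 (sq_nonneg (S.ux x t))]
    · have := gg_ge (s := S.θ x t - 4) (by linarith)
      nlinarith [sq_nonneg (S.ux x t)]
  have hp : II T (fun x t => gg (S.θ x t - 4) * (P.cv⁻¹ * S.pw P x t))
      ≤ 3 * A + 50 * P.κ * P.K / P.cv * A := by linarith
  have h3 := h.N3_le e hA
  have h1 := e.d1
  have q1 := mul_le_mul_of_nonneg_left hp (show 0 ≤ 2 * P.K * P.cv / P.μ by positivity)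
  have q2 := mul_le_mul_of_nonneg_left h3 (show 0 ≤ P.R ^ 2 * P.K ^ 4 / P.μ ^ 2 by positivity)
  change II T (fun x t => gg (S.θ x t - 4) * S.ux x t ^ 2) ≤ 2 * P.K * P.cv / P.μ *
    II T (fun x t => gg (S.θ x t - 4) * (P.cv⁻¹ * S.pw P x t)) + _ at hg
  linarith

lemma itg_W (h : Reg P S T) : Itg T (fun x t => psi2 (S.u x t) * S.ux x t ^ 2) :=
  h.lux.sq.bmul (BD.comp cont_psi2 h.bdu)

/-- Testing the momentum equation with a truncation of large velocities. -/
lemma W_le (h : Reg P S T) (hI : Ini P S) (e : Ent A S T) (hA : 0 < A) :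
    II T (fun x t => psi2 (S.u x t) * S.ux x t ^ 2)
    ≤ (2 * P.K / P.μ * P.M ^ 4
        + (P.R ^ 2 * P.K ^ 2 / P.μ ^ 2) * (2 * P.K ^ 2 * 384 + 48) * (52 * A ^ 3))
      + ((P.R ^ 2 * P.K ^ 2 / P.μ ^ 2) * (2 * P.K ^ 2 * 96) * A ^ 2) * II T S.jj := by
  have hμ := P.hμ
  have hK := P.Kpos
  obtain ⟨b2, -, l1, i0, eq⟩ := test h.twu ordConnected_univ isClosed_univ (mem_univ _)
    (α := fun s => Pp (s ^ 2 - 1)) (α' := fun s => 2 * s * pp (s ^ 2 - 1)) (α'' := psi2)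
    (fun s _ => Psi_deriv s) (fun s _ => Psi_deriv2 s) cont_psi2.continuousOn
    (cont_Pp.comp (by fun_prop)).measurable
    ((by fun_prop : Measurable fun s : ℝ => 2 * s).mul (cont_pp.comp (by fun_prop)).measurable)
    cont_psi2.measurable (Pp_zero (by norm_num)) (by norm_num)
  have z1 : II T (fun x t => 2 * S.u x t * pp (S.u x t ^ 2 - 1) * (fun _ _ => 0) x t) = 0 := by
    simp [II, unc]
  have nT : 0 ≤ ∫ x, Pp (S.u x T ^ 2 - 1) := integral_nonneg fun x => Pp_nonneg _
  have n0 : ∫ x, Pp (S.u x 0 ^ 2 - 1) ≤ P.M ^ 4 := by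
    obtain ⟨B, hB⟩ := h.su
    have := integral_mono (i0 0 h.m0) ((hB 0 h.m0).1.integrable_sq.const_mul (P.M ^ 2))
      fun x => by
        have h1 := Pp_le (S.u x 0 ^ 2 - 1)
        have h2 := h.u0_sq hI x
        have h3 : max (S.u x 0 ^ 2 - 1) 0 ≤ S.u x 0 ^ 2 := max_le (by linarith) (sq_nonneg _)
        have h4 := le_max_right (S.u x 0 ^ 2 - 1) 0
        show Pp (S.u x 0 ^ 2 - 1) ≤ P.M ^ 2 * S.u x 0 ^ 2
        nlinarith [sq_nonneg (S.u x 0)]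
    rw [integral_const_mul] at this
    nlinarith [hI.u0, sq_nonneg P.M]
  have ip : Itg T (fun x t => psi2 (S.u x t) * S.ux x t * S.st P x t) :=
    (h.lux.bmul b2).mul h.lst
  have c0 : 0 ≤ P.R ^ 2 * P.K ^ 2 / P.μ ^ 2 := by positivity
  have hW := II_le3 (2 * P.K / P.μ) ((P.R ^ 2 * P.K ^ 2 / P.μ ^ 2) * (2 * P.K ^ 2 * 384 + 48))
    ((P.R ^ 2 * P.K ^ 2 / P.μ ^ 2) * (2 * P.K ^ 2 * 96)) h.itg_W ip h.itg_N1 h.itg_N2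
    fun x t ht => by
      have h1 := pt_Psi (a := S.ux x t) (θ := S.θ x t) (R := P.R) hμ P.hK (h.ilo x t ht)
        (h.ihi x t ht) (psi2_nonneg (S.u x t))
      have h2 := psi2_le' (S.u x t)
      have h3 := psi2_θ (S.u x t) (h.θpos x t ht)
      have h4 : 2 * P.K ^ 2 * (psi2 (S.u x t) * S.θ x t ^ 2) + 2 * psi2 (S.u x t)
          ≤ 2 * P.K ^ 2 * (384 * (S.u x t ^ 2 * rr (S.u x t) ^ 2)
            + 96 * (S.u x t ^ 2 * rho (S.θ x t) ^ 2))
            + 2 * (24 * (S.u x t ^ 2 * rr (S.u x t) ^ 2)) := by gcongr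
      have h5 := mul_le_mul_of_nonneg_left h4 c0
      unfold Fns.st
      linarith
  have q1 : II T (fun x t => psi2 (S.u x t) * S.ux x t * S.st P x t) ≤ P.M ^ 4 := by
    linarith
  have q2 := mul_le_mul_of_nonneg_left q1 (show 0 ≤ 2 * P.K / P.μ by positivity)
  have q3 := mul_le_mul_of_nonneg_left (h.N1_le e hA)
    (show 0 ≤ (P.R ^ 2 * P.K ^ 2 / P.μ ^ 2) * (2 * P.K ^ 2 * 384 + 48) by positivity)
  have q4 := mul_le_mul_of_nonneg_left (h.N2_le e hA)
    (show 0 ≤ (P.R ^ 2 * P.K ^ 2 / P.μ ^ 2) * (2 * P.K ^ 2 * 96) by positivity)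
  linarith

end Reg

/-- The heat dissipation localized where the total energy is large. -/
noncomputable def Fns.xx (P : Par) (S : Fns) (x t : ℝ) : ℝ :=
  dp (P.cv * S.θ x t + S.u x t ^ 2 / 2 - (4 * P.cv + 1)) * S.θx x t ^ 2

namespace Reg
variable {P : Par} {S : Fns} {T A : ℝ}

lemma itg_X (h : Reg P S T) : Itg T (S.xx P) := by
  refine h.lθx.sq.bmul ?_
  exact BD.comp (φ := fun s => dp (s - (4 * P.cv + 1))) (cont_dp.comp (by fun_prop)) h.twE.bd

/-- Testing the total energy equation with a truncation of large energies. -/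
lemma X_le (h : Reg P S T) (hI : Ini P S) (e : Ent A S T) (hA : 0 < A) :
    II T (S.xx P) ≤ (2 * P.K / (P.cv * P.κ)) * ((P.cv ^ 2 * P.M ^ 2 + P.M ^ 4 / 2)
      + P.K * ((P.cv * P.μ + P.κ) ^ 2 / (P.cv * P.κ) + 1) *
        (II T (fun x t => psi2 (S.u x t) * S.ux x t ^ 2) + 4 * II T (fun x t => S.ux x t ^ 2))
      + P.K * (P.cv * P.R ^ 2 / P.κ + P.R ^ 2) * (64 * (52 * A ^ 3) + 16 * (A ^ 2 * II T S.jj))) := by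
  have hμ := P.hμ
  have hκ := P.hκ
  have hcv := P.hcv
  have hK := P.Kpos
  obtain ⟨b2, -, l1, i0, eq⟩ := test h.twE ordConnected_univ isClosed_univ (mem_univ _)
    (α := fun s => Pp (s - (4 * P.cv + 1))) (α' := fun s => pp (s - (4 * P.cv + 1)))
    (α'' := fun s => dp (s - (4 * P.cv + 1)))
    (fun s _ => (Pp_deriv (s - (4 * P.cv + 1))).comp_sub_const s _)
    (fun s _ => (pp_deriv (s - (4 * P.cv + 1))).comp_sub_const s _)
    (cont_dp.comp (by fun_prop)).continuousOn
    (cont_Pp.comp (by fun_prop)).measurable (cont_pp.comp (by fun_prop)).measurable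
    (cont_dp.comp (by fun_prop)).measurable (Pp_zero (by linarith)) (pp_zero (by linarith))
  have z1 : II T (fun x t => pp (P.cv * S.θ x t + S.u x t ^ 2 / 2 - (4 * P.cv + 1))
      * (fun _ _ => 0) x t) = 0 := by simp [II, unc]
  have nT : 0 ≤ ∫ x, Pp (P.cv * S.θ x T + S.u x T ^ 2 / 2 - (4 * P.cv + 1)) :=
    integral_nonneg fun x => Pp_nonneg _
  have n0 : ∫ x, Pp (P.cv * S.θ x 0 + S.u x 0 ^ 2 / 2 - (4 * P.cv + 1))
      ≤ P.cv ^ 2 * P.M ^ 2 + P.M ^ 4 / 2 := by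
    obtain ⟨B, hB⟩ := h.su
    obtain ⟨B', hB'⟩ := h.sθ
    have j1 := (hB' 0 h.m0).1.integrable_sq.const_mul (P.cv ^ 2)
    have j2 := (hB 0 h.m0).1.integrable_sq.const_mul (P.M ^ 2 / 2)
    have := integral_mono (i0 0 h.m0) (j1.add j2)
      fun x => by
        have h1 := Pp_le (P.cv * S.θ x 0 + S.u x 0 ^ 2 / 2 - (4 * P.cv + 1))
        have h2 := h.u0_sq hI x
        have h3 : max (P.cv * S.θ x 0 + S.u x 0 ^ 2 / 2 - (4 * P.cv + 1)) 0
            ≤ |P.cv * (S.θ x 0 - 1)| + S.u x 0 ^ 2 / 2 :=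
          max_le (by linarith [le_abs_self (P.cv * (S.θ x 0 - 1))]) (by positivity)
        have h4 := le_max_right (P.cv * S.θ x 0 + S.u x 0 ^ 2 / 2 - (4 * P.cv + 1)) 0
        have h5 := pow_le_pow_left₀ h4 h3 2
        have h6 : (|P.cv * (S.θ x 0 - 1)| + S.u x 0 ^ 2 / 2) ^ 2
            ≤ 2 * (P.cv * (S.θ x 0 - 1)) ^ 2 + 2 * (S.u x 0 ^ 2 / 2) ^ 2 := by
          rw [← sq_abs (P.cv * (S.θ x 0 - 1))]
          nlinarith [sq_nonneg (|P.cv * (S.θ x 0 - 1)| - S.u x 0 ^ 2 / 2)]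
        show Pp (P.cv * S.θ x 0 + S.u x 0 ^ 2 / 2 - (4 * P.cv + 1))
          ≤ P.cv ^ 2 * (S.θ x 0 - 1) ^ 2 + P.M ^ 2 / 2 * S.u x 0 ^ 2
        have h7 : (S.u x 0 ^ 2) * (S.u x 0 ^ 2) ≤ (2 * P.M ^ 2) * S.u x 0 ^ 2 := by gcongr
        nlinarith
    rw [integral_add' j1 j2, integral_const_mul, integral_const_mul] at this
    have q1 := mul_le_mul_of_nonneg_left hI.θ0 (sq_nonneg P.cv)
    have q2 := mul_le_mul_of_nonneg_left hI.u0 (show 0 ≤ P.M ^ 2 / 2 by positivity)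
    linarith
  have ip : Itg T (fun x t => dp (P.cv * S.θ x t + S.u x t ^ 2 / 2 - (4 * P.cv + 1))
      * (P.cv * S.θx x t + S.u x t * S.ux x t) * (S.q P x t + S.u x t * (S.st P x t - P.R))) :=
    (h.twE.lx.bmul b2).mul h.twE.lF
  set c := 2 * P.K / (P.cv * P.κ) with hc
  set c1 := P.K * ((P.cv * P.μ + P.κ) ^ 2 / (P.cv * P.κ) + 1) with hc1
  set c2 := P.K * (P.cv * P.R ^ 2 / P.κ + P.R ^ 2) with hc2
  have p0 : 0 ≤ c := by positivity
  have p1 : 0 ≤ c1 := by positivity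
  have p2 : 0 ≤ c2 := by positivity
  have hX := II_le5 c (c * c1) (c * c1 * 4) (c * c2 * 64) (c * c2 * 16) h.itg_X ip h.itg_W h.lux.sq
    h.itg_N1 h.itg_N2 fun x t ht => by
      have h1 := pt_E (R := P.R) (a := S.θx x t) (w := S.u x t * S.ux x t)
        (z := S.u x t * S.θ x t) hμ hκ hcv P.hK (h.ilo x t ht) (h.ihi x t ht)
        (dp_nonneg (P.cv * S.θ x t + S.u x t ^ 2 / 2 - (4 * P.cv + 1))) (dp_le _)
      rw [← hc, ← hc1, ← hc2] at h1
      have h2 := pt_z (u := S.u x t) hcv (h.θpos x t ht)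
      have h3 : (S.u x t * S.ux x t) ^ 2 ≤ psi2 (S.u x t) * S.ux x t ^ 2 + 4 * S.ux x t ^ 2 := by
        have := mul_le_mul_of_nonneg_right (psi2_ge (S.u x t)) (sq_nonneg (S.ux x t))
        nlinarith
      have h4 := mul_le_mul_of_nonneg_left h2 (mul_nonneg p0 p2)
      have h5 := mul_le_mul_of_nonneg_left h3 (mul_nonneg p0 p1)
      have e1 : S.q P x t + S.u x t * (S.st P x t - P.R) = S.i x t * (P.κ * S.θx x t
          + P.μ * (S.u x t * S.ux x t) - P.R * (S.u x t * S.θ x t)) := by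
        unfold Fns.q Fns.st; ring
      rw [e1]
      unfold Fns.xx
      linarith
  have q1 : II T (fun x t => dp (P.cv * S.θ x t + S.u x t ^ 2 / 2 - (4 * P.cv + 1))
      * (P.cv * S.θx x t + S.u x t * S.ux x t) * (S.q P x t + S.u x t * (S.st P x t - P.R)))
      ≤ P.cv ^ 2 * P.M ^ 2 + P.M ^ 4 / 2 := by
    linarith
  have q2 := mul_le_mul_of_nonneg_left q1 p0
  have q3 := mul_le_mul_of_nonneg_left (h.N1_le e hA) (show 0 ≤ c * c2 * 64 by positivity)
  have q4 := mul_le_mul_of_nonneg_left (h.N2_le e hA) (show 0 ≤ c * c2 * 16 by positivity)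
  linarith

/-- The dissipation `jj` is absorbed: it is at most `θ_x² / θ`, which is small compared with the
localized `θ_x²` for large `θ` and controlled by the entropy dissipation otherwise. -/
lemma J_le (h : Reg P S T) (e : Ent A S T) {δ : ℝ} (hδ : 0 < δ) :
    II T S.jj ≤ δ * II T (S.xx P) + (1 + ((4 * P.cv + 2) / P.cv + 2 / δ)) ^ 2 * A := by
  have hcv := P.hcv
  set N := (4 * P.cv + 2) / P.cv + 2 / δ with hN
  have hN0 : 0 ≤ N := by positivity
  refine (II_le2 δ ((1 + N) ^ 2) h.itg_jj h.itg_X (h.itg_d2 one_pos) fun x t ht => ?_).trans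
    (add_le_add le_rfl (mul_le_mul_of_nonneg_left e.d2 (by positivity)))
  have h1 := h.θpos x t ht
  have h2 := h.jj_le x t ht
  rcases le_total N (S.θ x t) with h3 | h3
  · have h4 : (4 * P.cv + 2) / P.cv ≤ S.θ x t := by
      have : 0 ≤ 2 / δ := by positivity
      linarith
    have h5 : 2 / δ ≤ S.θ x t := by
      have : 0 ≤ (4 * P.cv + 2) / P.cv := by positivity
      linarith
    rw [div_le_iff₀ hcv] at h4
    rw [div_le_iff₀ hδ] at h5
    have h6 := dp_ge (s := P.cv * S.θ x t + S.u x t ^ 2 / 2 - (4 * P.cv + 1))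
      (by nlinarith [sq_nonneg (S.u x t)])
    have h7 : S.jj x t ≤ δ * S.xx P x t := by
      unfold Fns.jj Fns.xx
      rw [div_le_iff₀ h1]
      have h8 := dp_le (S.θ x t - 2)
      have h9 := dp_nonneg (S.θ x t - 2)
      calc dp (S.θ x t - 2) * S.θx x t ^ 2 ≤ 1 * S.θx x t ^ 2 := by gcongr
        _ ≤ (3 / 4 * 2) * S.θx x t ^ 2 := by nlinarith [sq_nonneg (S.θx x t)]
        _ ≤ (dp (P.cv * S.θ x t + S.u x t ^ 2 / 2 - (4 * P.cv + 1)) * (S.θ x t * δ))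
            * S.θx x t ^ 2 := by gcongr
        _ = _ := by ring
    have : 0 ≤ (1 + N) ^ 2 * (S.θx x t ^ 2 / (S.θ x t + 1) ^ 2) := by positivity
    linarith
  · have h4 : S.θx x t ^ 2 ≤ (1 + N) ^ 2 * (S.θx x t ^ 2 / (S.θ x t + 1) ^ 2) := by
      rw [← mul_div_assoc, le_div_iff₀ (by positivity), mul_comm]
      have : (S.θ x t + 1) ^ 2 ≤ (1 + N) ^ 2 := by
        refine pow_le_pow_left₀ (by positivity) ?_ 2
        linarith
      gcongr
    have : 0 ≤ δ * S.xx P x t := by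
      have := dp_nonneg (P.cv * S.θ x t + S.u x t ^ 2 / 2 - (4 * P.cv + 1))
      unfold Fns.xx; positivity
    linarith

/-- Outside the region where the localized heat dissipation `xx` controls `θ_x²` the temperature
is bounded, and the entropy dissipation suffices. -/
lemma TX_le (h : Reg P S T) (e : Ent A S T) : II T (fun x t => S.θx x t ^ 2)
    ≤ 2 * II T (S.xx P) + (1 + (4 * P.cv + 2) / P.cv) ^ 2 * A := by
  have hcv := P.hcv
  set N := (4 * P.cv + 2) / P.cv with hN
  have hN0 : 0 ≤ N := by positivity
  refine (II_le2 2 ((1 + N) ^ 2) h.lθx.sq h.itg_X (h.itg_d2 one_pos) fun x t ht => ?_).trans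
    (add_le_add le_rfl (mul_le_mul_of_nonneg_left e.d2 (by positivity)))
  have h1 := h.θpos x t ht
  rcases le_total N (S.θ x t) with h3 | h3
  · rw [hN, div_le_iff₀ hcv] at h3
    have h6 := dp_ge (s := P.cv * S.θ x t + S.u x t ^ 2 / 2 - (4 * P.cv + 1))
      (by nlinarith [sq_nonneg (S.u x t)])
    have : 0 ≤ (1 + N) ^ 2 * (S.θx x t ^ 2 / (S.θ x t + 1) ^ 2) := by positivity
    unfold Fns.xx
    nlinarith [sq_nonneg (S.θx x t)]
  · have h4 : S.θx x t ^ 2 ≤ (1 + N) ^ 2 * (S.θx x t ^ 2 / (S.θ x t + 1) ^ 2) := by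
      rw [← mul_div_assoc, le_div_iff₀ (by positivity), mul_comm]
      have : (S.θ x t + 1) ^ 2 ≤ (1 + N) ^ 2 := by
        refine pow_le_pow_left₀ (by positivity) ?_ 2
        linarith
      gcongr
    have : 0 ≤ S.xx P x t := by
      have := dp_nonneg (P.cv * S.θ x t + S.u x t ^ 2 / 2 - (4 * P.cv + 1))
      unfold Fns.xx; positivity
    linarith

end Reg

/-- Space-time bounds for `u_x` and `θ_x`: the three truncated balances bound everything by
`C + C ∬ jj`, and `∬ jj` is absorbed. -/
lemma first_order (P : Par) (A : ℝ) (hA : 0 < A) : ∃ C : ℝ, 0 < C ∧ ∀ S T, Reg P S T → Ini P S →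
    Ent A S T → II T (fun x t => S.ux x t ^ 2) ≤ C ∧ II T (fun x t => S.θx x t ^ 2) ≤ C := by
  have hμ := P.hμ
  have hκ := P.hκ
  have hcv := P.hcv
  have hK := P.Kpos
  have hM := P.hM
  have hR := P.hR
  obtain ⟨C1, C1pos, hU⟩ : ∃ C : ℝ, 0 < C ∧ ∀ S T, Reg P S T → Ini P S → Ent A S T →
      II T (fun x t => S.ux x t ^ 2) ≤ C + C * II T S.jj :=
    ⟨_, by positivity, fun S T h _ e => (h.U_le e hA).trans
      (lin (by positivity) (by positivity) h.JJ_nonneg)⟩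
  obtain ⟨C2, C2pos, hW⟩ : ∃ C : ℝ, 0 < C ∧ ∀ S T, Reg P S T → Ini P S → Ent A S T →
      II T (fun x t => psi2 (S.u x t) * S.ux x t ^ 2) ≤ C + C * II T S.jj :=
    ⟨_, by positivity, fun S T h hI e => (h.W_le hI e hA).trans
      (lin (by positivity) (by positivity) h.JJ_nonneg)⟩
  obtain ⟨C3, C3pos, hX⟩ : ∃ C : ℝ, 0 < C ∧ ∀ S T, Reg P S T → Ini P S → Ent A S T →
      II T (S.xx P) ≤ C + C * II T S.jj := by
    set c := 2 * P.K / (P.cv * P.κ) with hc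
    set c1 := P.K * ((P.cv * P.μ + P.κ) ^ 2 / (P.cv * P.κ) + 1) with hc1
    set c2 := P.K * (P.cv * P.R ^ 2 / P.κ + P.R ^ 2) with hc2
    have p0 : 0 < c := by positivity
    have p1 : 0 < c1 := by positivity
    have p2 : 0 < c2 := by positivity
    refine ⟨c * ((P.cv ^ 2 * P.M ^ 2 + P.M ^ 4 / 2) + c1 * (C2 + 4 * C1) + c2 * (64 * (52 * A ^ 3)))
      + c * (c1 * (C2 + 4 * C1) + c2 * (16 * A ^ 2)) + 1, by positivity, fun S T h hI e => ?_⟩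
    refine le_trans ?_ (lin (by positivity) (by positivity) h.JJ_nonneg)
    have h1 := h.X_le hI e hA
    rw [← hc, ← hc1, ← hc2] at h1
    have h2 := hU S T h hI e
    have h3 := hW S T h hI e
    refine h1.trans ?_
    calc _ ≤ c * ((P.cv ^ 2 * P.M ^ 2 + P.M ^ 4 / 2)
        + c1 * ((C2 + C2 * II T S.jj) + 4 * (C1 + C1 * II T S.jj))
        + c2 * (64 * (52 * A ^ 3) + 16 * (A ^ 2 * II T S.jj))) := by gcongr
      _ = _ := by ring
  set D := (1 + ((4 * P.cv + 2) / P.cv + 2 / (1 / (2 * C3)))) ^ 2 * A with hD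
  have D0 : 0 ≤ D := by positivity
  set D' := (1 + (4 * P.cv + 2) / P.cv) ^ 2 * A with hD'
  have D0' : 0 ≤ D' := by positivity
  set X := 2 * C3 + 2 * C3 * D with hXd
  have X0 : 0 ≤ X := by positivity
  set J := X / (2 * C3) + D with hJd
  have J0 : 0 ≤ J := by positivity
  refine ⟨(C1 + C1 * J) + (2 * X + D'), by positivity, fun S T h hI e => ?_⟩
  have h1 := hX S T h hI e
  have h2 : II T S.jj ≤ 1 / (2 * C3) * II T (S.xx P) + D :=
    h.J_le e (δ := 1 / (2 * C3)) (by positivity)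
  have h3 : II T (S.xx P) ≤ X := by
    have h4 := mul_le_mul_of_nonneg_left h2 C3pos.le
    have h5 : C3 * (1 / (2 * C3) * II T (S.xx P) + D) = II T (S.xx P) / 2 + C3 * D := by
      field_simp
    rw [hXd]; linarith
  have h4 : II T S.jj ≤ J := by
    refine h2.trans ?_
    rw [hJd, div_eq_inv_mul X, one_div]
    gcongr
  have h5 := hU S T h hI e
  have h6 := h.TX_le e
  have h7 : C1 * II T S.jj ≤ C1 * J := by gcongr
  have h8 : 0 ≤ C1 * J := by positivity
  constructor <;> linarith

end NSEst

namespace NSEst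

/-! ### The estimate for the derivative of the specific volume -/

/-- Coercivity of the pressure gradient in the balance for the effective velocity; `a, w, i` stand
for `θ_x`, `v_x`, `1 / v`. -/
lemma pt_V {μ R K i a θ w ε : ℝ} (hμ : 0 < μ) (hR : 0 < R) (hK : 1 ≤ K) (hi : K⁻¹ ≤ i)
    (hi' : i ≤ K) (hθ : 0 < θ) (hε : 0 < ε) :
    - (μ * (w * i)) * (- R * (a * i - θ * w * i ^ 2)) ≤
      - (μ * R / (2 * K ^ 3)) * (θ * w ^ 2) + (μ * R / (2 * K ^ 3) * ε) * w ^ 2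
        + (μ * R * K ^ 7 / 2) * a ^ 2 + (μ * R * K ^ 7 / 2) * (a ^ 2 / (θ + ε) ^ 2) := by
  have hK0 : 0 < K := by linarith
  have hi0 : 0 < i := lt_of_lt_of_le (inv_pos.2 hK0) hi
  have h1 : (K ^ 3)⁻¹ ≤ i ^ 3 := by
    rw [← inv_pow]; exact pow_le_pow_left₀ (inv_pos.2 hK0).le hi 3
  have h2 : i ^ 2 ≤ K ^ 2 := by gcongr
  set y := (θ + ε)⁻¹ with hy
  have hy0 : 0 < y := by positivity
  have hyθ : (θ + ε) * y = 1 := mul_inv_cancel₀ (by positivity)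
  have e1 : a ^ 2 / (θ + ε) ^ 2 = a ^ 2 * y ^ 2 := by rw [hy]; field_simp
  have h3 : i ^ 2 * (w * a) ≤ K ^ 2 * (|w| * |a|) := by
    have : w * a ≤ |w| * |a| := by rw [← abs_mul]; exact le_abs_self _
    have p : 0 ≤ |w| * |a| := by positivity
    calc i ^ 2 * (w * a) ≤ i ^ 2 * (|w| * |a|) := by gcongr
      _ ≤ _ := by gcongr
  have h4 : K ^ 2 * (|w| * |a|) ≤ (K ^ 3)⁻¹ / 2 * ((θ + ε) * w ^ 2) + K ^ 7 / 2 * (a ^ 2 * y) := by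
    have : 0 ≤ (K ^ 3)⁻¹ / 2 * (θ + ε) * (|w| - K ^ 5 * y * |a|) ^ 2 := by positivity
    have e : (K ^ 3)⁻¹ / 2 * (θ + ε) * (|w| - K ^ 5 * y * |a|) ^ 2
        = (K ^ 3)⁻¹ / 2 * ((θ + ε) * |w| ^ 2) - ((θ + ε) * y) * (K ^ 2 * (|w| * |a|))
          + ((θ + ε) * y) * (K ^ 7 / 2 * (|a| ^ 2 * y)) := by field_simp; ring
    rw [e, hyθ, sq_abs, sq_abs] at this
    linarith
  have h5 : a ^ 2 * y ≤ a ^ 2 + a ^ 2 * y ^ 2 := by nlinarith [sq_nonneg a, sq_nonneg (y - 1)]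
  have h6 : (K ^ 3)⁻¹ * (θ * w ^ 2) ≤ i ^ 3 * (θ * w ^ 2) := by gcongr
  have h7 : K ^ 7 / 2 * (a ^ 2 * y) ≤ K ^ 7 / 2 * (a ^ 2 + a ^ 2 * y ^ 2) := by gcongr
  have h8 : i ^ 2 * (w * a) - i ^ 3 * (θ * w ^ 2) ≤ - ((K ^ 3)⁻¹ / 2) * (θ * w ^ 2)
      + ((K ^ 3)⁻¹ / 2 * ε) * w ^ 2 + K ^ 7 / 2 * (a ^ 2 + a ^ 2 * y ^ 2) := by linarith
  have h9 := mul_le_mul_of_nonneg_left h8 (mul_pos hμ hR).le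
  rw [e1]
  refine le_trans (le_of_eq (by ring)) (h9.trans (le_of_eq ?_))
  field_simp
  ring

set_option maxHeartbeats 2000000 in
/-- The bound on `v_x`, from the balance for the effective velocity `u - μ v_x / v`. -/
lemma vx_bound (P : Par) : ∃ C : ℝ, 0 < C ∧ ∀ S T, Reg P S T → Ini P S →
    ∫ x, S.vx x T ^ 2 ≤ C ∧ II T (fun x t => S.θ x t * S.vx x t ^ 2) ≤ C ∧
    II T (fun x t => S.ux x t ^ 2) ≤ C ∧ II T (fun x t => S.θx x t ^ 2) ≤ C := by
  have hμ := P.hμ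
  have hcv := P.hcv
  have hK := P.Kpos
  have hM := P.hM
  have hR := P.hR
  obtain ⟨A, hA, hE⟩ := entropy_slices P
  obtain ⟨D, hD, hF⟩ := first_order P A hA
  set c0 := P.μ * P.R / (2 * P.K ^ 3) with hc0
  set c3 := P.μ * P.R * P.K ^ 7 / 2 with hc3
  have c0p : 0 < c0 := by positivity
  have c3p : 0 < c3 := by positivity
  set Y0 := 2 * P.M ^ 2 + 2 * P.μ ^ 2 * P.K ^ 2 * P.M ^ 2 with hY0
  have Y0p : 0 < Y0 := by positivity
  set Q := Y0 / 2 + A / 2 + P.μ * P.K * D + c0 + c3 * D + c3 * A with hQ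
  have Qp : 0 < Q := by positivity
  refine ⟨P.K ^ 2 / P.μ ^ 2 * (2 * A + 4 * Q) + Q / c0 + D, by positivity, fun S T h hI => ?_⟩
  obtain ⟨s1, s2, s3, s4, s5⟩ := hE S T h hI
  obtain ⟨hU, hX⟩ := hF S T h hI ⟨s1, s2, s3, s4⟩
  have V0 : 0 ≤ II T (fun x t => S.vx x t ^ 2) := II_nonneg fun x t _ => sq_nonneg _
  obtain ⟨ε, hε, hεV, -, hd⟩ := s5 (1 / (1 + II T (fun x t => S.vx x t ^ 2))) (by positivity)
  have hεV' : ε * II T (fun x t => S.vx x t ^ 2) ≤ 1 := by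
    rw [le_div_iff₀ (by positivity)] at hεV
    linarith
  obtain ⟨Bu, hBu⟩ := h.su
  obtain ⟨Bv, hBv⟩ := h.svx
  have sl : ∀ t ∈ Icc 0 T, MemLp (fun x => S.vx x t * S.i x t) 2 volume := fun t ht => by
    refine MemLp.of_le_mul (c := P.K) (hBv t ht).1
      ((meas_sl h.mvx t).mul (meas_sl h.mi t)).aestronglyMeasurable
      (Eventually.of_forall fun x => ?_)
    rw [norm_mul, mul_comm, Real.norm_of_nonneg (h.ipos x t ht).le]
    exact mul_le_mul_of_nonneg_right (h.ihi x t ht) (norm_nonneg _)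
  have lqx : LL T (fun x t => S.vx x t * S.i x t) := by
    refine (h.lvx.bmul h.bdi).mono (h.mvx.mul h.mi) 1 fun x t _ => ?_
    rw [one_mul, mul_comm]
  have lr : LL T (fun x t => S.ux x t * S.i x t) := by
    refine (h.lux.bmul h.bdi).mono (h.mux.mul h.mi) 1 fun x t _ => ?_
    rw [one_mul, mul_comm]
  have lrx : LL T (fun x t => S.uxx x t * S.i x t - S.ux x t * S.vx x t * S.i x t ^ 2) := by
    refine ((h.luxx.bmul h.bdi).sub (h.luxvx.bmul h.bdi2)).mono
      ((h.luxx.1.mul h.mi).sub ((h.mux.mul h.mvx).mul (h.mi.pow_const 2))) 1 fun x t _ => ?_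
    rw [one_mul]; refine le_of_eq (congrArg _ ?_); ring
  have dr : ∀ t ∈ Icc 0 T, ∀ x, HasDerivAt (fun y => S.ux y t * S.i y t)
      (S.uxx x t * S.i x t - S.ux x t * S.vx x t * S.i x t ^ 2) x := fun t ht x => by
    refine ((h.dxux t ht x).mul (h.dxi t ht x)).congr_deriv ?_
    ring
  have key := eff_id (b := S.u) (bt := S.ut P) (q := fun x t => Real.log (S.v x t))
    (qx := fun x t => S.vx x t * S.i x t) (r := fun x t => S.ux x t * S.i x t)
    (rx := fun x t => S.uxx x t * S.i x t - S.ux x t * S.vx x t * S.i x t ^ 2) P.μ h.hT'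
    (fun t ht x => (h.dxv t ht x).log (h.vpos x t ht).ne') dr
    (Real.measurable_log.comp h.mv) (h.mux.mul h.mi) h.lu h.lut lqx lrx h.ctu
    (fun x => (h.ctv x).log fun t ht => (h.vpos x t ht).ne') h.dtu
    (fun x t ht => (h.dtv x t ht).log (h.vpos x t (Ioo_subset_Icc_self ht)).ne')
    (fun t ht => (hBu t ht).1) sl
  set G : ℝ → ℝ → ℝ := fun x t =>
    S.ut P x t - P.μ * (S.uxx x t * S.i x t - S.ux x t * S.vx x t * S.i x t ^ 2) with hG
  have lG : LL T G := h.lut.sub (lrx.cmul P.μ)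
  have eG : ∀ x t, G x t = - P.R * (S.θx x t * S.i x t - S.θ x t * S.vx x t * S.i x t ^ 2) :=
    fun x t => by simp only [hG, Fns.ut]; ring
  have iuG := h.lu.mul lG
  have ivG : Itg T (fun x t => - (P.μ * (S.vx x t * S.i x t)) * G x t) := (lqx.cmul P.μ).neg.mul lG
  have split : II T (fun x t => (S.u x t - P.μ * (S.vx x t * S.i x t)) * G x t)
      = II T (fun x t => S.u x t * G x t)
        + II T (fun x t => - (P.μ * (S.vx x t * S.i x t)) * G x t) := by
    rw [← II_add iuG ivG]
    exact II_congr fun x t _ => by ring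
  have hparts := parts (A := S.u) (F := fun x t => S.st P x t - P.μ * (S.ux x t * S.i x t))
    (Fx := G) h.dxu (fun t ht x => (h.dxst t ht x).sub ((dr t ht x).const_mul P.μ)) h.lu h.lux
    (h.lst.sub (lr.cmul P.μ)) lG
  obtain ⟨-, -, -, -, eu⟩ := test h.twu ordConnected_univ isClosed_univ (mem_univ _)
    (α := fun s => s ^ 2 / 2) (α' := fun s => s) (α'' := fun _ => 1)
    (fun s _ => by
      refine ((hasDerivAt_pow 2 s).div_const 2).congr_deriv ?_
      norm_num) (fun s _ => hasDerivAt_id s) continuousOn_const (by fun_prop) measurable_id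
      measurable_const (by norm_num) rfl
  have z1 : II T (fun x t => S.u x t * (fun _ _ => 0) x t) = 0 := by simp [II, unc]
  have hu0 : 0 ≤ ∫ x, S.u x 0 ^ 2 / 2 := integral_nonneg fun x => by positivity
  have huT : ∫ x, S.u x T ^ 2 / 2 ≤ A / 2 := by
    rw [integral_div]
    linarith [s1 T h.mT]
  have hst : - II T (fun x t => S.ux x t * S.st P x t) ≤ A / 2 := by
    have : II T (fun x t => 1 * S.ux x t * S.st P x t) = II T (fun x t => S.ux x t * S.st P x t) :=
      II_congr fun x t _ => by ring
    linarith
  have huG : II T (fun x t => S.u x t * G x t) ≤ A / 2 + P.μ * P.K * D := by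
    rw [hparts]
    have e1 : II T (fun x t => S.ux x t * (S.st P x t - P.μ * (S.ux x t * S.i x t)))
        = II T (fun x t => S.ux x t * S.st P x t)
          - II T (fun x t => S.ux x t * (P.μ * (S.ux x t * S.i x t))) := by
      rw [← II_sub (h.lux.mul h.lst) (h.lux.mul (lr.cmul P.μ))]
      exact II_congr fun x t _ => by ring
    have e2 : II T (fun x t => S.ux x t * (P.μ * (S.ux x t * S.i x t))) ≤ P.μ * P.K * D := by
      refine (II_le1 (P.μ * P.K) (h.lux.mul (lr.cmul P.μ)) h.lux.sq fun x t ht => ?_).trans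
        (mul_le_mul_of_nonneg_left hU (by positivity))
      have := h.ihi x t ht
      calc S.ux x t * (P.μ * (S.ux x t * S.i x t)) = P.μ * S.i x t * S.ux x t ^ 2 := by ring
        _ ≤ _ := by gcongr
    rw [e1]; linarith
  have iθv : Itg T (fun x t => S.θ x t * S.vx x t ^ 2) := h.lvx.sq.bmul h.bdθ
  have hvG := II_le4 (-c0) (c0 * ε) c3 c3 ivG iθv h.lvx.sq h.lθx.sq (h.itg_d2 hε)
    fun x t ht => by
      rw [eG]
      exact pt_V hμ hR P.hK (h.ilo x t ht) (h.ihi x t ht) (h.θpos x t ht) hε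
  have b1 := mul_le_mul_of_nonneg_left hX c3p.le
  have b2 := mul_le_mul_of_nonneg_left hd c3p.le
  have b3 := mul_le_mul_of_nonneg_left hεV' c0p.le
  have hY : ∀ t ∈ Icc 0 T, Integrable (fun x => (S.u x t - P.μ * (S.vx x t * S.i x t)) ^ 2) :=
    fun t ht => ((hBu t ht).1.sub ((sl t ht).const_mul P.μ)).integrable_sq
  have i2 : ∀ x, ∀ t ∈ Icc 0 T, S.i x t ^ 2 ≤ P.K ^ 2 := fun x t ht =>
    pow_le_pow_left₀ (h.ipos x t ht).le (h.ihi x t ht) 2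
  have y0 : ∫ x, (S.u x 0 - P.μ * (S.vx x 0 * S.i x 0)) ^ 2 ≤ Y0 := by
    have j1 := (hBu 0 h.m0).1.integrable_sq.const_mul 2
    have j2 := (hBv 0 h.m0).1.integrable_sq.const_mul (2 * P.μ ^ 2 * P.K ^ 2)
    have := integral_mono (hY 0 h.m0) (j1.add j2) fun x => by
      show (S.u x 0 - P.μ * (S.vx x 0 * S.i x 0)) ^ 2
        ≤ 2 * S.u x 0 ^ 2 + 2 * P.μ ^ 2 * P.K ^ 2 * S.vx x 0 ^ 2
      have h1 := mul_le_mul_of_nonneg_left (i2 x 0 h.m0)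
        (show 0 ≤ 2 * P.μ ^ 2 * S.vx x 0 ^ 2 by positivity)
      nlinarith [sq_nonneg (S.u x 0 + P.μ * (S.vx x 0 * S.i x 0))]
    rw [integral_add' j1 j2, integral_const_mul, integral_const_mul] at this
    have q2 := mul_le_mul_of_nonneg_left hI.vx0 (show 0 ≤ 2 * P.μ ^ 2 * P.K ^ 2 by positivity)
    linarith [hI.u0]
  have yTn : 0 ≤ ∫ x, (S.u x T - P.μ * (S.vx x T * S.i x T)) ^ 2 :=
    integral_nonneg fun x => sq_nonneg _
  have tn : 0 ≤ II T (fun x t => S.θ x t * S.vx x t ^ 2) :=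
    II_nonneg fun x t ht => mul_nonneg (h.θpos x t ht).le (sq_nonneg _)
  have main : (∫ x, (S.u x T - P.μ * (S.vx x T * S.i x T)) ^ 2) / 2
      + c0 * II T (fun x t => S.θ x t * S.vx x t ^ 2) ≤ Q := by
    rw [split] at key
    rw [hQ]
    linarith
  have yT : ∫ x, (S.u x T - P.μ * (S.vx x T * S.i x T)) ^ 2 ≤ 2 * Q := by
    linarith [mul_nonneg c0p.le tn]
  have vT : ∫ x, S.vx x T ^ 2 ≤ P.K ^ 2 / P.μ ^ 2 * (2 * A + 4 * Q) := by
    have j1 := ((hBu T h.mT).1.integrable_sq.const_mul 2).add ((hY T h.mT).const_mul 2)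
    have := integral_mono (hBv T h.mT).1.integrable_sq (j1.const_mul (P.K ^ 2 / P.μ ^ 2))
      fun x => by
        show S.vx x T ^ 2 ≤ P.K ^ 2 / P.μ ^ 2 * (2 * S.u x T ^ 2
          + 2 * (S.u x T - P.μ * (S.vx x T * S.i x T)) ^ 2)
        have h1 := h.ilo x T h.mT
        have h2 : 1 ≤ P.K ^ 2 * S.i x T ^ 2 := by
          have : 1 ≤ P.K * S.i x T := by
            have := mul_le_mul_of_nonneg_left h1 hK.le
            rwa [mul_inv_cancel₀ hK.ne'] at this
          nlinarith
        have h3 : (P.μ * (S.vx x T * S.i x T)) ^ 2 ≤ 2 * S.u x T ^ 2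
            + 2 * (S.u x T - P.μ * (S.vx x T * S.i x T)) ^ 2 := by
          nlinarith [sq_nonneg (2 * S.u x T - P.μ * (S.vx x T * S.i x T))]
        calc S.vx x T ^ 2 ≤ (P.K ^ 2 * S.i x T ^ 2) * S.vx x T ^ 2 := by
              nlinarith [sq_nonneg (S.vx x T)]
          _ = P.K ^ 2 / P.μ ^ 2 * (P.μ * (S.vx x T * S.i x T)) ^ 2 := by field_simp
          _ ≤ _ := by gcongr
    rw [integral_const_mul, integral_add' ((hBu T h.mT).1.integrable_sq.const_mul 2)
      ((hY T h.mT).const_mul 2), integral_const_mul, integral_const_mul] at this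
    refine this.trans ?_
    have q1 := s1 T h.mT
    refine mul_le_mul_of_nonneg_left ?_ (by positivity)
    linarith
  have θv : II T (fun x t => S.θ x t * S.vx x t ^ 2) ≤ Q / c0 := by
    rw [le_div_iff₀ c0p]
    linarith
  have r1 : 0 ≤ P.K ^ 2 / P.μ ^ 2 * (2 * A + 4 * Q) := by positivity
  have r2 : 0 ≤ Q / c0 := by positivity
  refine ⟨?_, ?_, ?_, ?_⟩ <;> linarith

end NSEst

namespace NSEst

/-! ### The estimate for `u_x` and `u_xx` -/

/-- Young's inequality for the right-hand side `-2 u_xx u_t` of the balance for `∫ u_x²`;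
`w, a, b, θ, y, i` stand for `u_xx`, `u_x`, `θ_x`, `θ`, `v_x`, `1 / v`. -/
lemma pt_U {μ R K w a b θ y i : ℝ} (hμ : 0 < μ) (hK : 0 < K)
    (hi : K⁻¹ ≤ i) (hi' : i ≤ K) :
    -(2 * (w * (μ * (w * i - a * y * i ^ 2) - R * (b * i - θ * y * i ^ 2))))
      ≤ -(μ / K) * w ^ 2 + 3 * μ * K ^ 5 * (a * y) ^ 2 + 3 * R ^ 2 * K ^ 3 / μ * b ^ 2
        + 3 * R ^ 2 * K ^ 5 / μ * (θ ^ 2 * y ^ 2) := by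
  have ip : 0 < i := lt_of_lt_of_le (inv_pos.2 hK) hi
  have i2 : i ^ 2 ≤ K ^ 2 := pow_le_pow_left₀ ip.le hi' 2
  have i4 : i ^ 4 ≤ K ^ 4 := pow_le_pow_left₀ ip.le hi' 4
  set s := μ * (a * y * i ^ 2) + R * (b * i) - R * (θ * y * i ^ 2) with hs
  have e : -(2 * (w * (μ * (w * i - a * y * i ^ 2) - R * (b * i - θ * y * i ^ 2))))
      = -(2 * μ * w ^ 2) * i + 2 * w * s := by rw [hs]; ring
  have h1 : -(2 * μ * w ^ 2) * i ≤ -(2 * μ * w ^ 2) * K⁻¹ :=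
    mul_le_mul_of_nonpos_left hi (by nlinarith [sq_nonneg w])
  have h2 : 2 * w * s ≤ μ / K * w ^ 2 + K / μ * s ^ 2 := by
    have : 0 ≤ μ / K * (w - K / μ * s) ^ 2 := by positivity
    have e' : μ / K * (w - K / μ * s) ^ 2 = μ / K * w ^ 2 + K / μ * s ^ 2 - 2 * w * s := by
      field_simp
      ring
    linarith
  have h3 : s ^ 2 ≤ 3 * ((μ * (a * y * i ^ 2)) ^ 2 + (R * (b * i)) ^ 2
      + (R * (θ * y * i ^ 2)) ^ 2) := by
    rw [hs]
    nlinarith [sq_nonneg (μ * (a * y * i ^ 2) - R * (b * i)),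
      sq_nonneg (μ * (a * y * i ^ 2) + R * (θ * y * i ^ 2)),
      sq_nonneg (R * (b * i) + R * (θ * y * i ^ 2))]
  have h4 : 3 * ((μ * (a * y * i ^ 2)) ^ 2 + (R * (b * i)) ^ 2 + (R * (θ * y * i ^ 2)) ^ 2)
      ≤ 3 * (μ ^ 2 * (a * y) ^ 2 * K ^ 4 + R ^ 2 * b ^ 2 * K ^ 2
        + R ^ 2 * (θ ^ 2 * y ^ 2) * K ^ 4) := by
    have k1 := mul_le_mul_of_nonneg_left i4 (show 0 ≤ μ ^ 2 * (a * y) ^ 2 by positivity)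
    have k2 := mul_le_mul_of_nonneg_left i2 (show 0 ≤ R ^ 2 * b ^ 2 by positivity)
    have k3 := mul_le_mul_of_nonneg_left i4 (show 0 ≤ R ^ 2 * (θ ^ 2 * y ^ 2) by positivity)
    nlinarith
  have h5 := mul_le_mul_of_nonneg_left (h3.trans h4) (show 0 ≤ K / μ by positivity)
  have e5 : K / μ * (3 * (μ ^ 2 * (a * y) ^ 2 * K ^ 4 + R ^ 2 * b ^ 2 * K ^ 2
        + R ^ 2 * (θ ^ 2 * y ^ 2) * K ^ 4))
      = 3 * μ * K ^ 5 * (a * y) ^ 2 + 3 * R ^ 2 * K ^ 3 / μ * b ^ 2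
        + 3 * R ^ 2 * K ^ 5 / μ * (θ ^ 2 * y ^ 2) := by
    field_simp
  have e6 : -(2 * μ * w ^ 2) * K⁻¹ = -(μ / K) * w ^ 2 - μ / K * w ^ 2 := by
    rw [div_eq_mul_inv]; ring
  rw [e]
  linarith

set_option maxHeartbeats 1000000 in
/-- The estimate in the abstract setting, with any upper bound `Θ` for the temperature. -/
lemma ux_bound (P : Par) : ∃ C : ℝ, 0 < C ∧ ∀ S T Θ, Reg P S T → Ini P S →
    (∀ x, ∀ t ∈ Icc 0 T, S.θ x t ≤ Θ) →
    (∫ x, S.ux x T ^ 2) ≤ C + C * Θ ∧ II T (fun x t => S.uxx x t ^ 2) ≤ C + C * Θ := by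
  obtain ⟨D, hD, hV⟩ := vx_bound P
  have hK := P.Kpos
  have hμ := P.hμ
  have hR := P.hR
  have hM := P.hM
  set B := D + P.M ^ 2 with hB
  have Bp : 0 < B := by positivity
  set c1 := 3 * P.μ * P.K ^ 5 with hc1
  set c2 := 3 * P.R ^ 2 * P.K ^ 3 / P.μ with hc2
  set c3 := 3 * P.R ^ 2 * P.K ^ 5 / P.μ with hc3
  have c1p : 0 < c1 := by positivity
  have c2p : 0 < c2 := by positivity
  have c3p : 0 < c3 := by positivity
  set e := P.μ / P.K with he
  have ep : 0 < e := by positivity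
  -- `δ` is chosen such that `c1 * B * δ = e / 2`
  set δ := e / (2 * c1 * B) with hδ
  have δp : 0 < δ := by positivity
  set Q := P.M ^ 2 + c1 * (B * (δ⁻¹ * D)) + c2 * D + c3 * D with hQ
  have Qp : 0 < Q := by positivity
  refine ⟨Q + 2 / e * Q, by positivity, fun S T Θ h hI hΘ => ?_⟩
  have hΘ0 : 0 ≤ Θ := (h.θpos 0 0 h.m0).le.trans (hΘ 0 0 h.m0)
  obtain ⟨-, w2, w3, w4⟩ := hV S T h hI
  obtain ⟨Bv, hBv⟩ := h.svx
  obtain ⟨Bx, hBx⟩ := h.sux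
  have sb : SB T S.vx B := fun t ht => by
    refine ⟨(hBv t ht).1, ?_⟩
    rcases ht.1.eq_or_lt with h0 | h0
    · subst h0; linarith [hI.vx0]
    · have := (hV S t (h.restrict h0 ht.2) hI).1
      nlinarith [sq_nonneg P.M]
  have p := prod_LL h.dxux h.lux h.luxx h.mvx ((ae_restrict_mem measurableSet_Icc).mono sb) δp
  have key := ux_id h.hT' h.dxu h.dxux h.cuxx h.lu h.lux h.luxx h.lut h.ctu h.dtu
    fun t ht => (hBx t ht).1
  have lθv : LL T (fun x t => S.θ x t * S.vx x t) := h.lvx.bmul h.bdθ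
  have iθ2 : Itg T (fun x t => S.θ x t ^ 2 * S.vx x t ^ 2) := by
    simpa only [mul_pow] using lθv.sq
  have iθ1 : Itg T (fun x t => S.θ x t * S.vx x t ^ 2) := h.lvx.sq.bmul h.bdθ
  have b1 := II_le4 (-e) c1 c2 c3 (LL.mul h.luxx h.lut |>.cmul 2).neg h.luxx.sq p.1.sq h.lθx.sq iθ2
    fun x t ht => pt_U hμ hK (h.ilo x t ht) (h.ihi x t ht)
  rw [II_neg, II_cmul] at b1
  have b2 := II_le1 Θ iθ2 iθ1 fun x t ht => by
    have := mul_le_mul_of_nonneg_right (hΘ x t ht)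
      (mul_nonneg (h.θpos x t ht).le (sq_nonneg (S.vx x t)))
    nlinarith
  have b3 : c3 * II T (fun x t => S.θ x t ^ 2 * S.vx x t ^ 2) ≤ c3 * (Θ * D) :=
    mul_le_mul_of_nonneg_left (b2.trans (mul_le_mul_of_nonneg_left w2 hΘ0)) c3p.le
  have b4 := mul_le_mul_of_nonneg_left w4 c2p.le
  have b5 := mul_le_mul_of_nonneg_left p.2 c1p.le
  have b6 : c1 * (B * (δ⁻¹ * II T (fun x t => S.ux x t ^ 2))) ≤ c1 * (B * (δ⁻¹ * D)) := by
    gcongr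
  have b7 : c1 * (B * (δ * II T (fun x t => S.uxx x t ^ 2)))
      = e / 2 * II T (fun x t => S.uxx x t ^ 2) := by
    rw [hδ]; field_simp
  have n1 : 0 ≤ II T (fun x t => S.uxx x t ^ 2) := II_nonneg fun x t _ => sq_nonneg _
  have n2 : 0 ≤ ∫ x, S.ux x T ^ 2 := integral_nonneg fun x => sq_nonneg _
  have main : (∫ x, S.ux x T ^ 2) + e / 2 * II T (fun x t => S.uxx x t ^ 2) ≤ Q + Q * Θ := by
    have q1 : c3 * (Θ * D) ≤ Q * Θ := by
      have : c3 * D ≤ Q := by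
        have : 0 ≤ P.M ^ 2 + c1 * (B * (δ⁻¹ * D)) + c2 * D := by positivity
        linarith
      nlinarith
    have q2 : 0 ≤ c3 * D := by positivity
    linarith [hI.ux0]
  have f1 : 0 ≤ 2 / e * Q * (1 + Θ) := by positivity
  have f2 : 0 ≤ Q * (1 + Θ) := by positivity
  constructor
  · linarith [mul_nonneg ep.le n1]
  · have : II T (fun x t => S.uxx x t ^ 2) ≤ 2 / e * (Q + Q * Θ) := by
      rw [div_mul_eq_mul_div, le_div_iff₀ ep]
      linarith
    linarith

end NSEst

namespace NSEst

/-! ### From the classical solution to the abstract setting -/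

/-- `f` with time frozen at `0` for negative times, where a solution carries no information. -/
def cl (f : ℝ → ℝ → ℝ) (x t : ℝ) : ℝ := f x (max t 0)

lemma cl_of_nonneg (f : ℝ → ℝ → ℝ) (x : ℝ) {t : ℝ} (h : 0 ≤ t) : cl f x t = f x t := by
  rw [cl, max_eq_left h]

lemma meas_cl {f : ℝ → ℝ → ℝ} (hx : ∀ t, 0 ≤ t → Continuous fun x => f x t)
    (ht : ∀ x, ∀ t, 0 ≤ t → DifferentiableAt ℝ (fun s => f x s) t) : Measurable (unc (cl f)) := by
  refine measurable_uncurry_of_continuous_of_measurable (u := cl f)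
    (fun t => hx _ (le_max_right _ _)) fun x => Continuous.measurable ?_
  refine continuous_iff_continuousAt.2 fun t => ?_
  exact ContinuousAt.comp (f := fun t : ℝ => max t 0) (g := fun s => f x s)
    (ht x _ (le_max_right t 0)).continuousAt (by fun_prop)

lemma meas_deriv {g gx : ℝ → ℝ → ℝ} (hg : Measurable (unc g))
    (hd : ∀ t x, HasDerivAt (fun y => g y t) (gx x t) x) : Measurable (unc gx) := by
  refine measurable_of_tendsto_metrizable
    (f := fun (n : ℕ) (z : ℝ × ℝ) =>
      ((1 : ℝ) / (n + 1))⁻¹ • (unc g (z.1 + 1 / (n + 1), z.2) - unc g z)) (fun n => ?_) ?_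
  · have hs : Measurable fun z : ℝ × ℝ => (z.1 + 1 / ((n : ℝ) + 1), z.2) := by fun_prop
    exact ((hg.comp hs).sub hg).const_smul ((1 : ℝ) / (n + 1))⁻¹
  · refine tendsto_pi_nhds.2 fun z => ?_
    have h1 := hasDerivAt_iff_tendsto_slope_zero.1 (hd z.2 z.1)
    refine h1.comp (tendsto_nhdsWithin_iff.2 ⟨tendsto_one_div_add_atTop_nhds_zero_nat, ?_⟩)
    exact Eventually.of_forall fun n => by
      simp only [mem_compl_iff, mem_singleton_iff]; positivity

lemma lint_sq (f : ℝ → ℝ) : ∫⁻ x, ENNReal.ofReal (f x ^ 2) = L2 f ^ 2 := by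
  have := eLpNorm_nnreal_pow_eq_lintegral (f := f) (μ := volume) (p := 2) (by norm_num)
  simp only [NNReal.coe_ofNat, ENNReal.coe_ofNat, ENNReal.rpow_ofNat] at this
  rw [L2, this]
  refine lintegral_congr fun x => ?_
  rw [← enorm_pow, Real.enorm_eq_ofReal (sq_nonneg _)]

lemma l2_bound {f : ℝ → ℝ} {B : ℝ} (hc : Continuous f) (hB : 0 ≤ B)
    (h : L2 f ≤ ENNReal.ofReal B) : MemLp f 2 volume ∧ ∫ x, f x ^ 2 ≤ B ^ 2 := by
  have hm : MemLp f 2 volume := ⟨hc.aestronglyMeasurable, h.trans_lt ENNReal.ofReal_lt_top⟩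
  refine ⟨hm, ?_⟩
  rw [← ENNReal.ofReal_le_ofReal_iff (sq_nonneg _),
    ofReal_integral_eq_lintegral_ofReal hm.integrable_sq (ae_of_all _ fun x => sq_nonneg _),
    lint_sq, ENNReal.ofReal_pow hB]
  exact pow_le_pow_left' h 2

lemma lint_slab (T : ℝ) {f : ℝ → ℝ → ℝ} (hf : Measurable (unc f)) :
    ∫⁻ z, ENNReal.ofReal (unc f z ^ 2) ∂(nu T)
      = ∫⁻ t in Icc 0 T, ∫⁻ x, ENNReal.ofReal (f x t ^ 2) :=
  lintegral_prod_symm' _ (hf.pow_const 2).ennreal_ofReal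

lemma LL_of_lint {T : ℝ} {f : ℝ → ℝ → ℝ} (hf : Measurable (unc f))
    (h : ∫⁻ t in Icc 0 T, ∫⁻ x, ENNReal.ofReal (f x t ^ 2) < ⊤) : LL T f := by
  refine ⟨hf, (memLp_two_iff_integrable_sq hf.aestronglyMeasurable).2
    ⟨(hf.pow_const 2).aestronglyMeasurable, ?_⟩⟩
  rw [hasFiniteIntegral_iff_ofReal (ae_of_all _ fun z => sq_nonneg _), lint_slab T hf]
  exact h

/-- The clamped solution and its spatial derivatives. -/
noncomputable def fns (v u θ : ℝ → ℝ → ℝ) : Fns where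
  v := cl v
  u := cl u
  θ := cl θ
  vx := cl (pdx v)
  ux := cl (pdx u)
  θx := cl (pdx θ)
  uxx := cl (pdx (fun y s => pdx u y s))
  θxx := cl (pdx (fun y s => pdx θ y s))

section
variable {f : ℝ → ℝ → ℝ} {t : ℝ}

lemma d1 (h : ContDiff ℝ 2 (fun x => f x t)) (x : ℝ) : HasDerivAt (fun y => f y t) (pdx f x t) x :=
  ((h.differentiable (by norm_num)) x).hasDerivAt

lemma cd1 (h : ContDiff ℝ 2 (fun x => f x t)) : ContDiff ℝ 1 (fun x => pdx f x t) := by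
  have : ContDiff ℝ (1 + 1) (fun x => f x t) := by norm_num; exact h
  exact (contDiff_succ_iff_deriv.1 this).2.2

lemma d2 (h : ContDiff ℝ 2 (fun x => f x t)) (x : ℝ) : HasDerivAt (fun y => pdx f y t) (pdx (fun y s => pdx f y s) x t) x :=
  (((cd1 h).differentiable (by norm_num)) x).hasDerivAt

lemma c2 (h : ContDiff ℝ 2 (fun x => f x t)) : Continuous (fun x => pdx (fun y s => pdx f y s) x t) :=
  (cd1 h).continuous_deriv le_rfl

end

lemma cl_time {f : ℝ → ℝ → ℝ} {x t d : ℝ} (ht : 0 < t)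
    (h : DifferentiableAt ℝ (fun s => f x s) t) (e : pdt f x t = d) :
    HasDerivAt (cl f x) d t := by
  have h1 : HasDerivAt (fun s => f x s) d t := e ▸ h.hasDerivAt
  refine h1.congr_of_eventuallyEq ?_
  filter_upwards [lt_mem_nhds ht] with s hs using cl_of_nonneg f x (le_of_lt hs)

lemma cl_cont {f : ℝ → ℝ → ℝ} {x T : ℝ}
    (h : ∀ t, 0 ≤ t → DifferentiableAt ℝ (fun s => f x s) t) : ContinuousOn (cl f x) (Icc 0 T) := by
  have : ContinuousOn (fun s => f x s) (Icc 0 T) := fun t ht =>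
    (h t ht.1).continuousAt.continuousWithinAt
  exact this.congr fun t ht => cl_of_nonneg f x ht.1

lemma SB_cl {T B : ℝ} {f : ℝ → ℝ → ℝ} (h : ∀ t ∈ Icc 0 T, MemLp (fun x => f x t) 2 volume ∧
    ∫ x, f x t ^ 2 ≤ B) : SB T (cl f) B := fun t ht => by
  simp only [cl_of_nonneg _ _ ht.1]
  exact h t ht

lemma dsub (t : ℝ) (f : ℝ → ℝ → ℝ) :
    deriv (fun x => f x t - 1) = fun x => pdx f x t := by
  funext x; rw [deriv_sub_const]; rfl

lemma lint_cl {T : ℝ} (f : ℝ → ℝ → ℝ) :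
    ∫⁻ t in Icc 0 T, ∫⁻ x, ENNReal.ofReal (cl f x t ^ 2)
      = ∫⁻ t in Icc 0 T, ∫⁻ x, ENNReal.ofReal (f x t ^ 2) :=
  setLIntegral_congr_fun measurableSet_Icc fun t ht => by simp only [cl_of_nonneg _ _ ht.1]

section
variable {μ κ R cv : ℝ} {v u θ : ℝ → ℝ → ℝ}

lemma h1_slices (h : IsClassicalSolution μ κ R cv v u θ) {t B : ℝ} (ht : 0 ≤ t) (hB : 0 ≤ B)
    (hb : H1 (fun x => v x t - 1) + H1 (fun x => u x t) + H1 (fun x => θ x t - 1)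
      ≤ ENNReal.ofReal B) :
    (MemLp (fun x => v x t - 1) 2 volume ∧ ∫ x, (v x t - 1) ^ 2 ≤ B ^ 2) ∧
    (MemLp (fun x => u x t) 2 volume ∧ ∫ x, u x t ^ 2 ≤ B ^ 2) ∧
    (MemLp (fun x => θ x t - 1) 2 volume ∧ ∫ x, (θ x t - 1) ^ 2 ≤ B ^ 2) ∧
    (MemLp (fun x => pdx v x t) 2 volume ∧ ∫ x, pdx v x t ^ 2 ≤ B ^ 2) ∧
    (MemLp (fun x => pdx u x t) 2 volume ∧ ∫ x, pdx u x t ^ 2 ≤ B ^ 2) ∧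
    (MemLp (fun x => pdx θ x t) 2 volume ∧ ∫ x, pdx θ x t ^ 2 ≤ B ^ 2) := by
  have a1 : H1 (fun x => v x t - 1) ≤ ENNReal.ofReal B :=
    (le_self_add.trans le_self_add).trans hb
  have a2 : H1 (fun x => u x t) ≤ ENNReal.ofReal B := (le_add_self.trans le_self_add).trans hb
  have a3 : H1 (fun x => θ x t - 1) ≤ ENNReal.ofReal B := le_add_self.trans hb
  rw [H1] at a1 a2 a3
  have sv := h.smooth_x_v t ht
  have su := h.smooth_x_u t ht
  have sθ := h.smooth_x_θ t ht
  have b1 := le_add_self.trans a1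
  have b2 := le_add_self.trans a2
  have b3 := le_add_self.trans a3
  rw [dsub] at b1 b3
  exact ⟨l2_bound (sv.continuous.sub continuous_const) hB (le_self_add.trans a1),
    l2_bound su.continuous hB (le_self_add.trans a2),
    l2_bound (sθ.continuous.sub continuous_const) hB (le_self_add.trans a3),
    l2_bound (cd1 sv).continuous hB b1, l2_bound (cd1 su).continuous hB b2,
    l2_bound (cd1 sθ).continuous hB b3⟩

lemma mom (h : IsClassicalSolution μ κ R cv v u θ) {x t : ℝ} (ht : 0 ≤ t) :
    pdt u x t = μ * (pdx (fun y s => pdx u y s) x t * (v x t)⁻¹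
        - pdx u x t * pdx v x t * (v x t)⁻¹ ^ 2)
      - R * (pdx θ x t * (v x t)⁻¹ - θ x t * pdx v x t * (v x t)⁻¹ ^ 2) := by
  have e := h.eq_momentum x t ht
  have vp := (h.v_pos x t ht).ne'
  have dv := d1 (h.smooth_x_v t ht) x
  have e1 : pdx (fun y s => R * θ y s / v y s) x t = _ :=
    (((d1 (h.smooth_x_θ t ht) x).const_mul R).fun_div dv vp).deriv
  have e2 : pdx (fun y s => pdx u y s / v y s) x t = _ :=
    ((d2 (h.smooth_x_u t ht) x).fun_div dv vp).deriv
  rw [e1, e2] at e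
  rw [eq_sub_of_add_eq e]
  field_simp

lemma ener (h : IsClassicalSolution μ κ R cv v u θ) {x t : ℝ} (hcv : 0 < cv) (ht : 0 ≤ t) :
    pdt θ x t = (κ * (pdx (fun y s => pdx θ y s) x t * (v x t)⁻¹
        - pdx θ x t * pdx v x t * (v x t)⁻¹ ^ 2)
      + (μ * (pdx u x t * (v x t)⁻¹) - R * (θ x t * (v x t)⁻¹ - 1) - R) * pdx u x t) / cv := by
  have e := h.eq_energy x t ht
  have vp := (h.v_pos x t ht).ne'
  have dv := d1 (h.smooth_x_v t ht) x
  have e2 : pdx (fun y s => pdx θ y s / v y s) x t = _ :=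
    ((d2 (h.smooth_x_θ t ht) x).fun_div dv vp).deriv
  rw [e2] at e
  rw [eq_div_iff hcv.ne', mul_comm, eq_sub_of_add_eq e]
  field_simp
  ring

lemma mom_slab (h : IsClassicalSolution μ κ R cv v u θ) {T : ℝ} (hT : 0 < T) :
    ∫⁻ t in Icc 0 T, ∫⁻ x, ENNReal.ofReal (pdx (fun y s => pdx u y s) x t ^ 2) < ⊤ := by
  refine lt_of_le_of_lt (lintegral_mono fun t => ?_) (h.reg_H2 T hT)
  rw [lint_sq]
  refine le_trans ?_ le_self_add
  exact pow_le_pow_left' (le_add_self (a := L2 (deriv (deriv fun x => u x t)))) 2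

lemma ener_slab (h : IsClassicalSolution μ κ R cv v u θ) {T : ℝ} (hT : 0 < T) :
    ∫⁻ t in Icc 0 T, ∫⁻ x, ENNReal.ofReal (pdx (fun y s => pdx θ y s) x t ^ 2) < ⊤ := by
  refine lt_of_le_of_lt (lintegral_mono fun t => ?_) (h.reg_H2 T hT)
  rw [lint_sq]
  refine le_trans ?_ le_add_self
  refine pow_le_pow_left' ?_ 2
  rw [H2, dsub]
  exact le_add_self (a := L2 (deriv (fun x => pdx θ x t)))

lemma meas_uxx (h : IsClassicalSolution μ κ R cv v u θ) : Measurable (unc (cl (pdx (fun y s => pdx u y s)))) :=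
  meas_deriv (g := cl (pdx u)) (meas_deriv (meas_cl (fun t ht => (h.smooth_x_u t ht).continuous)
    h.smooth_t_u) fun t x => d1 (h.smooth_x_u _ (le_max_right t 0)) x)
    fun t x => d2 (h.smooth_x_u _ (le_max_right t 0)) x

lemma meas_θxx (h : IsClassicalSolution μ κ R cv v u θ) : Measurable (unc (cl (pdx (fun y s => pdx θ y s)))) :=
  meas_deriv (g := cl (pdx θ)) (meas_deriv (meas_cl (fun t ht => (h.smooth_x_θ t ht).continuous)
    h.smooth_t_θ) fun t x => d1 (h.smooth_x_θ _ (le_max_right t 0)) x)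
    fun t x => d2 (h.smooth_x_θ _ (le_max_right t 0)) x

end

lemma reg_of_sol (P : Par) {v u θ : ℝ → ℝ → ℝ} (h : IsClassicalSolution P.μ P.κ P.R P.cv v u θ)
    (hV : VolBounded P.K v) {T : ℝ} (hT : 0 < T) : Reg P (fns v u θ) T := by
  have hmx : ∀ t : ℝ, 0 ≤ max t 0 := fun t => le_max_right _ _
  have mv := meas_cl (fun t ht => (h.smooth_x_v t ht).continuous) h.smooth_t_v
  have mu := meas_cl (fun t ht => (h.smooth_x_u t ht).continuous) h.smooth_t_u
  have mθ := meas_cl (fun t ht => (h.smooth_x_θ t ht).continuous) h.smooth_t_θ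
  obtain ⟨B, hB⟩ := h.reg_H1 T hT.le
  have sl := fun t (ht : t ∈ Icc 0 T) => h1_slices h ht.1 (abs_nonneg B)
    ((hB t ht).trans (ENNReal.ofReal_le_ofReal (le_abs_self B)))
  exact
  { hT := hT
    mv := mv
    mu := mu
    mθ := mθ
    mvx := meas_deriv mv fun t x => d1 (h.smooth_x_v _ (hmx t)) x
    mux := meas_deriv mu fun t x => d1 (h.smooth_x_u _ (hmx t)) x
    mθx := meas_deriv mθ fun t x => d1 (h.smooth_x_θ _ (hmx t)) x
    vlo := fun x t _ => (hV x _ (hmx t)).1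
    vhi := fun x t _ => (hV x _ (hmx t)).2
    θpos := fun x t _ => h.θ_pos x _ (hmx t)
    dxv := fun t _ x => d1 (h.smooth_x_v _ (hmx t)) x
    dxu := fun t _ x => d1 (h.smooth_x_u _ (hmx t)) x
    dxθ := fun t _ x => d1 (h.smooth_x_θ _ (hmx t)) x
    dxux := fun t _ x => d2 (h.smooth_x_u _ (hmx t)) x
    dxθx := fun t _ x => d2 (h.smooth_x_θ _ (hmx t)) x
    cuxx := fun t _ => c2 (h.smooth_x_u _ (hmx t))
    ctv := fun x => cl_cont (h.smooth_t_v x)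
    ctu := fun x => cl_cont (h.smooth_t_u x)
    ctθ := fun x => cl_cont (h.smooth_t_θ x)
    dtv := fun x t ht => cl_time ht.1 (h.smooth_t_v x t ht.1.le) (by
      simp only [fns, cl_of_nonneg _ _ ht.1.le]; exact h.eq_mass x t ht.1.le)
    dtu := fun x t ht => cl_time ht.1 (h.smooth_t_u x t ht.1.le) (by
      simp only [fns, Fns.ut, Fns.i, cl_of_nonneg _ _ ht.1.le]; exact mom h ht.1.le)
    dtθ := fun x t ht => cl_time ht.1 (h.smooth_t_θ x t ht.1.le) (by
      simp only [fns, Fns.θt, Fns.qx, Fns.pw, Fns.st, Fns.i, cl_of_nonneg _ _ ht.1.le]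
      exact ener h P.hcv ht.1.le)
    sv := ⟨_, SB_cl (f := fun x t => v x t - 1) fun t ht => (sl t ht).1⟩
    su := ⟨_, SB_cl fun t ht => (sl t ht).2.1⟩
    sθ := ⟨_, SB_cl (f := fun x t => θ x t - 1) fun t ht => (sl t ht).2.2.1⟩
    svx := ⟨_, SB_cl fun t ht => (sl t ht).2.2.2.1⟩
    sux := ⟨_, SB_cl fun t ht => (sl t ht).2.2.2.2.1⟩
    sθx := ⟨_, SB_cl fun t ht => (sl t ht).2.2.2.2.2⟩
    luxx := LL_of_lint (meas_uxx h) ((lint_cl _).trans_lt (mom_slab h hT))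
    lθxx := LL_of_lint (meas_θxx h) ((lint_cl _).trans_lt (ener_slab h hT))
    fu := fun t _ => (h.farfield_u _ (hmx t)).mono_left atBot_le_cocompact
    fθ := fun t _ => (h.farfield_θ _ (hmx t)).mono_left atBot_le_cocompact }

lemma ini_of_sol (P : Par) {v u θ : ℝ → ℝ → ℝ} (h : IsClassicalSolution P.μ P.κ P.R P.cv v u θ)
    (hI : InitBounded P.M P.m v u θ) : Ini P (fns v u θ) := by
  obtain ⟨a1, a2, a3, a4, a5, a6⟩ := h1_slices h le_rfl P.hM.le hI.1
  constructor <;> simp only [fns, cl_of_nonneg _ _ (le_refl (0 : ℝ))]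
  exacts [a1.2, a2.2, a3.2, a4.2, a5.2, a6.2, hI.2.2]

end NSEst

/-- estimate for `∫ u_x²` and `∫∫ u_xx²` in terms of `sup θ`. -/
theorem ux_uxx_estimate
    (μ κ R cv M m K : ℝ) (hμ : 0 < μ) (hκ : 0 < κ) (hR : 0 < R) (hcv : 0 < cv)
    (hM : 0 < M) (hm : 0 < m) (hK : 1 ≤ K) :
    ∃ C : ℝ, 0 < C ∧
      ∀ v u θ : ℝ → ℝ → ℝ,
        IsClassicalSolution μ κ R cv v u θ →
        InitBounded M m v u θ →
        VolBounded K v →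
        ∀ T : ℝ, 0 < T →
          (⨆ t ∈ Icc (0 : ℝ) T, ∫⁻ x : ℝ, ENNReal.ofReal (pdx u x t ^ 2))
            + (∫⁻ t in Icc (0 : ℝ) T, ∫⁻ x : ℝ,
                ENNReal.ofReal (pdx (fun y s => pdx u y s) x t ^ 2))
          ≤ ENNReal.ofReal C
            + ENNReal.ofReal C
              * ⨆ x : ℝ, ⨆ t ∈ Icc (0 : ℝ) T, ENNReal.ofReal (θ x t) := by
  let P : NSEst.Par := ⟨μ, κ, R, cv, K, M, m, hμ, hκ, hR, hcv, hK, hM, hm⟩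
  obtain ⟨C, hC, hb⟩ := NSEst.ux_bound P
  refine ⟨2 * C + M ^ 2, by positivity, fun v u θ h hI hV T hT => ?_⟩
  set E : ENNReal := ⨆ x : ℝ, ⨆ t ∈ Icc (0 : ℝ) T, ENNReal.ofReal (θ x t) with hE
  have hC' : 0 < 2 * C + M ^ 2 := by positivity
  by_cases hEt : E = ⊤
  · rw [hEt, ENNReal.mul_top (ENNReal.ofReal_pos.2 hC').ne']
    simp
  have hΘ0 : 0 ≤ E.toReal := ENNReal.toReal_nonneg
  have hΘ : ∀ x, ∀ t ∈ Icc (0 : ℝ) T, θ x t ≤ E.toReal := fun x t ht => by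
    rw [← ENNReal.ofReal_le_iff_le_toReal hEt, hE]
    exact le_iSup_of_le x (le_iSup₂_of_le t ht le_rfl)
  have hi := NSEst.ini_of_sol P h hI
  have hr := NSEst.reg_of_sol P h hV hT
  have hθ : ∀ x, ∀ t ∈ Icc (0 : ℝ) T, (NSEst.fns v u θ).θ x t ≤ E.toReal := fun x t ht =>
    (NSEst.cl_of_nonneg θ x ht.1).trans_le (hΘ x t ht)
  have e1 : (⨆ t ∈ Icc (0 : ℝ) T, ∫⁻ x : ℝ, ENNReal.ofReal (pdx u x t ^ 2))
      ≤ ENNReal.ofReal (C + M ^ 2 + C * E.toReal) := by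
    refine iSup₂_le fun t ht => ?_
    obtain ⟨B, hB⟩ := hr.sux
    have hm := (hB t ht).1
    have eq : ∫⁻ x : ℝ, ENNReal.ofReal (pdx u x t ^ 2)
        = ENNReal.ofReal (∫ x, (NSEst.fns v u θ).ux x t ^ 2) := by
      rw [ofReal_integral_eq_lintegral_ofReal hm.integrable_sq (ae_of_all _ fun x => sq_nonneg _)]
      refine lintegral_congr fun x => ?_
      rw [show (NSEst.fns v u θ).ux x t = pdx u x t from NSEst.cl_of_nonneg (pdx u) x ht.1]
    rw [eq]
    refine ENNReal.ofReal_le_ofReal ?_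
    have hCE : 0 ≤ C * E.toReal := by positivity
    rcases ht.1.eq_or_lt with h0 | h0
    · subst h0
      have : ∫ x, (NSEst.fns v u θ).ux x 0 ^ 2 ≤ M ^ 2 := hi.ux0
      linarith
    · have := (hb _ t E.toReal (hr.restrict h0 ht.2) hi
        fun x s hs => hθ x s ⟨hs.1, hs.2.trans ht.2⟩).1
      linarith [sq_nonneg M]
  have e2 : (∫⁻ t in Icc (0 : ℝ) T, ∫⁻ x : ℝ,
      ENNReal.ofReal (pdx (fun y s => pdx u y s) x t ^ 2))
      ≤ ENNReal.ofReal (C + C * E.toReal) := by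
    have h2 := (hb _ T E.toReal hr hi hθ).2
    refine le_trans (le_of_eq ?_) (ENNReal.ofReal_le_ofReal h2)
    rw [NSEst.II, ofReal_integral_eq_lintegral_ofReal hr.luxx.sq.2
      (ae_of_all _ fun z => sq_nonneg _), ← NSEst.lint_cl]
    exact (NSEst.lint_slab T (NSEst.meas_uxx h)).symm
  refine (add_le_add e1 e2).trans ?_
  rw [← ENNReal.ofReal_toReal hEt, ← ENNReal.ofReal_mul hC'.le,
    ← ENNReal.ofReal_add (by positivity) (by positivity),
    ← ENNReal.ofReal_add (by positivity) (by positivity),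
    ENNReal.toReal_ofReal hΘ0]
  refine ENNReal.ofReal_le_ofReal ?_
  nlinarith [mul_nonneg (sq_nonneg M) hΘ0]
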